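/- For every N ≥ 1 and every n ∈ ℕ, the following are equivalent: (1) there exists an ℝ-linear map f : ℝⁿ → M(2N,ℂ) such that every f(v) is Hermitian, satisfies f(v)ᵀ J_N + J_N f(v) = 0, and f(v)² = ‖v‖² I_{2N} for all v ∈ ℝⁿ; (2) there exists an ℝ-linear map f : ℝⁿ → M(2N,ℂ) with every f(v) Hermitian satisfying f(v)ᵀ J_N + J_N f(v) = 0 and f(v) invertible for every nonzero v; (3) n ≤ ρ(N/2) + 3. (Entry 𝔤 = 𝔰𝔭(N,ℂ) of the Hurwitz–Radon value theorem, the 𝔭-part being the Hermitian elements of 𝔰𝔭(N,ℂ).) -/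

import Mathlib

open Matrix

/-- Extended Hurwitz–Radon number: writing the 2-adic valuation of `t` as `4a + b`
with `a ∈ ℤ` and `b ∈ {0,1,2,3}`, `ρ(t) := 8a + 2^b`. -/
noncomputable def hrRho (t : ℚ) : ℤ :=
  8 * (padicValRat 2 t / 4) + 2 ^ (padicValRat 2 t % 4).toNat

/-- The `2N × 2N` complex block matrix `J_N = [[0, −I_N],[I_N, 0]]`. -/
def Jcplx (N : ℕ) : Matrix (Fin N ⊕ Fin N) (Fin N ⊕ Fin N) ℂ :=
  Matrix.fromBlocks 0 (-1) 1 0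

/-!
For `n ≤ ρ(N / 2) + 3` the map is built from an explicit Clifford family: with `ord₂ N = 4a + b`,
eightfold periodicity gives `k = 8a + (0, 1, 2, 4)_b` real skew matrices `e_j` of size `N` and a
symmetric `ω`, and `σ₁ ⊗ ω, σ₂ ⊗ ω, σ₃ ⊗ ω, 1 ⊗ i e_j` are `k + 3` Clifford generators in the
Hermitian part of `𝔰𝔭(N, ℂ)`.

Conversely, let `B_1, …, B_k` be self-adjoint real matrices of size `d` all of whose nontrivial real
combinations are invertible, anticommuting with a skew-adjoint Clifford family `e_1, …, e_k`. The
operator `∑ i, B_i (b_i + b_iᴴ) + e_i (b_i - b_iᴴ)` on the Fock space of `k` bosonic modes, a Dirac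
operator with position variables `b_i + b_iᴴ`, is Fredholm after normalisation and odd for the
parity of the degree, so its graded index is invariant under homotopies of the `B_i`. Tensored with
a Clifford module of dimension `2 ^ k`, the symbol becomes homotopic to one in which the `B_i` are
themselves a Clifford family; there the operator is a supersymmetric harmonic oscillator, whose
kernel is known. Hence `2 ^ k` times the index is `d`. For a linear family in the Hermitian part of
`𝔰𝔭(N, ℂ)`, tensoring with a suitable graded Clifford module provides the `e_i`, while `i` and
`J_N` followed by complex conjugation make the kernel a quaternionic vector space, so that the index
is divisible by `4`. The modules of smallest size then give `2 ^ (ord₂ N + 1) ∣ N` as soon as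
`n > ρ(N / 2) + 3`.
-/

namespace HurwitzRadon

open Module ContinuousLinearMap

open scoped Kronecker

/-! ### Graded index -/

section CornerInverse

variable {R : Type*} [Ring R] {p S g P : R}

theorem corner_inverse_anticomm (hPp : P * p = p * P) (hPS : P * S = -(S * P)) (hpg : p * g = 0)
    (hgp : g * p = 0) (hqSg : (1 - p) * S * g = 1 - p) (hgSq : g * S * (1 - p) = 1 - p) :
    P * g = -(g * P) := by
  have hPq : P * (1 - p) = (1 - p) * P := by rw [mul_sub, sub_mul, hPp, mul_one, one_mul]
  have hqg : (1 - p) * g = g := by rw [sub_mul, hpg, one_mul, sub_zero]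
  have hgq : g * (1 - p) = g := by rw [mul_sub, hgp, mul_one, sub_zero]
  calc P * g = (1 - p) * (P * g) := by rw [← mul_assoc, ← hPq, mul_assoc, hqg]
    _ = g * S * (1 - p) * (P * g) := by rw [hgSq]
    _ = g * S * (P * ((1 - p) * g)) := by
        rw [mul_assoc (g * S), ← mul_assoc (1 - p), ← hPq, mul_assoc P]
    _ = -(g * (P * S) * g) := by rw [hqg, hPS]; noncomm_ring
    _ = -(g * (1 - p) * P * S * g) := by rw [hgq]; noncomm_ring
    _ = -(g * P * ((1 - p) * S * g)) := by rw [mul_assoc g (1 - p) P, ← hPq]; noncomm_ring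
    _ = -(g * P) := by rw [hqSg, mul_assoc, hPq, ← mul_assoc, hgq]

variable [StarRing R]

theorem exists_corner_inverse (hp : IsSelfAdjoint p) (hpp : IsIdempotentElem p)
    (hS : IsSelfAdjoint S) (hu : IsUnit ((1 - p) * S * (1 - p) + p)) :
    ∃ g, IsSelfAdjoint g ∧ p * g = 0 ∧ (1 - p) * S * g = 1 - p := by
  set q := 1 - p
  set d := q * S * q + p with hd
  have hqq : q * q = q := hpp.one_sub
  have hpq : p * q = 0 := hpp.mul_one_sub_self
  have hqp : q * p = 0 := hpp.one_sub_mul_self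
  have hqs : IsSelfAdjoint q := (IsSelfAdjoint.one R).sub hp
  have hds : IsSelfAdjoint d := (hS.conjugate_self hqs).add hp
  have hdq : d * q = q * S * q := by rw [hd, add_mul, hpq, add_zero, mul_assoc, hqq]
  have hqd : q * d = q * S * q := by rw [hd, mul_add, hqp, add_zero, ← mul_assoc, ← mul_assoc, hqq]
  have hD1 : Ring.inverse d * d = 1 := Ring.inverse_mul_cancel d hu
  have hD2 : d * Ring.inverse d = 1 := Ring.mul_inverse_cancel d hu
  have hDs : star (Ring.inverse d) = Ring.inverse d := by rw [← Ring.inverse_star, hds.star_eq]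
  have hDq : Ring.inverse d * q = q * Ring.inverse d := by
    calc Ring.inverse d * q = Ring.inverse d * (q * d) * Ring.inverse d := by
          rw [mul_assoc, mul_assoc q, hD2, mul_one]
      _ = Ring.inverse d * d * q * Ring.inverse d := by rw [hqd, ← hdq, mul_assoc _ d]
      _ = q * Ring.inverse d := by rw [hD1, one_mul]
  refine ⟨q * Ring.inverse d, ?_, by rw [← mul_assoc, hpq, zero_mul], ?_⟩
  · rw [isSelfAdjoint_iff, star_mul, hDs, hqs.star_eq, hDq]
  · rw [← mul_assoc, ← hdq, mul_assoc, ← hDq, ← mul_assoc, hD2, one_mul]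

theorem corner_inverse_mul (hp : IsSelfAdjoint p) (hg : IsSelfAdjoint g) (hpg : p * g = 0) :
    g * p = 0 := by
  simpa [hp.star_eq, hg.star_eq] using congrArg star hpg

theorem corner_inverse_mul_mul (hp : IsSelfAdjoint p) (hS : IsSelfAdjoint S)
    (hg : IsSelfAdjoint g) (hqSg : (1 - p) * S * g = 1 - p) : g * S * (1 - p) = 1 - p := by
  simpa [hp.star_eq, hS.star_eq, hg.star_eq, mul_assoc] using congrArg star hqSg

end CornerInverse

section GradedIndex

variable {X : Type*} [NormedAddCommGroup X] [InnerProductSpace ℝ X] {S P : X →L[ℝ] X}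

/-- The part of the kernel of `S` on which the grading operator `P` acts as the scalar `ε`. -/
def gradedKer (S P : X →L[ℝ] X) (ε : ℝ) : Submodule ℝ X :=
  S.ker ⊓ End.eigenspace (P : X →ₗ[ℝ] X) ε

theorem mem_gradedKer {ε : ℝ} {u : X} : u ∈ gradedKer S P ε ↔ S u = 0 ∧ P u = ε • u := by
  simp [gradedKer]

/-- The graded index `dim ker S ∩ {P = 1} - dim ker S ∩ {P = -1}`: for a self-adjoint `S`
anticommuting with an involution `P` this is the Fredholm index of the component
`{P = 1} → {P = -1}` of `S`. -/
noncomputable def gradedIndex (S P : X →L[ℝ] X) : ℤ :=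
  finrank ℝ (gradedKer S P 1) - finrank ℝ (gradedKer S P (-1))

/-- `S` is bounded below on the orthogonal complement of a finite-dimensional subspace. For
self-adjoint operators on a Hilbert space this is the Fredholm property. -/
def EssBoundedBelow (S : X →L[ℝ] X) : Prop :=
  ∃ F : Submodule ℝ X, FiniteDimensional ℝ F ∧ ∃ c : ℝ, 0 < c ∧ ∀ u ∈ Fᗮ, c * ‖u‖ ≤ ‖S u‖

theorem EssBoundedBelow.finiteDimensional_ker (h : EssBoundedBelow S) :
    FiniteDimensional ℝ S.ker := by
  obtain ⟨F, _, c, hc, hbound⟩ := h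
  refine FiniteDimensional.of_injective
    ((F.orthogonalProjectionOnto : X →ₗ[ℝ] F) ∘ₗ S.ker.subtype) ?_
  rw [← LinearMap.ker_eq_bot, LinearMap.ker_eq_bot']
  rintro ⟨u, hSu⟩ hu
  have huF : u ∈ Fᗮ := Submodule.orthogonalProjectionOnto_eq_zero_iff.1 hu
  have hnorm : c * ‖u‖ ≤ 0 := by
    simpa [show S u = 0 from hSu] using hbound u huF
  simpa using nonpos_of_mul_nonpos_right hnorm hc

theorem EssBoundedBelow.finiteDimensional_gradedKer (h : EssBoundedBelow S) (ε : ℝ) :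
    FiniteDimensional ℝ (gradedKer S P ε) :=
  have := h.finiteDimensional_ker
  Submodule.finiteDimensional_of_le inf_le_left

theorem EssBoundedBelow.isClosed_range [CompleteSpace X] (h : EssBoundedBelow S) :
    IsClosed (S.range : Set X) := by
  obtain ⟨F, _, c, hc, hbound⟩ := h
  have hanti : AntilipschitzWith (Real.toNNReal c⁻¹) (S ∘L Fᗮ.subtypeL) := by
    refine antilipschitz_of_bound _ fun ⟨u, hu⟩ => ?_
    rw [Real.coe_toNNReal _ (by positivity), inv_mul_eq_div, le_div_iff₀' hc]
    exact hbound u hu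
  have hclosed : IsClosed (Fᗮ.map (S : X →ₗ[ℝ] X) : Set X) := by
    convert hanti.isClosed_range (ContinuousLinearMap.uniformContinuous _) using 1
    ext y
    simp
  have hsup := Submodule.isClosed_sup_finiteDimensional _ (F.map (S : X →ₗ[ℝ] X)) hclosed
  rwa [← Submodule.map_sup, sup_comm, Submodule.sup_orthogonal_of_hasOrthogonalProjection,
    Submodule.map_top] at hsup

theorem EssBoundedBelow.range_eq_orthogonal_ker [CompleteSpace X] (h : EssBoundedBelow S)
    (hS : IsSelfAdjoint S) : S.range = S.kerᗮ := by
  rw [← isSelfAdjoint_iff'.1 hS, ← orthogonal_range, isSelfAdjoint_iff'.1 hS,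
    Submodule.orthogonal_orthogonal_eq_closure, h.isClosed_range.submodule_topologicalClosure_eq]

theorem EssBoundedBelow.isUnit_add_starProjection_ker [CompleteSpace X] (h : EssBoundedBelow S)
    (hS : IsSelfAdjoint S) [S.ker.HasOrthogonalProjection] :
    IsUnit (S + S.ker.starProjection) := by
  have hrange := h.range_eq_orthogonal_ker hS
  have hSp (u : X) : S (S.ker.starProjection u) = 0 :=
    Submodule.starProjection_apply_mem S.ker u
  have hpp (u : X) : S.ker.starProjection (S.ker.starProjection u) = S.ker.starProjection u :=
    Submodule.starProjection_eq_self_iff.2 (hSp u)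
  have hpS (u : X) : S.ker.starProjection (S u) = 0 := by
    rw [Submodule.starProjection_apply_eq_zero_iff, ← hrange]
    exact LinearMap.mem_range_self _ u
  rw [isUnit_iff_bijective]
  constructor
  · rw [injective_iff_map_eq_zero]
    intro u hu
    have hpu : S.ker.starProjection u = 0 := by
      simpa [hpS, hpp] using congrArg S.ker.starProjection hu
    have hSu : u ∈ S.ker := by simpa [hpu] using hu
    rw [← Submodule.starProjection_eq_self_iff.2 hSu, hpu]
  · intro y
    obtain ⟨v, hv⟩ : y - S.ker.starProjection y ∈ S.range := by
      rw [hrange]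
      exact Submodule.sub_starProjection_mem_orthogonal y
    refine ⟨v - S.ker.starProjection v + S.ker.starProjection y, ?_⟩
    have hSv : S v = y - S.ker.starProjection y := hv
    simp [hSp, hpp, hSv]

theorem finrank_ker_restrict {V₁ V₂ : Submodule ℝ X} {f : X →ₗ[ℝ] X}
    (hf : ∀ u ∈ V₁, f u ∈ V₂) :
    finrank ℝ (f.restrict hf).ker = finrank ℝ (V₁ ⊓ f.ker : Submodule ℝ X) := by
  rw [← Submodule.map_comap_subtype, ← LinearMap.ker_restrict hf,
    Submodule.finrank_map_subtype_eq]

/-- The two components of a symmetric odd operator are adjoint to each other, hence have equal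
rank; the rest is rank–nullity. -/
theorem finrank_graded_inf_ker_sub (K : Submodule ℝ X) [FiniteDimensional ℝ K] {σ : X →ₗ[ℝ] X}
    (hσ : σ.IsSymmetric) (hK : ∀ u ∈ K, σ u ∈ K) {P : X →ₗ[ℝ] X} (hP : ∀ u, P (σ u) = -σ (P u)) :
    (finrank ℝ (K ⊓ End.eigenspace P 1 ⊓ σ.ker : Submodule ℝ X) : ℤ) -
        finrank ℝ (K ⊓ End.eigenspace P (-1) ⊓ σ.ker : Submodule ℝ X) =
      finrank ℝ (K ⊓ End.eigenspace P 1 : Submodule ℝ X) -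
        finrank ℝ (K ⊓ End.eigenspace P (-1) : Submodule ℝ X) := by
  have hodd (ε δ : ℝ) (hεδ : δ = -ε) (u : X) (hu : u ∈ K ⊓ End.eigenspace P ε) :
      σ u ∈ K ⊓ End.eigenspace P δ := by
    refine ⟨hK u hu.1, End.mem_eigenspace_iff.2 ?_⟩
    rw [hP, End.mem_eigenspace_iff.1 hu.2, map_smul, hεδ, neg_smul]
  let σEven := σ.restrict (hodd 1 (-1) rfl)
  let σOdd := σ.restrict (hodd (-1) 1 (neg_neg 1).symm)
  have hadj : σOdd = LinearMap.adjoint σEven :=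
    (LinearMap.eq_adjoint_iff _ _).2 fun x y => hσ x y
  have hrank : finrank ℝ σOdd.range = finrank ℝ σEven.range := by
    rw [hadj, LinearMap.finrank_range_adjoint]
  have hkerEven : finrank ℝ σEven.ker = _ := finrank_ker_restrict _
  have hkerOdd : finrank ℝ σOdd.ker = _ := finrank_ker_restrict _
  have hnullEven := LinearMap.finrank_range_add_finrank_ker σEven
  have hnullOdd := LinearMap.finrank_range_add_finrank_ker σOdd
  omega

/-- The Schur complement `S - S g S` of the corner of `S` on `Kᗮ`, with inverse `g`, has the same
graded kernel as `S`. -/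
theorem finrank_gradedKer_eq_schur (K : Submodule ℝ X) [K.HasOrthogonalProjection]
    {g : X →L[ℝ] X} {ε : ℝ}
    (hPp : P * K.starProjection = K.starProjection * P) (hPS : P * S = -(S * P))
    (hPg : P * g = -(g * P)) (hpg : K.starProjection * g = 0)
    (hgSq : g * S * (1 - K.starProjection) = 1 - K.starProjection) :
    finrank ℝ (gradedKer S P ε) =
      finrank ℝ (K ⊓ End.eigenspace (P : X →ₗ[ℝ] X) ε ⊓ (S - S * g * S).ker : Submodule ℝ X) := by
  have hrecover (u : X) (hSu : S u = 0) :
      K.starProjection u - g (S (K.starProjection u)) = u := by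
    have := congr($hgSq u)
    simp only [mul_apply_eq_comp, _root_.sub_apply, one_apply_eq_self, map_sub, hSu, zero_sub,
      map_zero] at this
    rw [sub_eq_add_neg, this, add_sub_cancel]
  refine LinearEquiv.finrank_eq (LinearEquiv.ofLinearMap
    ((K.starProjection : X →ₗ[ℝ] X).restrict ?_)
    (((1 - g * S : X →L[ℝ] X) : X →ₗ[ℝ] X).restrict ?_) ?_ ?_)
  · intro u hu
    obtain ⟨hSu, hPu⟩ := mem_gradedKer.1 hu
    have hPpu : P (K.starProjection u) = ε • K.starProjection u := by
      simpa [hPu] using congr($hPp u)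
    refine ⟨⟨Submodule.starProjection_apply_mem K u, End.mem_eigenspace_iff.2 hPpu⟩, ?_⟩
    change S (K.starProjection u) - S (g (S (K.starProjection u))) = 0
    rw [← map_sub, hrecover u hSu, hSu]
  · rintro k ⟨⟨-, hPk⟩, hσk⟩
    replace hPk : P k = ε • k := End.mem_eigenspace_iff.1 hPk
    have hPS' (u : X) : P (S u) = -S (P u) := congr($hPS u)
    have hPg' (u : X) : P (g u) = -g (P u) := congr($hPg u)
    refine mem_gradedKer.2 ⟨?_, ?_⟩
    · change S (k - g (S k)) = 0
      rw [map_sub]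
      exact hσk
    · change P (k - g (S k)) = ε • (k - g (S k))
      rw [map_sub, hPg', hPS', hPk, map_smul, map_neg, map_smul, neg_neg, smul_sub]
  · ext ⟨k, ⟨hk, -⟩, -⟩
    change K.starProjection (k - g (S k)) = k
    have hpgS : K.starProjection (g (S k)) = 0 := congr($hpg (S k))
    rw [map_sub, hpgS, Submodule.starProjection_eq_self_iff.2 hk, sub_zero]
  · ext ⟨u, hu⟩
    exact hrecover u (mem_gradedKer.1 hu).1

theorem gradedIndex_eq_of_isUnit_corner [CompleteSpace X] (K : Submodule ℝ X)
    [FiniteDimensional ℝ K] (hS : IsSelfAdjoint S)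
    (hPp : P * K.starProjection = K.starProjection * P) (hPS : P * S = -(S * P))
    (hu : IsUnit ((1 - K.starProjection) * S * (1 - K.starProjection) + K.starProjection)) :
    gradedIndex S P = finrank ℝ (K ⊓ End.eigenspace (P : X →ₗ[ℝ] X) 1 : Submodule ℝ X) -
      finrank ℝ (K ⊓ End.eigenspace (P : X →ₗ[ℝ] X) (-1) : Submodule ℝ X) := by
  have hps : IsSelfAdjoint K.starProjection := isSelfAdjoint_starProjection K
  obtain ⟨g, hgs, hpg, hqSg⟩ :=
    exists_corner_inverse hps K.isIdempotentElem_starProjection hS hu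
  have hgSq := corner_inverse_mul_mul hps hS hgs hqSg
  have hPg := corner_inverse_anticomm hPp hPS hpg (corner_inverse_mul hps hgs hpg) hqSg hgSq
  have hσs : IsSelfAdjoint (S - S * g * S) := hS.sub (hgs.conjugate_self hS)
  have hσK (u : X) (_ : u ∈ K) : (S - S * g * S) u ∈ K := by
    have hq : (1 - K.starProjection) * (S - S * g * S) = 0 := by
      rw [mul_sub, ← mul_assoc, ← mul_assoc, hqSg, sub_self]
    have hqu := congr($hq u)
    simp only [mul_apply_eq_comp, _root_.sub_apply, one_apply_eq_self] at hqu
    exact Submodule.starProjection_eq_self_iff.1 (sub_eq_zero.1 hqu).symm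
  have hPσ : P * (S - S * g * S) = -((S - S * g * S) * P) := by
    calc P * (S - S * g * S) = P * S - P * S * g * S := by noncomm_ring
      _ = -(S * P) + S * (P * g) * S := by rw [hPS]; noncomm_ring
      _ = -(S * P) - S * g * (P * S) := by rw [hPg]; noncomm_ring
      _ = -((S - S * g * S) * P) := by rw [hPS]; noncomm_ring
  rw [gradedIndex, finrank_gradedKer_eq_schur K hPp hPS hPg hpg hgSq,
    finrank_gradedKer_eq_schur K hPp hPS hPg hpg hgSq]
  exact finrank_graded_inf_ker_sub K hσs.isSymmetric hσK fun u => congr($hPσ u)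

theorem commute_starProjection_ker [CompleteSpace X] [S.ker.HasOrthogonalProjection]
    (hPs : IsSelfAdjoint P) (hPS : P * S = -(S * P)) :
    P * S.ker.starProjection = S.ker.starProjection * P := by
  have hPker (u : X) (hu : u ∈ S.ker) : P u ∈ S.ker := by
    have hPSu : P (S u) = -S (P u) := congr($hPS u)
    have hSu : S u = 0 := hu
    rw [hSu, map_zero, zero_eq_neg] at hPSu
    exact hPSu
  ext u
  refine Submodule.eq_starProjection_of_mem_of_inner_eq_zero
    (hPker _ (Submodule.starProjection_apply_mem S.ker u)) (fun w hw => ?_) |>.symm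
  change inner ℝ (P u - P (S.ker.starProjection u)) w = 0
  rw [← map_sub]
  exact (hPs.isSymmetric _ _).trans
    ((Submodule.mem_orthogonal' _ _).1 (Submodule.sub_starProjection_mem_orthogonal u) _
      (hPker w hw))

theorem gradedIndex_eq_of_continuous [CompleteSpace X] {S : ℝ → X →L[ℝ] X} (hc : Continuous S)
    (hS : ∀ t, IsSelfAdjoint (S t)) (hPs : IsSelfAdjoint P) (hPS : ∀ t, P * S t = -(S t * P))
    (hF : ∀ t, EssBoundedBelow (S t)) (a b : ℝ) :
    gradedIndex (S a) P = gradedIndex (S b) P := by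
  have hloc : IsLocallyConstant fun t => gradedIndex (S t) P := by
    rw [IsLocallyConstant.iff_eventually_eq]
    intro t₀
    have := (hF t₀).finiteDimensional_ker
    set p := (S t₀).ker.starProjection with hp
    have hPp : P * p = p * P := commute_starProjection_ker hPs (hPS t₀)
    have hSp : S t₀ * p = 0 := by
      ext u
      exact Submodule.starProjection_apply_mem (S t₀).ker u
    have hpS : p * S t₀ = 0 := by
      simpa [(hS t₀).star_eq, (isSelfAdjoint_starProjection (S t₀).ker).star_eq, hp]
        using congrArg star hSp
    have hunit : IsUnit ((1 - p) * S t₀ * (1 - p) + p) := by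
      rw [sub_mul, one_mul, hpS, sub_zero, mul_sub, hSp, sub_zero, mul_one]
      exact (hF t₀).isUnit_add_starProjection_ker (hS t₀)
    have hcont : Continuous fun t => (1 - p) * S t * (1 - p) + p := by fun_prop
    filter_upwards [hcont.continuousAt.eventually (Units.isOpen.mem_nhds hunit)] with t ht
    rw [gradedIndex_eq_of_isUnit_corner _ (hS t) hPp (hPS t) ht,
      gradedIndex_eq_of_isUnit_corner _ (hS t₀) hPp (hPS t₀) hunit]
  exact hloc.apply_eq_of_isPreconnected isPreconnected_univ (Set.mem_univ a) (Set.mem_univ b)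

end GradedIndex

/-! ### Hilbert space preliminaries -/

section JointSpectrum

variable {X κ : Type*} [NormedAddCommGroup X] [InnerProductSpace ℝ X] {x B : κ → X →ₗ[ℝ] X}

theorem norm_sum_sq_of_joint_eigenvectors (hx : ∀ i, (x i).IsSymmetric) {z : (κ → ℝ) → X}
    (hz : ∀ χ i, x i (z χ) = χ i • z χ) (s : Finset (κ → ℝ)) :
    ‖∑ χ ∈ s, z χ‖ ^ 2 = ∑ χ ∈ s, ‖z χ‖ ^ 2 :=
  (LinearMap.IsSymmetric.orthogonalFamily_iInf_eigenspaces hx).norm_sum (fun χ =>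
    ⟨z χ, Submodule.mem_iInf _ |>.2 fun i => End.mem_eigenspace_iff.2 (hz χ i)⟩) s

theorem exists_eq_sum_joint_eigenvectors [Finite κ] (hx : ∀ i, (x i).IsSymmetric)
    (hxx : ∀ i j, Commute (x i) (x j)) {E : Submodule ℝ X} [FiniteDimensional ℝ E]
    (hE : ∀ i, ∀ u ∈ E, x i u ∈ E) {u : X} (hu : u ∈ E) :
    ∃ (s : Finset (κ → ℝ)) (z : (κ → ℝ) → X),
      (∀ χ i, x i (z χ) = χ i • z χ) ∧ u = ∑ χ ∈ s, z χ := by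
  have htop := LinearMap.IsSymmetric.iSup_iInf_eq_top_of_commute
    (T := fun i => (x i).restrict (hE i)) (fun i => (hx i).restrict_invariant (hE i))
    fun i j _ => LinearMap.ext fun v => Subtype.ext congr($(hxx i j) (v : X))
  obtain ⟨f, hf, hsum⟩ := Submodule.mem_iSup_iff_exists_finsupp _ _ |>.1
    (htop.ge (Submodule.mem_top (x := (⟨u, hu⟩ : E))))
  refine ⟨f.support, fun χ => f χ, fun χ i => ?_, ?_⟩
  · exact congrArg Subtype.val (End.mem_eigenspace_iff.1 ((Submodule.mem_iInf _).1 (hf χ) i))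
  · simpa [Finsupp.sum] using (congrArg Subtype.val hsum).symm

theorem mul_sum_norm_sq_le_of_commute [Fintype κ] (hx : ∀ i, (x i).IsSymmetric)
    (hxx : ∀ i j, Commute (x i) (x j)) (hxB : ∀ i j, Commute (x i) (B j)) {c : ℝ}
    (hB : ∀ (χ : κ → ℝ) v, c * (∑ i, χ i ^ 2) * ‖v‖ ^ 2 ≤ ‖∑ i, χ i • B i v‖ ^ 2)
    {E : Submodule ℝ X} [FiniteDimensional ℝ E] (hE : ∀ i, ∀ u ∈ E, x i u ∈ E) {u : X}
    (hu : u ∈ E) : c * ∑ i, ‖x i u‖ ^ 2 ≤ ‖∑ i, B i (x i u)‖ ^ 2 := by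
  obtain ⟨s, z, hz, rfl⟩ := exists_eq_sum_joint_eigenvectors hx hxx hE hu
  have hxz (i : κ) : ‖x i (∑ χ ∈ s, z χ)‖ ^ 2 = ∑ χ ∈ s, χ i ^ 2 * ‖z χ‖ ^ 2 := by
    rw [map_sum, norm_sum_sq_of_joint_eigenvectors hx]
    · simp [hz, norm_smul, mul_pow]
    · intro χ j
      rw [hz, map_smul, hz, smul_comm]
  have hBz : ∑ i, B i (x i (∑ χ ∈ s, z χ)) = ∑ χ ∈ s, ∑ i, χ i • B i (z χ) := by
    simp only [map_sum, hz, map_smul]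
    exact Finset.sum_comm
  have heigen (χ : κ → ℝ) (j : κ) :
      x j (∑ i, χ i • B i (z χ)) = χ j • ∑ i, χ i • B i (z χ) := by
    rw [map_sum, Finset.smul_sum]
    refine Finset.sum_congr rfl fun i _ => ?_
    have hcomm : x j (B i (z χ)) = B i (x j (z χ)) := congr($(hxB j i) (z χ))
    rw [map_smul, hcomm, hz, map_smul, smul_comm]
  rw [hBz, norm_sum_sq_of_joint_eigenvectors hx heigen, Finset.sum_congr rfl fun i _ => hxz i,
    Finset.sum_comm, Finset.mul_sum]
  refine Finset.sum_le_sum fun χ _ => ?_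
  rw [← Finset.sum_mul, ← mul_assoc]
  exact hB χ (z χ)

end JointSpectrum

section EllTwo

variable {ι W W' : Type*} [NormedAddCommGroup W] [InnerProductSpace ℝ W] [NormedAddCommGroup W']

/-- The Hilbert space of square-summable families in `W`. -/
abbrev EllTwo (ι W : Type*) [NormedAddCommGroup W] [InnerProductSpace ℝ W] :=
  lp (fun _ : ι => W) 2

/-- The `i`-th coordinate of a square-summable family, as a linear map. -/
noncomputable def coord (i : ι) : EllTwo ι W →ₗ[ℝ] W := lp.evalₗ (𝕜 := ℝ) _ 2 i

theorem ext_coord {u v : EllTwo ι W} (h : ∀ i, coord i u = coord i v) : u = v :=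
  lp.ext (funext h)

theorem hasSum_norm_sq_coord (u : EllTwo ι W) : HasSum (fun i => ‖coord i u‖ ^ 2) (‖u‖ ^ 2) := by
  simpa [coord] using lp.hasSum_norm (by norm_num) u

theorem inner_eq_tsum_coord (u v : EllTwo ι W) :
    inner ℝ u v = ∑' i, inner ℝ (coord i u) (coord i v) :=
  lp.inner_eq_tsum u v

theorem coord_single [DecidableEq ι] (i j : ι) (w : W) :
    coord j (lp.single 2 i w : EllTwo ι W) = if j = i then w else 0 := by
  split_ifs with h
  · subst h
    exact lp.single_apply_self (E := fun _ : ι => W) 2 j w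
  · exact lp.single_apply_ne (E := fun _ : ι => W) 2 i w h

theorem inner_single_eq_inner_coord [DecidableEq ι] (i : ι) (w : W) (u : EllTwo ι W) :
    inner ℝ (lp.single 2 i w : EllTwo ι W) u = inner ℝ w (coord i u) :=
  lp.inner_single_left (𝕜 := ℝ) i w u

theorem summable_sq_norm_of_le (τ : ι ↪ ι) {C : ℝ} {f : ι → W'} {u : EllTwo ι W}
    (h : ∀ i, ‖f i‖ ≤ C * ‖coord (τ i) u‖) : Summable fun i => ‖f i‖ ^ 2 := by
  refine .of_nonneg_of_le (fun i => by positivity) (fun i => ?_)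
    (((hasSum_norm_sq_coord u).summable.comp_injective τ.injective).mul_left (C ^ 2))
  rw [Function.comp_apply, ← mul_pow]
  exact pow_le_pow_left₀ (norm_nonneg _) (h i) 2

variable [InnerProductSpace ℝ W']

theorem norm_le_of_norm_coord_le (τ : ι ↪ ι) {C : ℝ} (hC : 0 ≤ C) {u : EllTwo ι W} {v : EllTwo ι W'}
    (h : ∀ i, ‖coord i v‖ ≤ C * ‖coord (τ i) u‖) : ‖v‖ ≤ C * ‖u‖ := by
  have hsum := (hasSum_norm_sq_coord u).summable
  refine le_of_sq_le_sq ?_ (by positivity)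
  calc ‖v‖ ^ 2 = ∑' i, ‖coord i v‖ ^ 2 := (hasSum_norm_sq_coord v).tsum_eq.symm
    _ ≤ ∑' i, C ^ 2 * ‖coord (τ i) u‖ ^ 2 := by
        refine (summable_sq_norm_of_le τ h).tsum_le_tsum (fun i => ?_)
          ((hsum.comp_injective τ.injective).mul_left _)
        rw [← mul_pow]
        exact pow_le_pow_left₀ (norm_nonneg _) (h i) 2
    _ = C ^ 2 * ∑' i, ‖coord (τ i) u‖ ^ 2 := tsum_mul_left
    _ ≤ C ^ 2 * ∑' i, ‖coord i u‖ ^ 2 := by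
        exact mul_le_mul_of_nonneg_left
          (tsum_comp_le_tsum_of_inj hsum (fun i => sq_nonneg _) τ.injective) (sq_nonneg C)
    _ = (C * ‖u‖) ^ 2 := by rw [(hasSum_norm_sq_coord u).tsum_eq, mul_pow]

/-- The operator `(u_i)_i ↦ (m_i u_{τ i})_i` on square-summable families, for a bounded family
`m` of operators and an injection `τ` of the index set. -/
noncomputable def blockComp (τ : ι ↪ ι) (m : ι → W →L[ℝ] W') (C : ℝ) (hm : ∀ i, ‖m i‖ ≤ C) :
    EllTwo ι W →L[ℝ] EllTwo ι W' :=
  have hbound (u : EllTwo ι W) (i : ι) : ‖m i (coord (τ i) u)‖ ≤ max C 0 * ‖coord (τ i) u‖ :=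
    (m i).le_of_opNorm_le ((hm i).trans (le_max_left C 0)) _
  LinearMap.mkContinuous
    { toFun := fun u => ⟨fun i => m i (coord (τ i) u),
        (memℓp_gen_iff (by norm_num)).2 (by simpa using summable_sq_norm_of_le τ (hbound u))⟩
      map_add' := fun u v => ext_coord fun i => by
        change m i (coord (τ i) (u + v)) = _
        simp only [map_add]
        rfl
      map_smul' := fun r u => ext_coord fun i => by
        change m i (coord (τ i) (r • u)) = _
        simp only [map_smul]
        rfl }
    (max C 0) fun u => norm_le_of_norm_coord_le τ (le_max_right C 0) (hbound u)

@[simp]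
theorem coord_blockComp (τ : ι ↪ ι) (m : ι → W →L[ℝ] W') (C : ℝ) (hm : ∀ i, ‖m i‖ ≤ C)
    (u : EllTwo ι W) (i : ι) : coord i (blockComp τ m C hm u) = m i (coord (τ i) u) :=
  rfl

variable (ι) in
/-- The operator between spaces of square-summable families applying `m` to each coordinate. -/
noncomputable def amplify (m : W →L[ℝ] W') : EllTwo ι W →L[ℝ] EllTwo ι W' :=
  blockComp (.refl ι) (fun _ => m) ‖m‖ fun _ => le_rfl

@[simp]
theorem coord_amplify (m : W →L[ℝ] W') (u : EllTwo ι W) (i : ι) :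
    coord i (amplify ι m u) = m (coord i u) :=
  rfl

variable [CompleteSpace W]

theorem coord_star_blockComp (τ : ι ↪ ι) (m : ι → W →L[ℝ] W) (C : ℝ) (hm : ∀ i, ‖m i‖ ≤ C)
    (u : EllTwo ι W) (i : ι) :
    coord (τ i) (star (blockComp τ m C hm) u) = star (m i) (coord i u) := by
  classical
  refine ext_inner_left ℝ fun w => ?_
  rw [← inner_single_eq_inner_coord, star_eq_adjoint, adjoint_inner_right, inner_eq_tsum_coord,
    tsum_eq_single i]
  · simp [coord_single, star_eq_adjoint, adjoint_inner_right]
  · intro j hj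
    simp [coord_single, hj]

theorem coord_star_blockComp_of_notMem_range (τ : ι ↪ ι) (m : ι → W →L[ℝ] W) (C : ℝ)
    (hm : ∀ i, ‖m i‖ ≤ C) (u : EllTwo ι W) {j : ι} (hj : j ∉ Set.range τ) :
    coord j (star (blockComp τ m C hm) u) = 0 := by
  classical
  have hτ (i : ι) : τ i ≠ j := fun h => hj ⟨i, h⟩
  refine ext_inner_left ℝ fun w => ?_
  rw [← inner_single_eq_inner_coord, star_eq_adjoint, adjoint_inner_right, inner_eq_tsum_coord]
  simp [coord_single, hτ]

variable (ι W) in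
/-- `amplify` as a homomorphism of star algebras. -/
noncomputable def pointwise : (W →L[ℝ] W) →⋆ₐ[ℝ] (EllTwo ι W →L[ℝ] EllTwo ι W) where
  toFun := amplify ι
  map_one' := rfl
  map_mul' _ _ := rfl
  map_zero' := rfl
  map_add' _ _ := rfl
  commutes' _ := rfl
  map_star' m := by
    ext1 u
    exact ext_coord fun i => (coord_star_blockComp (.refl ι) _ _ (fun _ => le_rfl) u i).symm

@[simp]
theorem coord_pointwise (m : W →L[ℝ] W) (u : EllTwo ι W) (i : ι) :
    coord i (pointwise ι W m u) = m (coord i u) :=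
  rfl

end EllTwo

section CliffordSquare

variable {R κ : Type*} [Ring R] [Fintype κ] [DecidableEq κ] {B e x y c : κ → R}

theorem two_nsmul_sum_mul_self_of_anticomm {q : R}
    (hee : ∀ i j, e i * e j + e j * e i = if i = j then q else 0)
    (hyy : ∀ i j, Commute (y i) (y j)) (hye : ∀ i j, Commute (y i) (e j)) :
    2 • ((∑ i, e i * y i) * ∑ i, e i * y i) = ∑ i, q * (y i * y i) := by
  have hexpand : (∑ i, e i * y i) * ∑ i, e i * y i = ∑ i, ∑ j, e i * e j * (y i * y j) := by
    rw [Finset.sum_mul_sum]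
    refine Finset.sum_congr rfl fun i _ => Finset.sum_congr rfl fun j _ => ?_
    rw [mul_assoc, ← mul_assoc (y i), (hye i j).eq]
    noncomm_ring
  have hswap : (∑ i, e i * y i) * ∑ i, e i * y i = ∑ i, ∑ j, e j * e i * (y i * y j) := by
    rw [hexpand, Finset.sum_comm]
    simp only [(hyy _ _).eq]
  rw [two_nsmul]
  nth_rewrite 1 [hexpand]
  rw [hswap]
  simp only [← Finset.sum_add_distrib, ← add_mul, hee, ite_mul, zero_mul, Finset.sum_ite_eq,
    Finset.mem_univ, if_true]

theorem sum_clifford_mul_self [IsAddTorsionFree R]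
    (hee : ∀ i j, e i * e j + e j * e i = if i = j then -2 else 0)
    (hyy : ∀ i j, Commute (y i) (y j)) (hye : ∀ i j, Commute (y i) (e j)) :
    (∑ i, e i * y i) * ∑ i, e i * y i = -∑ i, y i * y i := by
  refine nsmul_right_injective two_ne_zero ?_
  change 2 • _ = 2 • _
  rw [two_nsmul_sum_mul_self_of_anticomm hee hyy hye, ← Finset.mul_sum]
  noncomm_ring

theorem sum_mul_sum_add_sum_mul_sum_of_anticomm (hBe : ∀ i j, e j * B i = -(B i * e j))
    (hxe : ∀ i j, Commute (x i) (e j)) (hyB : ∀ i j, Commute (y i) (B j))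
    (hxy : ∀ i j, x i * y j - y j * x i = if i = j then c i else 0) :
    (∑ i, B i * x i) * (∑ i, e i * y i) + (∑ i, e i * y i) * ∑ i, B i * x i =
      ∑ i, B i * e i * c i := by
  have hterm (i j : κ) : B i * x i * (e j * y j) + e j * y j * (B i * x i) =
      B i * e j * (x i * y j - y j * x i) := by
    calc B i * x i * (e j * y j) + e j * y j * (B i * x i)
        = B i * (x i * e j) * y j + e j * (y j * B i) * x i := by noncomm_ring
      _ = B i * (e j * x i) * y j + (e j * B i) * y j * x i := by
          rw [(hxe i j).eq, (hyB j i).eq, mul_assoc (e j) (B i) (y j)]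
      _ = B i * e j * (x i * y j - y j * x i) := by rw [hBe]; noncomm_ring
  rw [Finset.sum_mul_sum, Finset.sum_mul_sum, Finset.sum_comm (f := fun i j => e i * _ * _)]
  simp only [← Finset.sum_add_distrib, hterm, hxy, mul_ite, mul_zero, Finset.sum_ite_eq,
    Finset.mem_univ, if_true]

theorem sum_add_mul_self_of_clifford [IsAddTorsionFree R]
    (hee : ∀ i j, e i * e j + e j * e i = if i = j then -2 else 0)
    (hBe : ∀ i j, e j * B i = -(B i * e j)) (hyy : ∀ i j, Commute (y i) (y j))
    (hxe : ∀ i j, Commute (x i) (e j)) (hye : ∀ i j, Commute (y i) (e j))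
    (hyB : ∀ i j, Commute (y i) (B j))
    (hxy : ∀ i j, x i * y j - y j * x i = if i = j then c i else 0) :
    (∑ i, (B i * x i + e i * y i)) * ∑ i, (B i * x i + e i * y i) =
      (∑ i, B i * x i) * (∑ i, B i * x i) - ∑ i, y i * y i + ∑ i, B i * e i * c i := by
  rw [Finset.sum_add_distrib, add_mul, mul_add, mul_add, sum_clifford_mul_self hee hyy hye,
    ← sum_mul_sum_add_sum_mul_sum_of_anticomm hBe hxe hyB hxy]
  abel

end CliffordSquare

section CliffordSymbol

variable {R R' κ : Type*} [Ring R] [StarRing R] [Algebra ℝ R] [Ring R'] [StarRing R']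
  [Algebra ℝ R'] [DecidableEq κ] {B e : κ → R}

/-- A skew-adjoint family of anticommuting square roots of `-1`. -/
structure SkewClifford (e : κ → R) : Prop where
  star_skew : ∀ i, star (e i) = -e i
  clifford : ∀ i j, e i * e j + e j * e i = if i = j then -2 else 0

theorem SkewClifford.map (h : SkewClifford e) (φ : R →⋆ₐ[ℝ] R') : SkewClifford (φ ∘ e) where
  star_skew i := by simp [← map_star, h.star_skew]
  clifford i j := by
    simp only [Function.comp_apply, ← map_mul, ← map_add, h.clifford]
    split_ifs <;> simp [map_ofNat]

variable [Fintype κ]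

/-- The coefficients `M_i = B_i + e_i` of a Dirac-type operator `∑ i, M_i t_i + t_iᴴ M_iᴴ`: a
self-adjoint family `B` all of whose nontrivial real combinations are invertible, anticommuting
with a skew-adjoint Clifford family `e`. -/
structure CliffordSymbol (B e : κ → R) : Prop extends SkewClifford e where
  isSelfAdjoint : ∀ i, IsSelfAdjoint (B i)
  anticomm : ∀ i j, e j * B i = -(B i * e j)
  isUnit : ∀ χ : κ → ℝ, χ ≠ 0 → IsUnit (∑ i, χ i • B i)

theorem CliffordSymbol.map (h : CliffordSymbol B e) (φ : R →⋆ₐ[ℝ] R') :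
    CliffordSymbol (φ ∘ B) (φ ∘ e) where
  toSkewClifford := h.toSkewClifford.map φ
  isSelfAdjoint i := (h.isSelfAdjoint i).map φ
  anticomm i j := by simp only [Function.comp_apply, ← map_mul, h.anticomm, map_neg]
  isUnit χ hχ := by simpa using (h.isUnit χ hχ).map φ

theorem CliffordSymbol.star_coeff (h : CliffordSymbol B e) (i : κ) :
    star (B i + e i) = B i - e i := by
  rw [star_add, (h.isSelfAdjoint i).star_eq, h.star_skew, sub_eq_add_neg]

end CliffordSymbol

/-! ### Fock space -/

section WeightedComp

variable {ι W : Type*} [NormedAddCommGroup W] [InnerProductSpace ℝ W] {C : ℝ} {a : ι → ℝ}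

variable (W) in
/-- The operator `(u_i)_i ↦ (a_i u_{τ i})_i` on square-summable families, for bounded scalar
weights `a`. -/
noncomputable def weightedComp (τ : ι ↪ ι) (a : ι → ℝ) (C : ℝ) (ha : ∀ i, |a i| ≤ C) :
    EllTwo ι W →L[ℝ] EllTwo ι W :=
  blockComp τ (fun i => a i • 1) C fun i => by
    calc ‖a i • (1 : W →L[ℝ] W)‖ = |a i| * ‖(1 : W →L[ℝ] W)‖ := norm_smul _ _
      _ ≤ |a i| := mul_le_of_le_one_right (abs_nonneg _) norm_id_le
      _ ≤ C := ha i

@[simp]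
theorem coord_weightedComp (τ : ι ↪ ι) (ha : ∀ i, |a i| ≤ C) (u : EllTwo ι W) (i : ι) :
    coord i (weightedComp W τ a C ha u) = a i • coord (τ i) u :=
  rfl

variable [CompleteSpace W]

theorem coord_star_weightedComp (τ : ι ↪ ι) (ha : ∀ i, |a i| ≤ C) (u : EllTwo ι W) (i : ι) :
    coord (τ i) (star (weightedComp W τ a C ha) u) = a i • coord i u := by
  rw [weightedComp, coord_star_blockComp, star_smul, star_one, star_trivial]
  rfl

theorem coord_star_weightedComp_of_notMem_range (τ : ι ↪ ι) (ha : ∀ i, |a i| ≤ C)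
    (u : EllTwo ι W) {j : ι} (hj : j ∉ Set.range τ) :
    coord j (star (weightedComp W τ a C ha) u) = 0 :=
  coord_star_blockComp_of_notMem_range τ _ C _ u hj

theorem isSelfAdjoint_weightedComp_refl (ha : ∀ i, |a i| ≤ C) :
    IsSelfAdjoint (weightedComp W (.refl ι) a C ha) := by
  rw [isSelfAdjoint_iff]
  ext1 u
  exact ext_coord fun i => coord_star_weightedComp (.refl ι) ha u i

theorem commute_weightedComp_pointwise (τ : ι ↪ ι) (ha : ∀ i, |a i| ≤ C) (m : W →L[ℝ] W) :
    Commute (weightedComp W τ a C ha) (pointwise ι W m) := by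
  ext1 u
  refine ext_coord fun i => ?_
  simp only [mul_apply_eq_comp, coord_weightedComp, coord_pointwise, map_smul]

theorem commute_star_weightedComp_pointwise (τ : ι ↪ ι) (ha : ∀ i, |a i| ≤ C) (m : W →L[ℝ] W) :
    Commute (star (weightedComp W τ a C ha)) (pointwise ι W m) := by
  simpa only [← map_star, star_star] using (commute_weightedComp_pointwise τ ha (star m)).star_star

end WeightedComp

section MultiIndex

variable {κ : Type*} [DecidableEq κ]

/-- The embedding `α ↦ α + e_i` of multi-indices. -/
def raise (i : κ) : (κ → ℕ) ↪ (κ → ℕ) := addRightEmbedding (Pi.single i 1)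

/-- The map `α ↦ α - e_i` of multi-indices; it fixes `α` if `α i = 0`. -/
def lower (i : κ) (α : κ → ℕ) : κ → ℕ := α - Pi.single i 1

theorem raise_apply (i : κ) (α : κ → ℕ) : raise i α = α + Pi.single i 1 := rfl

@[simp]
theorem raise_apply_self (i : κ) (α : κ → ℕ) : raise i α i = α i + 1 := by simp [raise_apply]

@[simp]
theorem lower_apply_self (i : κ) (α : κ → ℕ) : lower i α i = α i - 1 := by simp [lower]

theorem raise_apply_of_ne {i j : κ} (h : j ≠ i) (α : κ → ℕ) : raise i α j = α j := by
  simp [raise_apply, h]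

theorem lower_apply_of_ne {i j : κ} (h : j ≠ i) (α : κ → ℕ) : lower i α j = α j := by
  simp [lower, h]

@[simp]
theorem lower_raise (i : κ) (α : κ → ℕ) : lower i (raise i α) = α := by
  ext j
  simp [raise_apply, lower]

theorem raise_lower {i : κ} {α : κ → ℕ} (h : α i ≠ 0) : raise i (lower i α) = α := by
  ext j
  obtain rfl | hj := eq_or_ne j i
  · rw [raise_apply_self, lower_apply_self, Nat.sub_add_cancel (Nat.pos_of_ne_zero h)]
  · rw [raise_apply_of_ne hj, lower_apply_of_ne hj]

theorem raise_raise (i j : κ) (α : κ → ℕ) : raise i (raise j α) = raise j (raise i α) :=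
  add_right_comm _ _ _

theorem lower_lower (i j : κ) (α : κ → ℕ) : lower i (lower j α) = lower j (lower i α) :=
  tsub_right_comm

theorem raise_lower_comm {i j : κ} (h : i ≠ j) (α : κ → ℕ) :
    raise i (lower j α) = lower j (raise i α) := by
  ext l
  obtain rfl | hi := eq_or_ne l i
  · simp [lower_apply_of_ne h]
  obtain rfl | hj := eq_or_ne l j
  · simp [raise_apply_of_ne hi]
  · simp [raise_apply_of_ne hi, lower_apply_of_ne hj]

theorem notMem_range_raise {i : κ} {α : κ → ℕ} (h : α i = 0) : α ∉ Set.range (raise i) := by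
  rintro ⟨β, rfl⟩
  simp at h

/-- The bosonic Fock space on `κ` modes with coefficients in `W`, in the occupation number
basis. -/
abbrev Fock (κ W : Type*) [NormedAddCommGroup W] [InnerProductSpace ℝ W] := EllTwo (κ → ℕ) W

variable {W : Type*} [NormedAddCommGroup W] [InnerProductSpace ℝ W] [CompleteSpace W]

theorem coord_star_weightedComp_raise (i : κ) {C : ℝ} {a : (κ → ℕ) → ℝ} (ha : ∀ α, |a α| ≤ C)
    (u : Fock κ W) (α : κ → ℕ) : coord α (star (weightedComp W (raise i) a C ha) u) =
      (if α i = 0 then 0 else a (lower i α)) • coord (lower i α) u := by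
  split_ifs with h
  · rw [zero_smul, coord_star_weightedComp_of_notMem_range _ ha u (notMem_range_raise h)]
  · conv_lhs => rw [← raise_lower h]
    exact coord_star_weightedComp _ ha u _

end MultiIndex

section Fock

variable {κ W : Type*} [Fintype κ] [NormedAddCommGroup W] [InnerProductSpace ℝ W]

/-- The total degree of a multi-index. -/
def degree (α : κ → ℕ) : ℕ := ∑ i, α i

theorem apply_le_degree (i : κ) (α : κ → ℕ) : α i ≤ degree α :=
  Finset.single_le_sum (f := α) (fun _ _ => Nat.zero_le _) (Finset.mem_univ i)

/-- The weights of the normalised annihilation operators. -/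
noncomputable def shiftWeight (i : κ) (α : κ → ℕ) : ℝ := √((α i + 1) / (degree α + 1))

theorem abs_shiftWeight_le_one (i : κ) (α : κ → ℕ) : |shiftWeight i α| ≤ 1 := by
  have hle : (α i : ℝ) ≤ degree α := by exact_mod_cast apply_le_degree i α
  rw [shiftWeight, abs_of_nonneg (Real.sqrt_nonneg _), Real.sqrt_le_one, div_le_one (by positivity)]
  linarith

/-- The weights of the normalised creation operators; `0 / 0 = 0` gives weight `0` at `α = 0`. -/
noncomputable def coshiftWeight (i : κ) (α : κ → ℕ) : ℝ := √(α i / degree α)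

theorem coshiftWeight_eq_zero {i : κ} {α : κ → ℕ} (h : α i = 0) : coshiftWeight i α = 0 := by
  simp [coshiftWeight, h]

variable (κ W) in
/-- The grading operator `(-1)^deg` of Fock space. -/
noncomputable def parity : Fock κ W →L[ℝ] Fock κ W :=
  weightedComp W (.refl _) (fun α => (-1) ^ degree α) 1 fun α => by simp

@[simp]
theorem coord_parity (u : Fock κ W) (α : κ → ℕ) :
    coord α (parity κ W u) = (-1 : ℝ) ^ degree α • coord α u :=
  rfl

theorem isSelfAdjoint_parity [CompleteSpace W] : IsSelfAdjoint (parity κ W) :=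
  isSelfAdjoint_weightedComp_refl _

variable [DecidableEq κ]

theorem degree_raise (i : κ) (α : κ → ℕ) : degree (raise i α) = degree α + 1 := by
  simp [degree, raise_apply, Finset.sum_add_distrib]

theorem degree_lower_add_one {i : κ} {α : κ → ℕ} (h : α i ≠ 0) :
    degree (lower i α) + 1 = degree α := by
  rw [← degree_raise i, raise_lower h]

theorem coshiftWeight_raise (i : κ) (α : κ → ℕ) :
    coshiftWeight i (raise i α) = shiftWeight i α := by
  simp [coshiftWeight, shiftWeight, degree_raise]

variable (W) in
/-- The annihilation operator `b_i` on Fock space, normalised to the bounded operator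
`(deg + 1)^(-1/2) b_i`. -/
noncomputable def normShift (i : κ) : Fock κ W →L[ℝ] Fock κ W :=
  weightedComp W (raise i) (shiftWeight i) 1 (abs_shiftWeight_le_one i)

@[simp]
theorem coord_normShift (i : κ) (u : Fock κ W) (α : κ → ℕ) :
    coord α (normShift W i u) = shiftWeight i α • coord (raise i α) u :=
  rfl

variable [CompleteSpace W]

@[simp]
theorem coord_star_normShift (i : κ) (u : Fock κ W) (α : κ → ℕ) :
    coord α (star (normShift W i) u) = coshiftWeight i α • coord (lower i α) u := by
  rw [normShift, coord_star_weightedComp_raise]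
  split_ifs with h
  · rw [coshiftWeight_eq_zero h]
  · rw [← coshiftWeight_raise, raise_lower h]

/-- The operator `∑ i, M_i t_i + t_iᴴ M_iᴴ` on Fock space, where the `t_i` are the normalised
annihilation operators. -/
noncomputable def diracOp (M : κ → W →L[ℝ] W) : Fock κ W →L[ℝ] Fock κ W :=
  ∑ i, (pointwise _ W (M i) * normShift W i + star (normShift W i) * pointwise _ W (star (M i)))

theorem coord_diracOp (M : κ → W →L[ℝ] W) (u : Fock κ W) (α : κ → ℕ) :
    coord α (diracOp M u) = ∑ i, (shiftWeight i α • M i (coord (raise i α) u) +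
      coshiftWeight i α • star (M i) (coord (lower i α) u)) := by
  simp only [diracOp, _root_.sum_apply, _root_.add_apply, mul_apply_eq_comp, map_sum, map_add,
    coord_pointwise, coord_normShift, coord_star_normShift, map_smul]

theorem isSelfAdjoint_diracOp (M : κ → W →L[ℝ] W) : IsSelfAdjoint (diracOp M) := by
  simp only [isSelfAdjoint_iff, diracOp, star_sum, star_add, star_mul, star_star, ← map_star]
  exact Finset.sum_congr rfl fun i _ => add_comm _ _

theorem parity_mul_diracOp (M : κ → W →L[ℝ] W) :
    parity κ W * diracOp M = -(diracOp M * parity κ W) := by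
  ext1 u
  refine ext_coord fun α => ?_
  simp only [mul_apply_eq_comp, _root_.neg_apply, coord_parity, coord_diracOp, map_neg, map_smul,
    degree_raise, Finset.smul_sum, ← Finset.sum_neg_distrib]
  refine Finset.sum_congr rfl fun i _ => ?_
  by_cases h : α i = 0
  · simp [coshiftWeight_eq_zero h, pow_succ, smul_comm (shiftWeight i α)]
  · rw [← degree_lower_add_one h]
    simp [pow_succ, smul_comm (shiftWeight i α), smul_comm (coshiftWeight i α), neg_add,
      -neg_add_rev]

end Fock

section SupportedOn

variable {ι W : Type*} [NormedAddCommGroup W] [InnerProductSpace ℝ W]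

variable (W) in
/-- The square-summable families vanishing outside `s`. -/
def supportedOn (s : Set ι) : Submodule ℝ (EllTwo ι W) where
  carrier := {u | ∀ i ∉ s, coord i u = 0}
  add_mem' hu hv i hi := by rw [map_add, hu i hi, hv i hi, add_zero]
  zero_mem' i _ := map_zero _
  smul_mem' c u hu i hi := by rw [map_smul, hu i hi, smul_zero]

theorem supportedOn_mono {s t : Set ι} (h : s ⊆ t) : supportedOn W s ≤ supportedOn W t :=
  fun _ hu i hi => hu i fun his => hi (h his)

theorem finiteDimensional_supportedOn [FiniteDimensional ℝ W] {s : Set ι} (hs : s.Finite) :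
    FiniteDimensional ℝ (supportedOn W s) := by
  have := hs.to_subtype
  have hinj : Function.Injective
      (LinearMap.pi fun i : s => coord i.1 ∘ₗ (supportedOn W s).subtype) := by
    intro u v huv
    refine Subtype.ext (ext_coord fun i => ?_)
    by_cases hi : i ∈ s
    · exact congrFun huv ⟨i, hi⟩
    · rw [u.2 i hi, v.2 i hi]
  exact .of_injective _ hinj

theorem weightedComp_refl_mem_supportedOn {a : ι → ℝ} {C : ℝ} (ha : ∀ i, |a i| ≤ C) {s : Set ι}
    {u : EllTwo ι W} (hu : u ∈ supportedOn W s) :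
    weightedComp W (.refl ι) a C ha u ∈ supportedOn W s := fun i hi => by
  rw [coord_weightedComp, Function.Embedding.refl_apply, hu i hi, smul_zero]

theorem mem_supportedOn_compl_of_mem_orthogonal {s : Set ι} {u : EllTwo ι W}
    (hu : u ∈ (supportedOn W s)ᗮ) : u ∈ supportedOn W sᶜ := by
  classical
  intro i hi
  have hsingle : lp.single 2 i (coord i u) ∈ supportedOn W s := fun j hj => by
    rw [coord_single, if_neg (ne_of_mem_of_not_mem (not_not.1 hi) hj).symm]
  exact inner_self_eq_zero.1 ((inner_single_eq_inner_coord i _ u).symm.trans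
    ((Submodule.mem_orthogonal _ _).1 hu _ hsingle))

end SupportedOn

section TruncatedOscillator

variable {κ W : Type*} [NormedAddCommGroup W] [InnerProductSpace ℝ W]

/-- The weights of the truncated annihilation operator. -/
noncomputable def truncWeight (d n : ℕ) : ℝ := if n < d then √(n + 1) else 0

theorem abs_truncWeight_le (d n : ℕ) : |truncWeight d n| ≤ d := by
  rw [truncWeight]
  split_ifs with h
  · have hn : (n : ℝ) + 1 ≤ d := by exact_mod_cast h
    rw [abs_of_nonneg (Real.sqrt_nonneg _), Real.sqrt_le_left (by positivity)]
    nlinarith [(n.cast_nonneg : (0 : ℝ) ≤ n)]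
  · simp

theorem truncWeight_mul_self {d n : ℕ} (h : n < d) : truncWeight d n * truncWeight d n = n + 1 := by
  rw [truncWeight, if_pos h, Real.mul_self_sqrt (by positivity)]

variable [DecidableEq κ]

variable (W) in
/-- The annihilation operator of the `i`-th mode, truncated to states in which that mode is
occupied at most `d` times, so that it is bounded. -/
noncomputable def truncLower (d : ℕ) (i : κ) : Fock κ W →L[ℝ] Fock κ W :=
  weightedComp W (raise i) (fun α => truncWeight d (α i)) d fun α => abs_truncWeight_le d (α i)

theorem coord_truncLower (d : ℕ) (i : κ) (u : Fock κ W) (α : κ → ℕ) :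
    coord α (truncLower W d i u) = truncWeight d (α i) • coord (raise i α) u :=
  rfl

theorem commute_truncLower (d : ℕ) (i j : κ) : Commute (truncLower W d i) (truncLower W d j) := by
  obtain rfl | hij := eq_or_ne i j
  · exact .refl _
  ext1 u
  refine ext_coord fun α => ?_
  simp only [mul_apply_eq_comp, coord_truncLower, raise_apply_of_ne hij, raise_apply_of_ne hij.symm,
    raise_raise i j]
  rw [smul_comm]

variable [CompleteSpace W]

theorem coord_star_truncLower (d : ℕ) (i : κ) (u : Fock κ W) (α : κ → ℕ) :
    coord α (star (truncLower W d i) u) =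
      (if α i = 0 then 0 else truncWeight d (α i - 1)) • coord (lower i α) u := by
  rw [truncLower, coord_star_weightedComp_raise, lower_apply_self]

theorem commute_truncLower_star (d : ℕ) {i j : κ} (hij : i ≠ j) :
    Commute (truncLower W d i) (star (truncLower W d j)) := by
  ext1 u
  refine ext_coord fun α => ?_
  simp only [mul_apply_eq_comp, coord_truncLower, coord_star_truncLower, raise_apply_of_ne hij.symm,
    lower_apply_of_ne hij, raise_lower_comm hij]
  rw [smul_comm]

theorem truncLower_ccr {d : ℕ} {i : κ} {u : Fock κ W} (hu : u ∈ supportedOn W {α | α i < d}) :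
    (truncLower W d i * star (truncLower W d i) - star (truncLower W d i) * truncLower W d i) u =
      u := by
  refine ext_coord fun α => ?_
  simp only [_root_.sub_apply, map_sub, mul_apply_eq_comp, coord_truncLower, coord_star_truncLower,
    lower_raise, raise_apply_self, lower_apply_self, Nat.add_sub_cancel, Nat.succ_ne_zero, if_false,
    smul_smul]
  by_cases hd : α i < d
  · rw [truncWeight_mul_self hd]
    by_cases h0 : α i = 0
    · simp [h0]
    · rw [if_neg h0, raise_lower h0, truncWeight_mul_self (by omega), ← sub_smul,
        Nat.cast_pred (Nat.pos_of_ne_zero h0)]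
      simp
  · have hα : coord α u = 0 := hu α hd
    by_cases h0 : α i = 0
    · simp [h0, hα]
    · simp [raise_lower h0, hα]

theorem truncLower_add_star_mem_supportedOn {d : ℕ} (i : κ) {u : Fock κ W}
    (hu : u ∈ supportedOn W (Set.Iic fun _ => d)) :
    (truncLower W d i + star (truncLower W d i)) u ∈ supportedOn W (Set.Iic fun _ => d) := by
  intro α hα
  obtain ⟨j, hj⟩ : ∃ j, d < α j := by simpa [Pi.le_def] using hα
  have hzero {β : κ → ℕ} (hβ : d < β j) : coord β u = 0 := hu β fun hle => (hle j).not_gt hβ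
  rw [_root_.add_apply, map_add, coord_truncLower, coord_star_truncLower]
  obtain rfl | hji := eq_or_ne j i
  · rw [hzero (by rw [raise_apply_self]; omega), if_neg (by omega), truncWeight, truncWeight,
      if_neg (by omega), if_neg (by omega)]
    simp
  · rw [hzero (by rwa [raise_apply_of_ne hji]), hzero (by rwa [lower_apply_of_ne hji])]
    simp

end TruncatedOscillator

section Rescaling

variable {κ W : Type*} [Fintype κ] [NormedAddCommGroup W] [InnerProductSpace ℝ W]

theorem one_le_sum_sq_shiftWeight [Nonempty κ] (α : κ → ℕ) : 1 ≤ ∑ i, shiftWeight i α ^ 2 := by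
  have hsq (i : κ) : shiftWeight i α ^ 2 = (α i + 1) / (degree α + 1) := by
    rw [shiftWeight, Real.sq_sqrt (by positivity)]
  have hdeg : ∑ i, (α i : ℝ) = degree α := by simp [degree]
  have hcard : (1 : ℝ) ≤ Fintype.card κ := by exact_mod_cast Fintype.card_pos
  simp only [hsq]
  rw [← Finset.sum_div, le_div_iff₀ (by positivity), Finset.sum_add_distrib, hdeg]
  simpa using hcard

variable (κ W) in
/-- The operator `(deg + 1)^(-1/2)` on Fock space. -/
noncomputable def invSqrtDegree : Fock κ W →L[ℝ] Fock κ W :=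
  weightedComp W (.refl _) (fun α => (√(degree α + 1))⁻¹) 1 fun α => by
    rw [abs_of_nonneg (by positivity)]
    exact inv_le_one_of_one_le₀ (Real.one_le_sqrt.2 (by simp))

theorem coord_invSqrtDegree (u : Fock κ W) (α : κ → ℕ) :
    coord α (invSqrtDegree κ W u) = (√(degree α + 1))⁻¹ • coord α u :=
  rfl

theorem norm_sq_invSqrtDegree_le {m : ℕ} (hm : 0 < m) {w : Fock κ W}
    (hw : w ∈ supportedOn W {α | m ≤ degree α}) : ‖invSqrtDegree κ W w‖ ^ 2 ≤ ‖w‖ ^ 2 / m := by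
  have hnorm : ‖invSqrtDegree κ W w‖ ≤ (√m)⁻¹ * ‖w‖ := by
    refine norm_le_of_norm_coord_le (.refl _) (by positivity) fun α => ?_
    rw [coord_invSqrtDegree, norm_smul, Real.norm_of_nonneg (by positivity),
      Function.Embedding.refl_apply]
    by_cases hα : m ≤ degree α
    · gcongr
      exact (Nat.cast_le.2 hα).trans (le_add_of_nonneg_right zero_le_one)
    · simp [hw α hα]
  calc ‖invSqrtDegree κ W w‖ ^ 2 ≤ ((√m)⁻¹ * ‖w‖) ^ 2 := by gcongr
    _ = ‖w‖ ^ 2 / m := by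
      rw [mul_pow, inv_pow, Real.sq_sqrt (by positivity), inv_mul_eq_div]

theorem abs_sqrt_mul_inv_sqrt_sub_sqrt_div_le {a D m : ℝ} (ha : 0 ≤ a) (haD : a ≤ D) (hm : 0 < m)
    (hmD : m ≤ D) : |√a * (√(D + 1))⁻¹ - √(a / D)| ≤ m⁻¹ := by
  have hD : 0 < D := hm.trans_le hmD
  have hP : 0 < √D := Real.sqrt_pos.2 hD
  have hQ : 0 < √(D + 1) := Real.sqrt_pos.2 (by linarith)
  have hPQ : √D ≤ √(D + 1) := Real.sqrt_le_sqrt (by linarith)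
  have hdiff : (√(D + 1) - √D) * (√(D + 1) + √D) = 1 := by
    nlinarith [Real.sq_sqrt hD.le, Real.sq_sqrt (show 0 ≤ D + 1 by linarith)]
  have hinv : 0 ≤ (√D)⁻¹ - (√(D + 1))⁻¹ := sub_nonneg.2 (inv_anti₀ hP hPQ)
  calc |√a * (√(D + 1))⁻¹ - √(a / D)| = √a * ((√D)⁻¹ - (√(D + 1))⁻¹) := by
        rw [Real.sqrt_div ha, div_eq_mul_inv, ← mul_sub, abs_mul, abs_sub_comm, abs_of_nonneg hinv,
          abs_of_nonneg (Real.sqrt_nonneg a)]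
    _ ≤ √D * ((√D)⁻¹ - (√(D + 1))⁻¹) := by gcongr
    _ = (√(D + 1) - √D) / √(D + 1) := by field_simp
    _ ≤ m⁻¹ := by
        rw [div_le_iff₀ hQ, inv_mul_eq_div, le_div_iff₀ hm]
        have hmQ : m ≤ √(D + 1) * (√(D + 1) + √D) := by
          nlinarith [Real.sq_sqrt (show 0 ≤ D + 1 by linarith)]
        calc (√(D + 1) - √D) * m ≤ (√(D + 1) - √D) * (√(D + 1) * (√(D + 1) + √D)) := by
              gcongr
          _ = √(D + 1) := by rw [mul_left_comm, hdiff, mul_one]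

variable [DecidableEq κ]

theorem norm_truncLower_invSqrtDegree_sub_normShift_le {d m : ℕ} (i : κ) (hm : 0 < m)
    {w : Fock κ W} (hwd : w ∈ supportedOn W {α | ∀ i, α i < d})
    (hwm : w ∈ supportedOn W {α | m ≤ degree α}) :
    ‖truncLower W d i (invSqrtDegree κ W w) - normShift W i w‖ ≤ (m : ℝ)⁻¹ * ‖w‖ := by
  refine norm_le_of_norm_coord_le (raise i) (by positivity) fun α => ?_
  rw [map_sub, coord_truncLower, coord_invSqrtDegree, coord_normShift, smul_smul, ← sub_smul,
    norm_smul]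
  by_cases hα : raise i α ∈ {α | (∀ i, α i < d) ∧ m ≤ degree α}
  · have hd : α i < d := Nat.lt_of_succ_lt ((raise_apply_self i α).symm.trans_lt (hα.1 i))
    have hle : (α i : ℝ) ≤ degree α := by exact_mod_cast apply_le_degree i α
    have hmα : (m : ℝ) ≤ degree α + 1 := by exact_mod_cast (degree_raise i α ▸ hα.2)
    rw [truncWeight, if_pos hd, degree_raise, shiftWeight, Real.norm_eq_abs, Nat.cast_add_one]
    gcongr
    exact abs_sqrt_mul_inv_sqrt_sub_sqrt_div_le (by positivity) (by linarith) (by simpa) hmα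
  · have hzero : coord (raise i α) w = 0 := by
      by_contra hne
      exact hα ⟨not_not.1 fun h => hne (hwd _ h), not_not.1 fun h => hne (hwm _ h)⟩
    simp [hzero]

variable [CompleteSpace W]

theorem hasSum_norm_sq_star_normShift (i : κ) (w : Fock κ W) :
    HasSum (fun α => shiftWeight i α ^ 2 * ‖coord α w‖ ^ 2) (‖star (normShift W i) w‖ ^ 2) := by
  have hinner : ‖star (normShift W i) w‖ ^ 2 =
      inner ℝ w (normShift W i (star (normShift W i) w)) := by
    rw [← real_inner_self_eq_norm_sq, star_eq_adjoint, adjoint_inner_left]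
  have hcoord (α : κ → ℕ) : coord α (normShift W i (star (normShift W i) w)) =
      shiftWeight i α ^ 2 • coord α w := by
    rw [coord_normShift, coord_star_normShift, lower_raise, coshiftWeight_raise, smul_smul, sq]
  rw [hinner]
  refine (lp.hasSum_inner (𝕜 := ℝ) w _).congr_fun fun α => ?_
  rw [← real_inner_self_eq_norm_sq, ← inner_smul_right, ← hcoord]
  rfl

theorem norm_sq_le_sum_norm_sq_star_normShift [Nonempty κ] (w : Fock κ W) :
    ‖w‖ ^ 2 ≤ ∑ i, ‖star (normShift W i) w‖ ^ 2 := by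
  refine hasSum_le (fun α => ?_) (hasSum_norm_sq_coord w)
    (hasSum_sum fun i _ => hasSum_norm_sq_star_normShift i w)
  rw [← Finset.sum_mul]
  exact le_mul_of_one_le_left (sq_nonneg _) (one_le_sum_sq_shiftWeight α)

theorem star_truncLower_invSqrtDegree {d : ℕ} (i : κ) {w : Fock κ W}
    (hw : w ∈ supportedOn W {α | ∀ i, α i < d}) :
    star (truncLower W d i) (invSqrtDegree κ W w) = star (normShift W i) w := by
  refine ext_coord fun α => ?_
  rw [coord_star_truncLower, coord_invSqrtDegree, coord_star_normShift, smul_smul]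
  by_cases h0 : α i = 0
  · simp [h0, coshiftWeight_eq_zero]
  obtain ⟨β, rfl⟩ : ∃ β, raise i β = α := ⟨_, raise_lower h0⟩
  rw [lower_raise, coshiftWeight_raise, if_neg h0, raise_apply_self, Nat.add_sub_cancel]
  by_cases hβ : ∀ i, β i < d
  · rw [truncWeight, if_pos (hβ i), shiftWeight, Real.sqrt_div (by positivity), div_eq_mul_inv]
  · simp [hw β hβ]

end Rescaling

/-! ### Dirac operators with a Clifford symbol -/

section Coercive

variable {X κ : Type*} [NormedAddCommGroup X] [NormedSpace ℝ X] [CompleteSpace X] [Fintype κ]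
  {B : κ → X →L[ℝ] X}

theorem exists_norm_le_mul_norm_of_isUnit (hB : ∀ χ : κ → ℝ, χ ≠ 0 → IsUnit (∑ i, χ i • B i)) :
    ∃ K : ℝ, ∀ χ : EuclideanSpace ℝ κ, ‖χ‖ = 1 → ∀ v, ‖v‖ ≤ K * ‖∑ i, χ i • B i v‖ := by
  have hunit (χ : EuclideanSpace ℝ κ) (hχ : ‖χ‖ = 1) : IsUnit (∑ i, χ i • B i) :=
    hB χ fun h => one_ne_zero (hχ.symm.trans (norm_eq_zero.2 (WithLp.ofLp_injective 2 h)))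
  have hcont : ContinuousOn (fun χ : EuclideanSpace ℝ κ => Ring.inverse (∑ i, χ i • B i))
      (Metric.sphere 0 1) := fun χ hχ => by
    have hinv := NormedRing.inverse_continuousAt (hunit χ (by simpa using hχ)).unit
    exact (hinv.comp (f := fun χ : EuclideanSpace ℝ κ => ∑ i, χ i • B i)
      (by fun_prop)).continuousWithinAt
  obtain ⟨K, hK⟩ := (isCompact_sphere (0 : EuclideanSpace ℝ κ) 1).exists_bound_of_continuousOn hcont
  refine ⟨K, fun χ hχ v => ?_⟩
  calc ‖v‖ = ‖Ring.inverse (∑ i, χ i • B i) (∑ i, χ i • B i v)‖ := by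
        have happly := congr($(Ring.inverse_mul_cancel _ (hunit χ hχ)) v)
        simp only [mul_apply_eq_comp, one_apply_eq_self, _root_.sum_apply, _root_.smul_apply]
          at happly
        rw [happly]
    _ ≤ K * ‖∑ i, χ i • B i v‖ := le_of_opNorm_le _ (hK χ (by simpa using hχ)) _

theorem exists_coercive_of_isUnit (hB : ∀ χ : κ → ℝ, χ ≠ 0 → IsUnit (∑ i, χ i • B i)) :
    ∃ c : ℝ, 0 < c ∧ c ≤ 1 ∧
      ∀ (χ : κ → ℝ) (v : X), c * (∑ i, χ i ^ 2) * ‖v‖ ^ 2 ≤ ‖∑ i, χ i • B i v‖ ^ 2 := by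
  obtain ⟨K, hK⟩ := exists_norm_le_mul_norm_of_isUnit hB
  have hK0 : 0 < max K 1 := one_pos.trans_le (le_max_right K 1)
  refine ⟨((max K 1) ^ 2)⁻¹, by positivity,
    inv_le_one_of_one_le₀ (one_le_pow₀ (le_max_right K 1)), fun χ v => ?_⟩
  have hχ : ∑ i, χ i ^ 2 = ‖WithLp.toLp 2 χ‖ ^ 2 := by simp [EuclideanSpace.norm_sq_eq]
  rw [hχ, mul_assoc, inv_mul_le_iff₀ (by positivity), ← mul_pow, ← mul_pow]
  refine pow_le_pow_left₀ (by positivity) ?_ 2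
  obtain h0 | h0 := eq_or_ne (WithLp.toLp 2 χ) 0
  · simp [h0]
  have hne : ‖WithLp.toLp 2 χ‖ ≠ 0 := norm_ne_zero_iff.2 h0
  have hunit := hK (‖WithLp.toLp 2 χ‖⁻¹ • WithLp.toLp 2 χ) (norm_smul_inv_norm h0) v
  calc ‖WithLp.toLp 2 χ‖ * ‖v‖
      ≤ ‖WithLp.toLp 2 χ‖ * (max K 1 * (‖WithLp.toLp 2 χ‖⁻¹ * ‖∑ i, χ i • B i v‖)) := by
        gcongr
        refine hunit.trans (mul_le_mul (le_max_left K 1) (le_of_eq ?_) (norm_nonneg _) hK0.le)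
        simp only [PiLp.smul_apply, smul_eq_mul, mul_smul, ← Finset.smul_sum, norm_smul, norm_inv,
          norm_norm]
    _ = max K 1 * ‖∑ i, χ i • B i v‖ := by rw [mul_left_comm, mul_inv_cancel_left₀ hne]

end Coercive

section OscillatorOp

variable {R X κ : Type*} [Ring R] [StarRing R] [Algebra ℝ R] [NormedAddCommGroup X]
  [InnerProductSpace ℝ X] [CompleteSpace X] [Fintype κ]

/-- The Dirac operator `∑ i, B_i (b_i + b_iᴴ) + e_i (b_i - b_iᴴ)` of a family `b` of oscillator
modes. -/
def oscillatorOp (B e b : κ → R) : R :=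
  ∑ i, (B i * (b i + star (b i)) + e i * (b i - star (b i)))

variable [DecidableEq κ]

/-- Oscillator modes commuting with the coefficients of a Clifford symbol; the canonical
commutation relation of a mode with its own adjoint is not imposed. -/
structure CommutingModes (B e b : κ → R) : Prop extends CliffordSymbol B e where
  commute : ∀ i j, Commute (b i) (b j)
  commute_star : ∀ i j, i ≠ j → Commute (b i) (star (b j))
  commute_selfAdjoint : ∀ i j, Commute (b i) (B j)
  commute_skew : ∀ i j, Commute (b i) (e j)

namespace CommutingModes

section Ring

variable {B e b : κ → R}

theorem star_commute_selfAdjoint (h : CommutingModes B e b) (i j : κ) :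
    Commute (star (b i)) (B j) := by
  simpa only [(h.isSelfAdjoint j).star_eq] using (h.commute_selfAdjoint i j).star_star

theorem star_commute_skew (h : CommutingModes B e b) (i j : κ) : Commute (star (b i)) (e j) := by
  simpa only [h.star_skew, Commute.neg_right_iff] using (h.commute_skew i j).star_star

theorem commute_add_star (h : CommutingModes B e b) (i j : κ) :
    Commute (b i + star (b i)) (b j + star (b j)) := by
  obtain rfl | hij := eq_or_ne i j
  · exact .refl _
  · exact ((h.commute i j).add_right (h.commute_star i j hij)).add_left
      (((h.commute_star j i hij.symm).symm).add_right (h.commute i j).star_star)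

theorem commute_sub_star (h : CommutingModes B e b) (i j : κ) :
    Commute (b i - star (b i)) (b j - star (b j)) := by
  obtain rfl | hij := eq_or_ne i j
  · exact .refl _
  · exact ((h.commute i j).sub_right (h.commute_star i j hij)).sub_left
      (((h.commute_star j i hij.symm).symm).sub_right (h.commute i j).star_star)

theorem commutator_add_star_sub_star (h : CommutingModes B e b) (i j : κ) :
    (b i + star (b i)) * (b j - star (b j)) - (b j - star (b j)) * (b i + star (b i)) =
      if i = j then -2 * (b i * star (b i) - star (b i) * b i) else 0 := by
  split_ifs with hij
  · subst hij
    noncomm_ring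
  · have hbb := (h.commute i j).eq
    have hbs := (h.commute_star i j hij).eq
    have hsb := (h.commute_star j i (Ne.symm hij)).eq
    have hss := (h.commute i j).star_star.eq
    calc _ = (b i * b j - b j * b i) - (b i * star (b j) - star (b j) * b i) -
          (b j * star (b i) - star (b i) * b j) -
          (star (b i) * star (b j) - star (b j) * star (b i)) := by noncomm_ring
      _ = 0 := by rw [hbb, hbs, hsb, hss]; simp

theorem oscillatorOp_mul_self (h : CommutingModes B e b) [IsAddTorsionFree R] :
    oscillatorOp B e b * oscillatorOp B e b =
      (∑ i, B i * (b i + star (b i))) * (∑ i, B i * (b i + star (b i))) -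
        ∑ i, (b i - star (b i)) * (b i - star (b i)) +
        ∑ i, B i * e i * (-2 * (b i * star (b i) - star (b i) * b i)) :=
  sum_add_mul_self_of_clifford h.clifford h.anticomm h.commute_sub_star
    (fun i j => (h.commute_skew i j).add_left (h.star_commute_skew i j))
    (fun i j => (h.commute_skew i j).sub_left (h.star_commute_skew i j))
    (fun i j => (h.commute_selfAdjoint i j).sub_left (h.star_commute_selfAdjoint i j))
    h.commutator_add_star_sub_star

theorem isSelfAdjoint_sum_mul_add_star (h : CommutingModes B e b) :
    IsSelfAdjoint (∑ i, B i * (b i + star (b i))) :=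
  isSelfAdjoint_sum _ fun i _ => by
    rw [isSelfAdjoint_iff, star_mul, (h.isSelfAdjoint i).star_eq, star_add, star_star,
      add_comm (star (b i)),
      ((h.commute_selfAdjoint i i).add_left (h.star_commute_selfAdjoint i i)).eq]

theorem isSelfAdjoint_oscillatorOp (h : CommutingModes B e b) :
    IsSelfAdjoint (oscillatorOp B e b) := by
  rw [oscillatorOp, Finset.sum_add_distrib]
  refine h.isSelfAdjoint_sum_mul_add_star.add (isSelfAdjoint_sum _ fun i _ => ?_)
  rw [isSelfAdjoint_iff, star_mul, h.star_skew, star_sub, star_star, mul_neg, ← neg_mul, neg_sub,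
    ((h.commute_skew i i).sub_left (h.star_commute_skew i i)).eq]

theorem oscillatorOp_eq_sum (h : CommutingModes B e b) : oscillatorOp B e b =
    ∑ i, ((B i + e i) * b i + star (B i + e i) * star (b i)) := by
  refine Finset.sum_congr rfl fun i _ => ?_
  rw [h.star_coeff]
  noncomm_ring

end Ring

section Hilbert

variable {B e b : κ → X →L[ℝ] X}

theorem norm_sq_oscillatorOp_apply (h : CommutingModes B e b) {u : X}
    (hccr : ∀ i, (b i * star (b i) - star (b i) * b i) u = u) :
    ‖oscillatorOp B e b u‖ ^ 2 = ‖∑ i, B i ((b i + star (b i)) u)‖ ^ 2 +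
      ∑ i, ‖(b i - star (b i)) u‖ ^ 2 - 2 * inner ℝ u ((∑ i, B i * e i) u) := by
  have : IsAddTorsionFree (X →L[ℝ] X) := .of_isTorsionFree ℝ _
  have hnorm {T : X →L[ℝ] X} (hT : IsSelfAdjoint T) : ‖T u‖ ^ 2 = inner ℝ u ((T * T) u) := by
    rw [← real_inner_self_eq_norm_sq, mul_apply_eq_comp]
    exact hT.isSymmetric u (T u)
  have hskew (i : κ) : ‖(b i - star (b i)) u‖ ^ 2 =
      -inner ℝ u (((b i - star (b i)) * (b i - star (b i))) u) := by
    rw [← real_inner_self_eq_norm_sq, ← adjoint_inner_right, ← star_eq_adjoint, star_sub,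
      star_star, mul_apply_eq_comp, ← inner_neg_right, ← _root_.neg_apply, neg_sub]
  have hcomm (i : κ) : (B i * e i * (-2 * (b i * star (b i) - star (b i) * b i))) u =
      (-2 : ℝ) • (B i * e i) u := by
    rw [mul_apply_eq_comp, neg_mul, two_mul, _root_.neg_apply, _root_.add_apply, hccr, map_neg,
      map_add, neg_smul, two_smul]
  have hpos : ∑ i, B i ((b i + star (b i)) u) = (∑ i, B i * (b i + star (b i))) u := by
    simp only [_root_.sum_apply, mul_apply_eq_comp]
  rw [hpos, hnorm h.isSelfAdjoint_sum_mul_add_star, hnorm h.isSelfAdjoint_oscillatorOp,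
    h.oscillatorOp_mul_self, Finset.sum_congr rfl fun i _ => hskew i, _root_.add_apply,
    _root_.sub_apply, inner_add_right, inner_sub_right]
  simp only [_root_.sum_apply, hcomm, inner_sum, inner_smul_right, Finset.sum_neg_distrib,
    ← Finset.mul_sum]
  ring

theorem two_mul_sum_norm_sq_le (h : CommutingModes B e b) {c : ℝ} (hc1 : c ≤ 1)
    (hB : ∀ (χ : κ → ℝ) v, c * (∑ i, χ i ^ 2) * ‖v‖ ^ 2 ≤ ‖∑ i, χ i • B i v‖ ^ 2)
    {E : Submodule ℝ X} [FiniteDimensional ℝ E] (hE : ∀ i, ∀ u ∈ E, (b i + star (b i)) u ∈ E)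
    {u : X} (hu : u ∈ E) (hccr : ∀ i, (b i * star (b i) - star (b i) * b i) u = u) :
    2 * c * ∑ i, (‖b i u‖ ^ 2 + ‖star (b i) u‖ ^ 2) ≤
      ‖oscillatorOp B e b u‖ ^ 2 + 2 * ‖∑ i, B i * e i‖ * ‖u‖ ^ 2 := by
  have hposition : c * ∑ i, ‖(b i + star (b i)) u‖ ^ 2 ≤ ‖∑ i, B i ((b i + star (b i)) u)‖ ^ 2 :=
    mul_sum_norm_sq_le_of_commute
      (x := fun i => (b i + star (b i) : X →L[ℝ] X)) (B := fun i => B i)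
      (fun i => (IsSelfAdjoint.add_star_self (b i)).isSymmetric)
      (fun i j => LinearMap.ext fun v => congr($(h.commute_add_star i j) v))
      (fun i j => LinearMap.ext fun v =>
        congr($((h.commute_selfAdjoint i j).add_left (h.star_commute_selfAdjoint i j)) v))
      hB hE hu
  have hmomentum : c * ∑ i, ‖(b i - star (b i)) u‖ ^ 2 ≤ ∑ i, ‖(b i - star (b i)) u‖ ^ 2 :=
    mul_le_of_le_one_left (by positivity) hc1
  have hparallelogram : 2 * ∑ i, (‖b i u‖ ^ 2 + ‖star (b i) u‖ ^ 2) =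
      ∑ i, ‖(b i + star (b i)) u‖ ^ 2 + ∑ i, ‖(b i - star (b i)) u‖ ^ 2 := by
    rw [← Finset.sum_add_distrib, Finset.mul_sum]
    refine Finset.sum_congr rfl fun i _ => ?_
    simpa only [sq, _root_.add_apply, _root_.sub_apply] using
      (parallelogram_law_with_norm ℝ (b i u) (star (b i) u)).symm
  have hcross : inner ℝ u ((∑ i, B i * e i) u) ≤ ‖∑ i, B i * e i‖ * ‖u‖ ^ 2 :=
    calc inner ℝ u ((∑ i, B i * e i) u) ≤ ‖u‖ * (‖∑ i, B i * e i‖ * ‖u‖) :=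
          (real_inner_le_norm _ _).trans (by gcongr; exact le_opNorm _ _)
      _ = ‖∑ i, B i * e i‖ * ‖u‖ ^ 2 := by ring
  rw [h.norm_sq_oscillatorOp_apply hccr]
  linear_combination hposition + hmomentum + 2 * hcross + c * hparallelogram

end Hilbert

end CommutingModes

end OscillatorOp

section Fredholm

theorem mul_norm_le_norm_apply_of_finite {ι W Y : Type*} [NormedAddCommGroup W]
    [InnerProductSpace ℝ W] [NormedAddCommGroup Y] [NormedSpace ℝ Y] {T : EllTwo ι W →L[ℝ] Y}
    {s : Set ι} {c : ℝ}
    (h : ∀ t : Finset ι, ∀ w ∈ supportedOn W (s ∩ t), c * ‖w‖ ≤ ‖T w‖)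
    {u : EllTwo ι W} (hu : u ∈ supportedOn W s) : c * ‖u‖ ≤ ‖T u‖ := by
  classical
  have hlim : Filter.Tendsto (fun t : Finset ι => ∑ i ∈ t, lp.single 2 i (coord i u))
      Filter.atTop (nhds u) := lp.hasSum_single (by norm_num) u
  refine le_of_tendsto_of_tendsto' (hlim.norm.const_mul c)
    ((T.continuous.tendsto u).comp hlim).norm fun t => h t _ fun i hi => ?_
  simp only [map_sum, coord_single, Finset.sum_ite_eq, ite_eq_right_iff]
  exact fun hit => hu i fun his => hi ⟨his, hit⟩

variable {κ W : Type*} [Fintype κ] [DecidableEq κ] [NormedAddCommGroup W] [InnerProductSpace ℝ W]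
  [CompleteSpace W] {B e : κ → W →L[ℝ] W}

namespace CliffordSymbol

theorem commutingModes_truncLower (h : CliffordSymbol B e) (d : ℕ) :
    CommutingModes (pointwise (κ → ℕ) W ∘ B) (pointwise (κ → ℕ) W ∘ e) (truncLower W d) where
  toCliffordSymbol := h.map _
  commute := commute_truncLower d
  commute_star _ _ := commute_truncLower_star d
  commute_selfAdjoint _ _ := commute_weightedComp_pointwise _ _ _
  commute_skew _ _ := commute_weightedComp_pointwise _ _ _

theorem oscillatorOp_sub_diracOp (h : CliffordSymbol B e) {d : ℕ} {w : Fock κ W}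
    (hw : w ∈ supportedOn W {α | ∀ i, α i < d}) :
    oscillatorOp (pointwise (κ → ℕ) W ∘ B) (pointwise (κ → ℕ) W ∘ e) (truncLower W d)
        (invSqrtDegree κ W w) - diracOp (fun i => B i + e i) w =
      ∑ i, pointwise _ W (B i + e i)
        (truncLower W d i (invSqrtDegree κ W w) - normShift W i w) := by
  rw [(h.commutingModes_truncLower d).oscillatorOp_eq_sum, diracOp, _root_.sum_apply,
    _root_.sum_apply, ← Finset.sum_sub_distrib]
  refine Finset.sum_congr rfl fun i _ => ?_
  have hcomm : star (normShift W i) * pointwise _ W (star (B i + e i)) =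
      pointwise _ W (star (B i + e i)) * star (normShift W i) :=
    commute_star_weightedComp_pointwise _ _ _
  rw [hcomm, Function.comp_apply, Function.comp_apply, ← map_add, ← map_star]
  simp only [_root_.add_apply, mul_apply_eq_comp, star_truncLower_invSqrtDegree i hw, map_sub]
  abel

theorem norm_oscillatorOp_sub_diracOp_le (h : CliffordSymbol B e) {d m : ℕ} (hm : 0 < m)
    {w : Fock κ W} (hwd : w ∈ supportedOn W {α | ∀ i, α i < d})
    (hwm : w ∈ supportedOn W {α | m ≤ degree α}) :
    ‖oscillatorOp (pointwise (κ → ℕ) W ∘ B) (pointwise (κ → ℕ) W ∘ e) (truncLower W d)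
        (invSqrtDegree κ W w) - diracOp (fun i => B i + e i) w‖ ≤
      (∑ i, ‖pointwise (κ → ℕ) W (B i + e i)‖) * ((m : ℝ)⁻¹ * ‖w‖) := by
  rw [h.oscillatorOp_sub_diracOp hwd, Finset.sum_mul]
  exact norm_sum_le_of_le _ fun i _ => le_opNorm_of_le _
    (norm_truncLower_invSqrtDegree_sub_normShift_le i hm hwd hwm)

theorem mul_norm_sq_le_norm_sq_oscillatorOp [FiniteDimensional ℝ W] [Nonempty κ]
    (h : CliffordSymbol B e) {c : ℝ} (hc0 : 0 ≤ c) (hc1 : c ≤ 1)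
    (hB : ∀ (χ : κ → ℝ) (v : Fock κ W),
      c * (∑ i, χ i ^ 2) * ‖v‖ ^ 2 ≤ ‖∑ i, χ i • (pointwise (κ → ℕ) W ∘ B) i v‖ ^ 2)
    {d m : ℕ} (hm : 0 < m)
    (hmc : 2 * ‖∑ i, pointwise (κ → ℕ) W (B i) * pointwise (κ → ℕ) W (e i)‖ ≤ c * m)
    {w : Fock κ W} (hwd : w ∈ supportedOn W {α | ∀ i, α i < d})
    (hwm : w ∈ supportedOn W {α | m ≤ degree α}) :
    c * ‖w‖ ^ 2 ≤ ‖oscillatorOp (pointwise (κ → ℕ) W ∘ B) (pointwise (κ → ℕ) W ∘ e)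
      (truncLower W d) (invSqrtDegree κ W w)‖ ^ 2 := by
  have := finiteDimensional_supportedOn (W := W) (Set.finite_Iic fun _ : κ => d)
  have hbox : {α : κ → ℕ | ∀ i, α i < d} ⊆ Set.Iic fun _ => d := fun _ hα i => (hα i).le
  have hu : invSqrtDegree κ W w ∈ supportedOn W {α | ∀ i, α i < d} :=
    weightedComp_refl_mem_supportedOn _ hwd
  have hoscillator := (h.commutingModes_truncLower d).two_mul_sum_norm_sq_le hc1 hB
    (fun i _ => truncLower_add_star_mem_supportedOn i)
    (supportedOn_mono hbox hu)
    (fun i => truncLower_ccr (supportedOn_mono (Set.ofPred_subset_ofPred.2 fun _ hα => hα i) hu))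
  have hlower : ‖w‖ ^ 2 ≤ ∑ i, (‖truncLower W d i (invSqrtDegree κ W w)‖ ^ 2 +
      ‖star (truncLower W d i) (invSqrtDegree κ W w)‖ ^ 2) := by
    refine (norm_sq_le_sum_norm_sq_star_normShift w).trans (Finset.sum_le_sum fun i _ => ?_)
    rw [star_truncLower_invSqrtDegree i hwd]
    exact le_add_of_nonneg_left (sq_nonneg _)
  have herror : 2 * ‖∑ i, pointwise (κ → ℕ) W (B i) * pointwise (κ → ℕ) W (e i)‖ *
      ‖invSqrtDegree κ W w‖ ^ 2 ≤ c * ‖w‖ ^ 2 :=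
    calc _ ≤ c * m * (‖w‖ ^ 2 / m) :=
          mul_le_mul hmc (norm_sq_invSqrtDegree_le hm hwm) (sq_nonneg _) (by positivity)
      _ = c * ‖w‖ ^ 2 := by field_simp
  simp only [Function.comp_apply] at hoscillator
  linear_combination hoscillator + 2 * c * hlower + herror

theorem exists_mul_norm_le_norm_diracOp [FiniteDimensional ℝ W] [Nonempty κ]
    (h : CliffordSymbol B e) : ∃ m : ℕ, ∃ c : ℝ, 0 < c ∧ ∀ (d : ℕ) (w : Fock κ W),
      w ∈ supportedOn W {α | ∀ i, α i < d} → w ∈ supportedOn W {α | m ≤ degree α} →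
      c * ‖w‖ ≤ ‖diracOp (fun i => B i + e i) w‖ := by
  obtain ⟨c, hc0, hc1, hB⟩ := exists_coercive_of_isUnit (h.map (pointwise (κ → ℕ) W)).isUnit
  set A := ‖∑ i, pointwise (κ → ℕ) W (B i) * pointwise (κ → ℕ) W (e i)‖
  set A' := ∑ i, ‖pointwise (κ → ℕ) W (B i + e i)‖
  obtain ⟨m, hm⟩ := exists_nat_ge (max 1 (max (2 * A / c) (2 * A' / √c)))
  simp only [max_le_iff, div_le_iff₀ hc0, div_le_iff₀ (Real.sqrt_pos.2 hc0)] at hm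
  obtain ⟨hm1, hmc, hmc'⟩ := hm
  have hm0 : 0 < m := by exact_mod_cast hm1
  refine ⟨m, √c / 2, by positivity, fun d w hwd hwm => ?_⟩
  have hosc : √c * ‖w‖ ≤ ‖oscillatorOp (pointwise (κ → ℕ) W ∘ B) (pointwise (κ → ℕ) W ∘ e)
      (truncLower W d) (invSqrtDegree κ W w)‖ := by
    refine le_of_sq_le_sq ?_ (norm_nonneg _)
    rw [mul_pow, Real.sq_sqrt hc0.le]
    exact h.mul_norm_sq_le_norm_sq_oscillatorOp hc0.le hc1 hB hm0 (by linarith) hwd hwm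
  have hdiff : ‖oscillatorOp (pointwise (κ → ℕ) W ∘ B) (pointwise (κ → ℕ) W ∘ e)
      (truncLower W d) (invSqrtDegree κ W w) - diracOp (fun i => B i + e i) w‖ ≤ √c / 2 * ‖w‖ :=
    calc _ ≤ A' * ((m : ℝ)⁻¹ * ‖w‖) := h.norm_oscillatorOp_sub_diracOp_le hm0 hwd hwm
      _ ≤ (√c * m / 2) * ((m : ℝ)⁻¹ * ‖w‖) := by gcongr; linarith
      _ = √c / 2 * ‖w‖ := by field_simp
  linarith [norm_sub_norm_le (oscillatorOp (pointwise (κ → ℕ) W ∘ B) (pointwise (κ → ℕ) W ∘ e)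
    (truncLower W d) (invSqrtDegree κ W w)) (diracOp (fun i => B i + e i) w)]

theorem essBoundedBelow_diracOp [FiniteDimensional ℝ W] [Nonempty κ] (h : CliffordSymbol B e) :
    EssBoundedBelow (diracOp fun i => B i + e i) := by
  obtain ⟨m, c, hc, hm⟩ := h.exists_mul_norm_le_norm_diracOp
  refine ⟨supportedOn W (Set.Iic fun _ => m), finiteDimensional_supportedOn (Set.finite_Iic _), c,
    hc, fun u hu => ?_⟩
  refine mul_norm_le_norm_apply_of_finite (fun t w hw => ?_)
    (mem_supportedOn_compl_of_mem_orthogonal hu)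
  refine hm (t.sup degree + 1) w (supportedOn_mono (fun α hα i => ?_) hw)
    (supportedOn_mono (fun α hα => ?_) hw)
  · exact Nat.lt_succ_of_le ((apply_le_degree i α).trans (Finset.le_sup (f := degree) hα.2))
  · obtain ⟨i, hi⟩ : ∃ i, m < α i := by simpa [Pi.le_def] using hα.1
    exact hi.le.trans (apply_le_degree i α)

end CliffordSymbol

end Fredholm

/-! ### The index of the supersymmetric oscillator -/

section Fermionic

variable {R R' κ : Type*} [Ring R] [Ring R']

theorem sum_mul_self_eq_zero_of_anticomm [Fintype κ] [IsAddTorsionFree R] {e y : κ → R}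
    (hee : ∀ i j, e i * e j + e j * e i = 0) (hyy : ∀ i j, Commute (y i) (y j))
    (hye : ∀ i j, Commute (y i) (e j)) : (∑ i, e i * y i) * ∑ i, e i * y i = 0 := by
  classical
  refine nsmul_right_injective two_ne_zero ?_
  change 2 • _ = 2 • _
  rw [two_nsmul_sum_mul_self_of_anticomm (q := 0) (by simpa using hee) hyy hye]
  simp

variable [DecidableEq κ]

/-- The anticommutation relations of fermionic annihilation operators `M_i / 2` and creation
operators `N_i / 2`. -/
structure Fermionic (M N : κ → R) : Prop where
  anticomm : ∀ i j, M i * M j + M j * M i = 0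
  anticomm_dual : ∀ i j, N i * N j + N j * N i = 0
  car : ∀ i j, M i * N j + N j * M i = if i = j then 4 else 0

/-- The commutation relations of bosonic annihilation operators `a` and creation operators `c`. -/
structure Bosonic (a c : κ → R) : Prop where
  commute : ∀ i j, Commute (a i) (a j)
  commute_dual : ∀ i j, Commute (c i) (c j)
  ccr : ∀ i j, a i * c j = c j * a i + if i = j then 1 else 0

variable {M N a c : κ → R}

theorem Fermionic.map (h : Fermionic M N) (φ : R →+* R') : Fermionic (φ ∘ M) (φ ∘ N) where
  anticomm i j := by simp only [Function.comp_apply, ← map_mul, ← map_add, h.anticomm, map_zero]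
  anticomm_dual i j := by
    simp only [Function.comp_apply, ← map_mul, ← map_add, h.anticomm_dual, map_zero]
  car i j := by
    simp only [Function.comp_apply, ← map_mul, ← map_add, h.car, apply_ite φ, map_zero, map_ofNat]

theorem Fermionic.sum_mul_self [Fintype κ] [IsAddTorsionFree R] (hMN : Fermionic M N)
    (hac : Bosonic a c) (haM : ∀ i j, Commute (a i) (M j)) (haN : ∀ i j, Commute (a i) (N j))
    (hcM : ∀ i j, Commute (c i) (M j)) (hcN : ∀ i j, Commute (c i) (N j)) :
    (∑ i, (M i * a i + N i * c i)) * (∑ i, (M i * a i + N i * c i)) =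
      ∑ i, (4 * (c i * a i) + M i * N i) := by
  have hcross (i j : κ) : M i * a i * (N j * c j) + N j * c j * (M i * a i) =
      if i = j then 4 * (c i * a i) + M i * N i else 0 :=
    calc _ = M i * (a i * N j) * c j + N j * (c j * M i) * a i := by noncomm_ring
      _ = M i * N j * (a i * c j) + N j * M i * (c j * a i) := by
          rw [(haN i j).eq, (hcM j i).eq]
          noncomm_ring
      _ = (M i * N j + N j * M i) * (c j * a i) + M i * N j * (if i = j then 1 else 0) := by
          rw [hac.ccr]
          noncomm_ring
      _ = _ := by
          rw [hMN.car]
          split_ifs with h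
          · subst h
            rw [mul_one]
          · simp
  rw [Finset.sum_add_distrib, add_mul, mul_add, mul_add,
    sum_mul_self_eq_zero_of_anticomm hMN.anticomm hac.commute haM,
    sum_mul_self_eq_zero_of_anticomm hMN.anticomm_dual hac.commute_dual hcN,
    zero_add, add_zero, Finset.sum_mul_sum, Finset.sum_mul_sum,
    Finset.sum_comm (f := fun i j => N i * c i * (M j * a j))]
  simp only [← Finset.sum_add_distrib, hcross, Finset.sum_ite_eq, Finset.mem_univ, if_true]

end Fermionic

section FermionicVacuum

variable {k V κ : Type*} [Field k] [AddCommGroup V] [Module k V] [FiniteDimensional k V]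

theorem finrank_inf_ker_mul_two {a b : End k V} (hbb : b * b = 0) (hab : a * b + b * a = 1)
    {K : Submodule k V} (ha : ∀ x ∈ K, a x ∈ K) (hb : ∀ x ∈ K, b x ∈ K) :
    finrank k (K ⊓ LinearMap.ker b : Submodule k V) * 2 = finrank k K := by
  have hker : LinearMap.ker (b.restrict hb) = (LinearMap.ker b).comap K.subtype := by
    ext x
    simp [LinearMap.restrict_apply]
  have hrange : LinearMap.range (b.restrict hb) = LinearMap.ker (b.restrict hb) := by
    rw [hker]
    ext x
    constructor
    · rintro ⟨y, rfl⟩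
      exact congr($hbb y)
    · intro (hx : b x = 0)
      refine ⟨⟨a x, ha x x.2⟩, Subtype.ext ?_⟩
      simpa [hx] using congr($hab x)
  have hrank := LinearMap.finrank_range_add_finrank_ker (b.restrict hb)
  rw [hrange, hker, ← Submodule.finrank_map_subtype_eq, Submodule.map_comap_subtype] at hrank
  rw [mul_two, hrank]

theorem finrank_iInf_ker_mul_two_pow [DecidableEq κ] {a b : κ → End k V}
    (hsq : ∀ i, b i * b i = 0) (hbb : ∀ i j, b i * b j + b j * b i = 0)
    (hab : ∀ i j, a i * b j + b j * a i = if i = j then 1 else 0) (s : Finset κ) :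
    finrank k (⨅ i ∈ s, LinearMap.ker (b i) : Submodule k V) * 2 ^ s.card = finrank k V := by
  induction s using Finset.induction_on with
  | empty =>
    have htop : (⨅ i ∈ (∅ : Finset κ), LinearMap.ker (b i)) = ⊤ := by simp
    rw [htop, finrank_top, Finset.card_empty, pow_zero, mul_one]
  | insert j s hj ih =>
    have hmem (x : V) : x ∈ ⨅ i ∈ s, LinearMap.ker (b i) ↔ ∀ i ∈ s, b i x = 0 := by simp
    have hb : ∀ x ∈ ⨅ i ∈ s, LinearMap.ker (b i), b j x ∈ ⨅ i ∈ s, LinearMap.ker (b i) := by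
      simp only [hmem]
      intro x hx i hi
      simpa [hx i hi] using congr($(hbb i j) x)
    have ha : ∀ x ∈ ⨅ i ∈ s, LinearMap.ker (b i), a j x ∈ ⨅ i ∈ s, LinearMap.ker (b i) := by
      simp only [hmem]
      intro x hx i hi
      have hji : j ≠ i := fun h => hj (h ▸ hi)
      simpa [hx i hi, hji] using congr($(hab j i) x)
    rw [Finset.iInf_insert, inf_comm, Finset.card_insert_of_notMem hj, pow_succ', ← mul_assoc,
      finrank_inf_ker_mul_two (hsq j) (by simpa using hab j j) ha hb, ih]

end FermionicVacuum

section FormalOscillator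

variable {κ W : Type*} [NormedAddCommGroup W] [InnerProductSpace ℝ W]

variable (κ W) in
/-- The action of an operator on `W` on formal Fock vectors, which need not be
square-summable. -/
def formalPointwise : (W →L[ℝ] W) →+* End ℝ ((κ → ℕ) → W) where
  toFun m := (m : W →ₗ[ℝ] W).compLeft _
  map_one' := rfl
  map_mul' _ _ := rfl
  map_zero' := rfl
  map_add' _ _ := rfl

theorem formalPointwise_apply (m : W →L[ℝ] W) (v : (κ → ℕ) → W) (α : κ → ℕ) :
    formalPointwise κ W m v α = m (v α) :=
  rfl

variable [DecidableEq κ]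

variable (W) in
/-- The annihilation operator of the `i`-th mode on formal Fock vectors. -/
noncomputable def formalLower (i : κ) : End ℝ ((κ → ℕ) → W) where
  toFun v α := √(α i + 1) • v (raise i α)
  map_add' u v := by ext α; simp
  map_smul' r v := by ext α; simp [smul_comm r]

variable (W) in
/-- The creation operator of the `i`-th mode on formal Fock vectors. -/
noncomputable def formalRaise (i : κ) : End ℝ ((κ → ℕ) → W) where
  toFun v α := √(α i) • v (lower i α)
  map_add' u v := by ext α; simp
  map_smul' r v := by ext α; simp [smul_comm r]

theorem formalLower_apply (i : κ) (v : (κ → ℕ) → W) (α : κ → ℕ) :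
    formalLower W i v α = √(α i + 1) • v (raise i α) :=
  rfl

theorem formalRaise_apply (i : κ) (v : (κ → ℕ) → W) (α : κ → ℕ) :
    formalRaise W i v α = √(α i) • v (lower i α) :=
  rfl

theorem formalRaise_mul_formalLower_apply (i : κ) (v : (κ → ℕ) → W) (α : κ → ℕ) :
    (formalRaise W i * formalLower W i) v α = (α i : ℝ) • v α := by
  rw [End.mul_apply, formalRaise_apply, formalLower_apply, smul_smul]
  by_cases h : α i = 0
  · simp [h]
  · have hpred : ((α i - 1 : ℕ) : ℝ) + 1 = α i := by
      exact_mod_cast Nat.succ_pred_eq_of_ne_zero h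
    rw [raise_lower h, lower_apply_self, hpred, Real.mul_self_sqrt (by positivity)]

theorem bosonic_formal : Bosonic (formalLower (κ := κ) W) (formalRaise W) where
  commute i j := by
    obtain rfl | h := eq_or_ne i j
    · exact .refl _
    ext1 v
    ext1 α
    simp only [End.mul_apply, formalLower_apply, smul_smul, raise_apply_of_ne h,
      raise_apply_of_ne h.symm, raise_raise i j, mul_comm]
  commute_dual i j := by
    obtain rfl | h := eq_or_ne i j
    · exact .refl _
    ext1 v
    ext1 α
    simp only [End.mul_apply, formalRaise_apply, smul_smul, lower_apply_of_ne h,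
      lower_apply_of_ne h.symm, lower_lower i j, mul_comm]
  ccr i j := by
    ext1 v
    ext1 α
    split_ifs with h
    · subst h
      rw [LinearMap.add_apply, Pi.add_apply, formalRaise_mul_formalLower_apply]
      simp only [End.mul_apply, End.one_apply, formalLower_apply, formalRaise_apply, smul_smul,
        lower_raise, raise_apply_self, Nat.cast_add, Nat.cast_one]
      rw [Real.mul_self_sqrt (by positivity), add_smul, one_smul]
    · simp only [add_zero, End.mul_apply, formalLower_apply, formalRaise_apply, smul_smul,
        lower_apply_of_ne h, raise_apply_of_ne (Ne.symm h), raise_lower_comm h, mul_comm]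

variable [Fintype κ]

/-- The Dirac operator `∑ i, M_i b_i + N_i b_iᴴ` on formal Fock vectors, where the `b_i` are
the (unbounded) annihilation operators. -/
noncomputable def formalDirac (M N : κ → W →L[ℝ] W) : End ℝ ((κ → ℕ) → W) :=
  ∑ i, (formalPointwise κ W (M i) * formalLower W i + formalPointwise κ W (N i) * formalRaise W i)

theorem formalDirac_apply (M N : κ → W →L[ℝ] W) (v : (κ → ℕ) → W) (α : κ → ℕ) :
    formalDirac M N v α =
      ∑ i, (√(α i + 1) • M i (v (raise i α)) + √(α i) • N i (v (lower i α))) := by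
  simp only [formalDirac, LinearMap.sum_apply, Finset.sum_apply, LinearMap.add_apply, Pi.add_apply,
    End.mul_apply, formalPointwise_apply, formalLower_apply, formalRaise_apply, map_smul]

theorem Fermionic.formalDirac_formalDirac_apply {M N : κ → W →L[ℝ] W} (h : Fermionic M N)
    (v : (κ → ℕ) → W) (α : κ → ℕ) :
    formalDirac M N (formalDirac M N v) α =
      (4 * degree α : ℝ) • v α + ∑ i, M i (N i (v α)) := by
  have : IsAddTorsionFree (End ℝ ((κ → ℕ) → W)) := .of_isTorsionFree ℝ _
  have hlower (i : κ) (m : W →L[ℝ] W) : Commute (formalLower W i) (formalPointwise κ W m) := by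
    ext1 v
    ext1 α
    simp [formalPointwise_apply, formalLower_apply]
  have hraise (i : κ) (m : W →L[ℝ] W) : Commute (formalRaise W i) (formalPointwise κ W m) := by
    ext1 v
    ext1 α
    simp [formalPointwise_apply, formalRaise_apply]
  have hsq := (h.map (formalPointwise κ W)).sum_mul_self bosonic_formal (fun i _ => hlower i _)
    (fun i _ => hlower i _) (fun i _ => hraise i _) (fun i _ => hraise i _)
  calc formalDirac M N (formalDirac M N v) α =
        (∑ i, (4 * (formalRaise W i * formalLower W i) +
          formalPointwise κ W (M i) * formalPointwise κ W (N i))) v α := congr($hsq v α)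
    _ = ∑ i, ((4 * α i : ℝ) • v α + M i (N i (v α))) := by
        simp only [LinearMap.sum_apply, Finset.sum_apply, LinearMap.add_apply, Pi.add_apply]
        refine Finset.sum_congr rfl fun i _ => congrArg₂ _ ?_ rfl
        rw [mul_smul, ← formalRaise_mul_formalLower_apply, ofNat_smul_eq_nsmul,
          ← Pi.smul_apply, ← LinearMap.smul_apply, nsmul_eq_mul, Nat.cast_ofNat]
    _ = (4 * degree α : ℝ) • v α + ∑ i, M i (N i (v α)) := by
        rw [Finset.sum_add_distrib, ← Finset.sum_smul, ← Finset.mul_sum, degree, Nat.cast_sum]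

end FormalOscillator

section FermionicIndex

/-- Weights with `g (n + 1) * √(n + 1) * g n = 1`; rescaling by them turns the normalised
annihilation operators into the unbounded ones. -/
noncomputable def fockWeight : ℕ → ℝ
  | 0 => 1
  | n + 1 => (fockWeight n * √(n + 1))⁻¹

theorem fockWeight_pos : ∀ n, 0 < fockWeight n
  | 0 => one_pos
  | n + 1 => by
    have := fockWeight_pos n
    rw [fockWeight]
    positivity

variable {κ W : Type*} [Fintype κ] [DecidableEq κ] [NormedAddCommGroup W] [InnerProductSpace ℝ W]

theorem sqrt_mul_fockWeight_degree_raise (i : κ) (α : κ → ℕ) :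
    √(α i + 1) * fockWeight (degree (raise i α)) =
      (fockWeight (degree α))⁻¹ * shiftWeight i α := by
  rw [degree_raise, fockWeight, shiftWeight, Real.sqrt_div (by positivity), mul_inv]
  ring

theorem sqrt_mul_fockWeight_degree_lower (i : κ) (α : κ → ℕ) :
    √(α i) * fockWeight (degree (lower i α)) =
      (fockWeight (degree α))⁻¹ * coshiftWeight i α := by
  rw [coshiftWeight, Real.sqrt_div (by positivity)]
  by_cases hi : α i = 0
  · simp [hi]
  · have hdegree : degree α = degree (lower i α) + 1 := (degree_lower_add_one hi).symm
    have := fockWeight_pos (degree (lower i α))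
    rw [hdegree, fockWeight, inv_inv]
    push_cast
    field_simp

variable [CompleteSpace W]

theorem formalDirac_fockWeight_smul (M : κ → W →L[ℝ] W) (u : Fock κ W) :
    formalDirac M (star M) (fun α => fockWeight (degree α) • coord α u) =
      fun α => (fockWeight (degree α))⁻¹ • coord α (diracOp M u) := by
  ext1 α
  simp only [formalDirac_apply, coord_diracOp, Finset.smul_sum, smul_add, smul_smul, map_smul,
    Pi.star_apply, sqrt_mul_fockWeight_degree_raise, sqrt_mul_fockWeight_degree_lower]

namespace Fermionic

variable {M : κ → W →L[ℝ] W}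

theorem degree_mul_norm_sq_add_sum_eq_zero (h : Fermionic M (star M)) {u : Fock κ W}
    (hu : diracOp M u = 0) (α : κ → ℕ) :
    4 * degree α * ‖coord α u‖ ^ 2 + ∑ i, ‖star (M i) (coord α u)‖ ^ 2 = 0 := by
  have hsq := h.formalDirac_formalDirac_apply (fun α => fockWeight (degree α) • coord α u) α
  have hzero : (fun α : κ → ℕ => (fockWeight (degree α))⁻¹ • coord α (diracOp M u)) = 0 := by
    ext1 α
    simp [hu]
  rw [formalDirac_fockWeight_smul, hzero, map_zero, Pi.zero_apply] at hsq
  simp only [map_smul, ← Finset.smul_sum, Pi.star_apply] at hsq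
  rw [smul_comm, ← smul_add, eq_comm, smul_eq_zero_iff_right (fockWeight_pos _).ne'] at hsq
  have hinner := congrArg (inner ℝ (coord α u)) hsq
  rw [inner_add_right, inner_smul_right, inner_sum, real_inner_self_eq_norm_sq,
    inner_zero_right] at hinner
  rw [← hinner]
  refine congrArg₂ _ rfl (Finset.sum_congr rfl fun i _ => ?_)
  rw [star_eq_adjoint, ← adjoint_inner_left, real_inner_self_eq_norm_sq]

theorem diracOp_eq_zero_iff (h : Fermionic M (star M)) {u : Fock κ W} :
    diracOp M u = 0 ↔ u ∈ supportedOn W {0} ∧ ∀ i, star (M i) (coord 0 u) = 0 := by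
  constructor
  · intro hu
    have hterms (α : κ → ℕ) := (add_eq_zero_iff_of_nonneg (by positivity) (by positivity)).1
      (h.degree_mul_norm_sq_add_sum_eq_zero hu α)
    refine ⟨fun α hα => ?_, fun i => ?_⟩
    · have hdegree : degree α ≠ 0 := fun h0 =>
        hα (funext fun i => Nat.le_zero.1 (h0 ▸ apply_le_degree i α))
      simpa [hdegree] using (hterms α).1
    · have hsummand := (Finset.sum_eq_zero_iff_of_nonneg fun i _ => sq_nonneg _).1 (hterms 0).2 i
      simpa using hsummand (Finset.mem_univ i)
  · rintro ⟨hu, hvac⟩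
    refine ext_coord fun α => ?_
    rw [coord_diracOp, map_zero]
    refine Finset.sum_eq_zero fun i _ => ?_
    have hraise : coord (raise i α) u = 0 := hu _ fun h0 => by
      simpa [raise_apply_self] using congrFun (h0 : raise i α = 0) i
    rw [hraise, map_zero, smul_zero, zero_add]
    by_cases hlower : lower i α = 0
    · rw [hlower, hvac, smul_zero]
    · rw [hu _ hlower, map_zero, smul_zero]

theorem gradedKer_neg_one_eq_bot (h : Fermionic M (star M)) :
    gradedKer (diracOp M) (parity κ W) (-1) = ⊥ := by
  rw [eq_bot_iff]
  intro u hu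
  obtain ⟨hker, hodd⟩ := mem_gradedKer.1 hu
  obtain ⟨hsupp, -⟩ := h.diracOp_eq_zero_iff.1 hker
  refine ext_coord fun α => ?_
  rw [map_zero]
  by_cases hα : α = 0
  · subst hα
    have hneg : coord 0 u = -coord 0 u := by
      simpa [coord_parity, degree] using congrArg (coord 0) hodd
    have : IsAddTorsionFree W := .of_isTorsionFree ℝ W
    exact self_eq_neg.1 hneg
  · exact hsupp α hα

theorem gradedKer_one_eq_map_single (h : Fermionic M (star M)) :
    gradedKer (diracOp M) (parity κ W) 1 =
      (⨅ i ∈ Finset.univ, (star (M i)).ker).map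
        (lp.lsingle (𝕜 := ℝ) (E := fun _ : κ → ℕ => W) 2 0) := by
  ext u
  rw [mem_gradedKer, h.diracOp_eq_zero_iff, Submodule.mem_map]
  constructor
  · rintro ⟨⟨hsupp, hvac⟩, -⟩
    refine ⟨coord 0 u, by simpa using hvac, ext_coord fun α => ?_⟩
    rw [lp.lsingle_apply, coord_single]
    split_ifs with hα
    · rw [hα]
    · rw [hsupp α hα]
  · rintro ⟨x, hx, rfl⟩
    refine ⟨⟨fun α hα => ?_, fun i => ?_⟩, ext_coord fun α => ?_⟩
    · rw [lp.lsingle_apply, coord_single, if_neg (Set.mem_singleton_iff.not.1 hα)]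
    · rw [lp.lsingle_apply, coord_single, if_pos rfl]
      simpa using (Submodule.mem_iInf _).1 hx i
    · rw [one_smul, coord_parity, lp.lsingle_apply, coord_single]
      split_ifs with hα
      · simp [hα, degree]
      · rw [smul_zero]

theorem gradedIndex_diracOp_mul_two_pow (h : Fermionic M (star M)) [FiniteDimensional ℝ W] :
    gradedIndex (diracOp M) (parity κ W) * 2 ^ Fintype.card κ = finrank ℝ W := by
  have : IsAddTorsionFree (End ℝ W) := .of_isTorsionFree ℝ _
  have hinj : Function.Injective (lp.lsingle (𝕜 := ℝ) (E := fun _ : κ → ℕ => W) 2 0) :=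
    fun x y hxy => by simpa [coord_single] using congrArg (coord 0) hxy
  have hvacuum := finrank_iInf_ker_mul_two_pow (κ := κ)
    (a := fun i => (4 : ℝ)⁻¹ • (M i).toLinearMap) (b := fun i => (star (M i)).toLinearMap)
    (fun i => self_eq_neg.1 (eq_neg_of_add_eq_zero_left
      (congrArg toLinearMap (h.anticomm_dual i i))))
    (fun i j => congrArg toLinearMap (h.anticomm_dual i j))
    (fun i j => by
      rw [smul_mul_assoc, mul_smul_comm, ← smul_add]
      refine (congrArg ((4 : ℝ)⁻¹ • ·) (congrArg toLinearMap (h.car i j))).trans ?_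
      split_ifs
      · ext x
        simp [← Nat.cast_smul_eq_nsmul ℝ, smul_smul]
      · simp) Finset.univ
  rw [gradedIndex, h.gradedKer_neg_one_eq_bot, h.gradedKer_one_eq_map_single, finrank_bot,
    ← (Submodule.equivMapOfInjective _ hinj _).finrank_eq, ← hvacuum, Finset.card_univ]
  push_cast
  ring

end Fermionic

end FermionicIndex

section Multiplicity

variable {F X X' : Type*} [NormedAddCommGroup X] [InnerProductSpace ℝ X] [NormedAddCommGroup X']
  [InnerProductSpace ℝ X'] {S P : X →L[ℝ] X} {S' P' : X' →L[ℝ] X'}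

theorem mem_gradedKer_of_pi (Φ : X' ≃ₗ[ℝ] (F → X)) {η : F → ℝ} (hη : ∀ f, η f ≠ 0)
    (hS : ∀ u f, Φ (S' u) f = η f • S (Φ u f)) (hP : ∀ u f, Φ (P' u) f = P (Φ u f)) {ε : ℝ}
    {u : X'} : u ∈ gradedKer S' P' ε ↔ ∀ f, Φ u f ∈ gradedKer S P ε := by
  simp only [mem_gradedKer, ← Φ.injective.eq_iff (a := S' u), ← Φ.injective.eq_iff (a := P' u),
    funext_iff, hS, hP, map_zero, map_smul, Pi.zero_apply, Pi.smul_apply, smul_eq_zero, hη,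
    false_or, forall_and]

variable [Fintype F]

theorem finrank_gradedKer_of_pi (Φ : X' ≃ₗ[ℝ] (F → X)) {η : F → ℝ} (hη : ∀ f, η f ≠ 0)
    (hS : ∀ u f, Φ (S' u) f = η f • S (Φ u f)) (hP : ∀ u f, Φ (P' u) f = P (Φ u f))
    (hF : EssBoundedBelow S) (ε : ℝ) :
    finrank ℝ (gradedKer S' P' ε) = Fintype.card F * finrank ℝ (gradedKer S P ε) := by
  have := hF.finiteDimensional_gradedKer (P := P) ε
  have hmem (u : X') := mem_gradedKer_of_pi Φ hη hS hP (ε := ε) (u := u)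
  let Ψ : gradedKer S' P' ε ≃ₗ[ℝ] (F → gradedKer S P ε) :=
    { toFun := fun u f => ⟨Φ u f, (hmem u).1 u.2 f⟩
      invFun := fun v => ⟨Φ.symm fun f => v f, (hmem _).2 fun f => by simp⟩
      left_inv := fun u => by simp
      right_inv := fun v => by simp
      map_add' := fun u v => by ext; simp
      map_smul' := fun r u => by ext; simp }
  simp [Ψ.finrank_eq, finrank_pi_fintype]

theorem gradedIndex_of_pi (Φ : X' ≃ₗ[ℝ] (F → X)) {η : F → ℝ} (hη : ∀ f, η f ≠ 0)
    (hS : ∀ u f, Φ (S' u) f = η f • S (Φ u f)) (hP : ∀ u f, Φ (P' u) f = P (Φ u f))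
    (hF : EssBoundedBelow S) : gradedIndex S' P' = Fintype.card F * gradedIndex S P := by
  simp only [gradedIndex, finrank_gradedKer_of_pi Φ hη hS hP hF]
  push_cast
  ring

end Multiplicity

section Amplify

variable {ι F W W' : Type*} [NormedAddCommGroup W] [InnerProductSpace ℝ W] [NormedAddCommGroup W']
  [InnerProductSpace ℝ W']

variable (ι) in
/-- A decomposition of the coefficient space as a finite product decomposes the square-summable
families. -/
noncomputable def amplifyPi [Fintype F] [DecidableEq F] (Φ : W' ≃L[ℝ] (F → W)) :
    EllTwo ι W' ≃ₗ[ℝ] (F → EllTwo ι W) where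
  toFun u f := amplify ι (proj (R := ℝ) (φ := fun _ => W) f ∘L (Φ : W' →L[ℝ] (F → W))) u
  invFun v := ∑ f, amplify ι (Φ.symm ∘L single ℝ (fun _ => W) f) (v f)
  map_add' u v := by ext1; simp
  map_smul' r u := by ext1; simp
  left_inv u := ext_coord fun i => by
    rw [map_sum]
    simp [← map_sum Φ.symm, Finset.univ_sum_single]
  right_inv v := funext fun f => ext_coord fun i => by
    rw [coord_amplify, map_sum (coord i)]
    simp [← map_sum Φ.symm, Finset.univ_sum_single]

@[simp]
theorem coord_amplifyPi [Fintype F] [DecidableEq F] (Φ : W' ≃L[ℝ] (F → W)) (u : EllTwo ι W')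
    (f : F) (i : ι) : coord i (amplifyPi ι Φ u f) = Φ (coord i u) f :=
  rfl

variable {κ : Type*} [Fintype κ]

theorem amplifyPi_parity [Fintype F] [DecidableEq F] (Φ : W' ≃L[ℝ] (F → W)) (u : Fock κ W')
    (f : F) : amplifyPi _ Φ (parity κ W' u) f = parity κ W (amplifyPi _ Φ u f) :=
  ext_coord fun α => by simp

variable [DecidableEq κ] [CompleteSpace W]

theorem diracOp_add_smul (M N : κ → W →L[ℝ] W) (t : ℝ) :
    (diracOp fun i => M i + t • N i) = diracOp M + t • diracOp N := by
  simp only [diracOp, map_add, map_smul, star_add, star_smul, star_trivial, add_mul, mul_add,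
    smul_mul_assoc, mul_smul_comm, ← Finset.sum_add_distrib, Finset.smul_sum, smul_add]
  exact Finset.sum_congr rfl fun i _ => by abel

variable [CompleteSpace W']

theorem amplifyPi_diracOp [Fintype F] [DecidableEq F] (Φ : W' ≃L[ℝ] (F → W)) {η : F → ℝ}
    {M : κ → W →L[ℝ] W} {M' : κ → W' →L[ℝ] W'} (hM : ∀ i y f, Φ (M' i y) f = η f • M i (Φ y f))
    (hM' : ∀ i y f, Φ (star (M' i) y) f = η f • star (M i) (Φ y f)) (u : Fock κ W') (f : F) :
    amplifyPi _ Φ (diracOp M' u) f = η f • diracOp M (amplifyPi _ Φ u f) := by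
  refine ext_coord fun α => ?_
  simp only [coord_amplifyPi, coord_diracOp, map_smul, map_sum, map_add, Finset.sum_apply,
    Pi.add_apply, Pi.smul_apply, hM, hM', Finset.smul_sum, smul_add, smul_comm (η f)]

theorem gradedIndex_diracOp_of_pi [Fintype F] (Φ : W' ≃L[ℝ] (F → W)) {η : F → ℝ}
    (hη : ∀ f, η f ≠ 0) {M : κ → W →L[ℝ] W} {M' : κ → W' →L[ℝ] W'}
    (hM : ∀ i y f, Φ (M' i y) f = η f • M i (Φ y f))
    (hM' : ∀ i y f, Φ (star (M' i) y) f = η f • star (M i) (Φ y f))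
    (hF : EssBoundedBelow (diracOp M)) : gradedIndex (diracOp M') (parity κ W') =
      Fintype.card F * gradedIndex (diracOp M) (parity κ W) := by
  classical
  exact gradedIndex_of_pi (amplifyPi _ Φ) hη (amplifyPi_diracOp Φ hM hM') (amplifyPi_parity Φ) hF

end Amplify

/-! ### Reduction to the oscillator -/

section Kronecker

variable {α l m n p : Type*}

theorem neg_kronecker [Ring α] (A : Matrix l m α) (B : Matrix n p α) : (-A) ⊗ₖ B = -(A ⊗ₖ B) := by
  ext
  simp

theorem kronecker_neg [Ring α] (A : Matrix l m α) (B : Matrix n p α) : A ⊗ₖ (-B) = -(A ⊗ₖ B) := by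
  ext
  simp

theorem star_kronecker [CommSemiring α] [StarRing α] (A : Matrix l l α) (B : Matrix n n α) :
    star (A ⊗ₖ B) = star A ⊗ₖ star B :=
  conjTranspose_kronecker A B

theorem sum_kronecker {ι : Type*} [CommSemiring α] (s : Finset ι) (A : ι → Matrix l m α)
    (B : Matrix n p α) : (∑ i ∈ s, A i) ⊗ₖ B = ∑ i ∈ s, A i ⊗ₖ B :=
  map_sum ((kroneckerBilinear (R := α)).flip B) A s

theorem kronecker_sum {ι : Type*} [CommSemiring α] (s : Finset ι) (A : Matrix l m α)
    (B : ι → Matrix n p α) : A ⊗ₖ (∑ i ∈ s, B i) = ∑ i ∈ s, A ⊗ₖ B i :=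
  map_sum (kroneckerBilinear (R := α) A) B s

theorem two_kronecker_one [CommSemiring α] [DecidableEq l] [DecidableEq n] :
    (2 : Matrix l l α) ⊗ₖ (1 : Matrix n n α) = 2 := by
  rw [← one_add_one_eq_two, add_kronecker, one_kronecker_one, one_add_one_eq_two]

theorem one_kronecker_two [CommSemiring α] [DecidableEq l] [DecidableEq n] :
    (1 : Matrix l l α) ⊗ₖ (2 : Matrix n n α) = 2 := by
  rw [← one_add_one_eq_two, kronecker_add, one_kronecker_one, one_add_one_eq_two]

end Kronecker

section Pauli

/-- The first Pauli matrix, over `ℝ`. -/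
def pauliX : Matrix (Fin 2) (Fin 2) ℝ := !![0, 1; 1, 0]

/-- The third Pauli matrix, over `ℝ`. -/
def pauliZ : Matrix (Fin 2) (Fin 2) ℝ := !![1, 0; 0, -1]

theorem isSelfAdjoint_pauliX : IsSelfAdjoint pauliX := by
  ext i j
  fin_cases i <;> fin_cases j <;> simp [pauliX]

theorem pauliX_mul_self : pauliX * pauliX = 1 := by
  simp [pauliX, one_fin_two]

theorem pauliZ_mul_pauliX : pauliZ * pauliX = -(pauliX * pauliZ) := by
  simp [pauliX, pauliZ]

theorem diagonal_one_neg_one : diagonal ![1, -1] = pauliZ := by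
  ext i j
  fin_cases i <;> fin_cases j <;> simp [pauliZ]

end Pauli

section DiagonalGraded

variable {R F κ : Type*} [DecidableEq F] {h : F → ℝ}

theorem isSelfAdjoint_diagonal (h : F → ℝ) : IsSelfAdjoint (diagonal h) := by
  simp [isSelfAdjoint_iff, star_eq_conjTranspose]

variable [Fintype F] [DecidableEq κ] {c : κ → Matrix F F ℝ}

/-- Real symmetric anticommuting involutions `c i`, graded by the diagonal matrix of signs `h`. -/
structure DiagonalGraded (h : F → ℝ) (c : κ → Matrix F F ℝ) : Prop where
  mul_self : ∀ f, h f * h f = 1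
  isSelfAdjoint : ∀ i, IsSelfAdjoint (c i)
  clifford : ∀ i j, c i * c j + c j * c i = if i = j then 2 else 0
  anticomm : ∀ i, diagonal h * c i = -(c i * diagonal h)

theorem DiagonalGraded.diagonal_mul_self (D : DiagonalGraded h c) :
    diagonal h * diagonal h = 1 := by
  simp [diagonal_mul_diagonal, D.mul_self]

theorem DiagonalGraded.cons {k : ℕ} {c : Fin k → Matrix F F ℝ} (D : DiagonalGraded h c) :
    DiagonalGraded (fun f : F × Fin 2 => h f.1 * ![1, -1] f.2)
      (Fin.cons (diagonal h ⊗ₖ pauliX) fun i => c i ⊗ₖ (1 : Matrix (Fin 2) (Fin 2) ℝ)) where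
  mul_self f := by
    have hsign : ∀ b : Fin 2, (![1, -1] b : ℝ) * ![1, -1] b = 1 := by simp [Fin.forall_fin_two]
    rw [mul_mul_mul_comm, D.mul_self, hsign, one_mul]
  isSelfAdjoint i := by
    cases i using Fin.cases with
    | zero => rw [Fin.cons_zero, isSelfAdjoint_iff, star_kronecker,
        (isSelfAdjoint_diagonal h).star_eq, isSelfAdjoint_pauliX.star_eq]
    | succ i => rw [Fin.cons_succ, isSelfAdjoint_iff, star_kronecker,
        (D.isSelfAdjoint i).star_eq, star_one]
  clifford i j := by
    cases i using Fin.cases <;> cases j using Fin.cases <;>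
      simp only [Fin.cons_zero, Fin.cons_succ, ← mul_kronecker_mul, D.diagonal_mul_self,
        pauliX_mul_self, D.anticomm, neg_kronecker, one_mul, mul_one, one_kronecker_one,
        neg_add_cancel, add_neg_cancel, one_add_one_eq_two, ← add_kronecker, D.clifford,
        Fin.succ_inj, Fin.succ_ne_zero, (Fin.succ_ne_zero _).symm, if_true, if_false]
    split_ifs
    · exact two_kronecker_one
    · rw [zero_kronecker]
  anticomm i := by
    rw [← diagonal_kronecker_diagonal, diagonal_one_neg_one]
    cases i using Fin.cases with
    | zero => rw [Fin.cons_zero, ← mul_kronecker_mul, ← mul_kronecker_mul, pauliZ_mul_pauliX,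
        kronecker_neg]
    | succ i => rw [Fin.cons_succ, ← mul_kronecker_mul, ← mul_kronecker_mul, D.anticomm,
        neg_kronecker, mul_one, one_mul]

theorem exists_diagonalGraded_fin (k : ℕ) :
    ∃ (F : Type) (_ : Fintype F) (_ : DecidableEq F) (_ : Nonempty F) (h : F → ℝ)
      (c : Fin k → Matrix F F ℝ), DiagonalGraded h c := by
  induction k with
  | zero =>
    exact ⟨Unit, inferInstance, inferInstance, inferInstance, 1, Fin.elim0, fun _ => one_mul 1,
      Fin.rec0, Fin.rec0, Fin.rec0⟩
  | succ k ih =>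
    obtain ⟨F, _, _, _, h, c, D⟩ := ih
    exact ⟨F × Fin 2, inferInstance, inferInstance, inferInstance, _, _, D.cons⟩

theorem exists_diagonalGraded (κ : Type*) [Finite κ] [DecidableEq κ] :
    ∃ (F : Type) (_ : Fintype F) (_ : DecidableEq F) (_ : Nonempty F) (h : F → ℝ)
      (c : κ → Matrix F F ℝ), DiagonalGraded h c := by
  obtain ⟨F, hF, hF', hne, h, c, D⟩ := exists_diagonalGraded_fin (Nat.card κ)
  exact ⟨F, hF, hF', hne, h, c ∘ Finite.equivFin κ, D.mul_self, fun i => D.isSelfAdjoint _,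
    fun i j => by simp [D.clifford], fun i => D.anticomm _⟩

variable [Ring R] [Algebra ℝ R] [Fintype κ]

theorem sum_smul_mul_self_of_clifford {c : κ → R}
    (hc : ∀ i j, c i * c j + c j * c i = if i = j then 2 else 0) (χ : κ → ℝ) :
    (∑ i, χ i • c i) * ∑ i, χ i • c i = (∑ i, χ i ^ 2) • (1 : R) := by
  have := IsAddTorsionFree.of_isTorsionFree ℝ R
  refine nsmul_right_injective two_ne_zero ?_
  have hcomm (i : κ) (a : R) : Commute (algebraMap ℝ R (χ i)) a := Algebra.commutes _ _
  have hsum : ∑ i, χ i • c i = ∑ i, c i * algebraMap ℝ R (χ i) := by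
    simp only [Algebra.smul_def, (hcomm _ _).eq]
  change 2 • _ = 2 • _
  rw [hsum, two_nsmul_sum_mul_self_of_anticomm hc (fun i j => hcomm i _) fun i j => hcomm i _,
    ← Finset.mul_sum, ← Algebra.algebraMap_eq_smul_one, map_sum, nsmul_eq_mul, Nat.cast_ofNat]
  simp only [← map_mul, sq]

end DiagonalGraded

section Fermionic

variable {R κ : Type*} [Ring R] [DecidableEq κ] {c e : κ → R}

theorem Fermionic.of_clifford (hcc : ∀ i j, c i * c j + c j * c i = if i = j then 2 else 0)
    (hee : ∀ i j, e i * e j + e j * e i = if i = j then -2 else 0)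
    (hce : ∀ i j, e j * c i = -(c i * e j)) :
    Fermionic (fun i => c i + e i) fun i => c i - e i where
  anticomm i j := by
    calc (c i + e i) * (c j + e j) + (c j + e j) * (c i + e i)
        = (c i * c j + c j * c i) + (e i * e j + e j * e i) := by
          simp only [add_mul, mul_add, hce]
          abel
      _ = 0 := by rw [hcc, hee]; split_ifs <;> simp
  anticomm_dual i j := by
    calc (c i - e i) * (c j - e j) + (c j - e j) * (c i - e i)
        = (c i * c j + c j * c i) + (e i * e j + e j * e i) := by
          simp only [sub_mul, mul_sub, hce]
          abel
      _ = 0 := by rw [hcc, hee]; split_ifs <;> simp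
  car i j := by
    calc (c i + e i) * (c j - e j) + (c j - e j) * (c i + e i)
        = (c i * c j + c j * c i) - (e i * e j + e j * e i) := by
          simp only [add_mul, mul_add, sub_mul, mul_sub, hce]
          abel
      _ = if i = j then 4 else 0 := by rw [hcc, hee]; split_ifs <;> norm_num

end Fermionic

section Homotopy

variable {κ w F : Type*} [DecidableEq κ] [Fintype w] [DecidableEq w] [Fintype F] [DecidableEq F]
  {B e : κ → Matrix w w ℝ} {h : F → ℝ} {c : κ → Matrix F F ℝ}

theorem SkewClifford.kronecker (he : SkewClifford e) {U : Matrix F F ℝ} (hU : IsSelfAdjoint U)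
    (hUU : U * U = 1) : SkewClifford fun i => e i ⊗ₖ U where
  star_skew i := by rw [star_kronecker, he.star_skew, hU.star_eq, neg_kronecker]
  clifford i j := by
    rw [← mul_kronecker_mul, ← mul_kronecker_mul, ← add_kronecker, he.clifford, hUU]
    split_ifs
    · rw [neg_kronecker, two_kronecker_one]
    · rw [zero_kronecker]

theorem isUnit_smul_mul_self_add_smul_one {A : Matrix w w ℝ} (hA : IsSelfAdjoint A)
    (hu : IsUnit A) {a s : ℝ} (ha : 0 ≤ a) (hs : 0 ≤ s) (has : 0 < a + s) :
    IsUnit (a • (A * A) + s • (1 : Matrix w w ℝ)) := by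
  obtain rfl | hs := hs.eq_or_lt
  · have ha : a ≠ 0 := by linarith
    simpa using (hu.mul hu).smul (Units.mk0 a ha)
  · have hpos : (Aᴴ * A).PosSemidef := posSemidef_conjTranspose_mul_self A
    rw [← star_eq_conjTranspose, hA.star_eq] at hpos
    exact (PosDef.posSemidef_add (hpos.smul ha) (PosDef.one.smul hs)).isUnit

theorem isUnit_smul_kronecker_add_smul_kronecker {A : Matrix w w ℝ} (hA : IsSelfAdjoint A)
    (hu : IsUnit A) {G C : Matrix F F ℝ} (hG : G * G = 1) {r : ℝ} (hr : 0 < r) (hC : C * C = r • 1)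
    (hGC : G * C = -(C * G)) {a t : ℝ} (hat : a ≠ 0 ∨ t ≠ 0) :
    IsUnit (a • (A ⊗ₖ G) + t • ((1 : Matrix w w ℝ) ⊗ₖ C)) := by
  have hsq : (a • (A ⊗ₖ G) + t • ((1 : Matrix w w ℝ) ⊗ₖ C)) ^ 2 =
      (a ^ 2 • (A * A) + (t ^ 2 * r) • 1) ⊗ₖ (1 : Matrix F F ℝ) := by
    simp only [pow_two, mul_add, add_mul, smul_mul_smul_comm, ← mul_kronecker_mul, hG, hC, hGC,
      one_mul, mul_one, kronecker_neg, add_kronecker, smul_kronecker, kronecker_smul, smul_smul,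
      smul_neg, mul_comm t a]
    abel
  rw [← isUnit_pow_iff two_ne_zero, hsq]
  refine (isUnit_smul_mul_self_add_smul_one hA hu (by positivity) (by positivity) ?_).kronecker
    isUnit_one
  rcases hat with ha | ht <;> positivity

variable [Fintype κ]

theorem CliffordSymbol.homotopy (H : CliffordSymbol B e) (D : DiagonalGraded h c) (t : ℝ) :
    CliffordSymbol (fun i => (1 - t) • (B i ⊗ₖ diagonal h) + t • ((1 : Matrix w w ℝ) ⊗ₖ c i))
      fun i => e i ⊗ₖ diagonal h where
  toSkewClifford := H.toSkewClifford.kronecker (isSelfAdjoint_diagonal h) D.diagonal_mul_self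
  isSelfAdjoint i := by
    simp only [isSelfAdjoint_iff, star_add, star_smul, star_trivial, star_kronecker, star_one,
      (H.isSelfAdjoint i).star_eq, (D.isSelfAdjoint i).star_eq, (isSelfAdjoint_diagonal h).star_eq]
  anticomm i j := by
    simp only [mul_add, add_mul, mul_smul_comm, smul_mul_assoc, ← mul_kronecker_mul, H.anticomm,
      D.anticomm, neg_kronecker, kronecker_neg, mul_one, one_mul, smul_neg, neg_add]
  isUnit χ hχ := by
    have hsum : ∑ i, χ i • ((1 - t) • (B i ⊗ₖ diagonal h) + t • ((1 : Matrix w w ℝ) ⊗ₖ c i)) =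
        (1 - t) • ((∑ i, χ i • B i) ⊗ₖ diagonal h) +
          t • ((1 : Matrix w w ℝ) ⊗ₖ ∑ i, χ i • c i) := by
      simp only [sum_kronecker, kronecker_sum, smul_kronecker, kronecker_smul, Finset.smul_sum,
        ← Finset.sum_add_distrib, smul_add, smul_comm (χ _)]
    have hselfAdjoint : IsSelfAdjoint (∑ i, χ i • B i) :=
      isSelfAdjoint_sum _ fun i _ => (IsSelfAdjoint.all (χ i)).smul (H.isSelfAdjoint i)
    have hanticomm : diagonal h * ∑ i, χ i • c i = -((∑ i, χ i • c i) * diagonal h) := by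
      simp only [Finset.mul_sum, Finset.sum_mul, mul_smul_comm, smul_mul_assoc, D.anticomm,
        smul_neg, Finset.sum_neg_distrib]
    have hpos : 0 < ∑ i, χ i ^ 2 := by
      obtain ⟨i, hi⟩ := Function.ne_iff.1 hχ
      exact Finset.sum_pos' (fun i _ => sq_nonneg _) ⟨i, Finset.mem_univ i, sq_pos_of_ne_zero hi⟩
    rw [hsum]
    refine isUnit_smul_kronecker_add_smul_kronecker hselfAdjoint (H.isUnit χ hχ)
      D.diagonal_mul_self hpos (sum_smul_mul_self_of_clifford D.clifford χ) hanticomm ?_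
    by_contra! hzero
    linarith

end Homotopy

section MatrixIndex

variable {κ w F : Type*} [Fintype w]

variable (w F) in
/-- The vectors indexed by `w × F` as `F`-tuples of vectors indexed by `w`. -/
noncomputable def slices [Fintype F] : EuclideanSpace ℝ (w × F) ≃L[ℝ] (F → EuclideanSpace ℝ w) :=
  LinearEquiv.toContinuousLinearEquiv
    { toFun := fun y f => WithLp.toLp 2 fun a => y (a, f)
      invFun := fun v => WithLp.toLp 2 fun x => v x.2 x.1
      map_add' := fun _ _ => rfl
      map_smul' := fun _ _ => rfl
      left_inv := fun _ => rfl
      right_inv := fun _ => rfl }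

variable [Fintype F] [DecidableEq w] [DecidableEq F]

theorem slices_kronecker_diagonal (M : Matrix w w ℝ) (h : F → ℝ) (y : EuclideanSpace ℝ (w × F))
    (f : F) : slices w F (toEuclideanCLM (𝕜 := ℝ) (M ⊗ₖ diagonal h) y) f =
      h f • toEuclideanCLM (𝕜 := ℝ) M (slices w F y f) := by
  ext a
  change ((M ⊗ₖ diagonal h) *ᵥ y.ofLp) (a, f) = h f * (M *ᵥ fun b => y (b, f)) a
  simp only [mulVec, dotProduct, Fintype.sum_prod_type, kroneckerMap_apply, diagonal_apply,
    mul_ite, ite_mul, mul_zero, zero_mul, Finset.sum_ite_eq, Finset.mem_univ, if_true,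
    Finset.mul_sum]
  exact Finset.sum_congr rfl fun b _ => by ring

variable [Fintype κ] [DecidableEq κ] {B e : κ → Matrix w w ℝ} {h : F → ℝ} {c : κ → Matrix F F ℝ}

theorem CliffordSymbol.essBoundedBelow_matrix [Nonempty κ] (H : CliffordSymbol B e) :
    EssBoundedBelow (diracOp fun i => toEuclideanCLM (𝕜 := ℝ) (B i + e i)) := by
  have hsymbol := H.map (StarAlgHomClass.toStarAlgHom (toEuclideanCLM (𝕜 := ℝ) (n := w)))
  simpa using hsymbol.essBoundedBelow_diracOp

/-- The operators of the homotopy from `(B + e) ⊗ h` to `1 ⊗ c + e ⊗ h`. -/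
noncomputable def homotopyOp (B e : κ → Matrix w w ℝ) (h : F → ℝ) (c : κ → Matrix F F ℝ) (t : ℝ) :
    Fock κ (EuclideanSpace ℝ (w × F)) →L[ℝ] Fock κ (EuclideanSpace ℝ (w × F)) :=
  diracOp fun i => toEuclideanCLM (𝕜 := ℝ)
    ((1 - t) • (B i ⊗ₖ diagonal h) + t • ((1 : Matrix w w ℝ) ⊗ₖ c i) + e i ⊗ₖ diagonal h)

theorem continuous_homotopyOp : Continuous (homotopyOp B e h c) := by
  have haffine (t : ℝ) : homotopyOp B e h c t =
      (diracOp fun i => toEuclideanCLM (𝕜 := ℝ) ((B i + e i) ⊗ₖ diagonal h)) +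
        t • diracOp fun i => toEuclideanCLM (𝕜 := ℝ) (1 ⊗ₖ c i - B i ⊗ₖ diagonal h) := by
    rw [← diracOp_add_smul, homotopyOp]
    congr! 2 with i
    rw [← map_smul, ← map_add, add_kronecker]
    congr 1
    module
  rw [funext haffine]
  fun_prop

theorem gradedIndex_homotopyOp_zero [Nonempty κ] (H : CliffordSymbol B e)
    (hh : ∀ f, h f * h f = 1) : gradedIndex (homotopyOp B e h c 0) (parity κ _) =
      Fintype.card F *
        gradedIndex (diracOp fun i => toEuclideanCLM (𝕜 := ℝ) (B i + e i)) (parity κ _) := by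
  have hne (f : F) : h f ≠ 0 := fun h0 => by simpa [h0] using hh f
  simp only [homotopyOp, sub_zero, one_smul, zero_smul, add_zero, ← add_kronecker]
  refine gradedIndex_diracOp_of_pi (slices w F) hne (fun i y f => slices_kronecker_diagonal _ h y f)
    (fun i y f => ?_) H.essBoundedBelow_matrix
  rw [← map_star, ← map_star, star_kronecker, (isSelfAdjoint_diagonal h).star_eq]
  exact slices_kronecker_diagonal _ h y f

theorem gradedIndex_homotopyOp_one (H : CliffordSymbol B e) (D : DiagonalGraded h c) :
    gradedIndex (homotopyOp B e h c 1) (parity κ _) * 2 ^ Fintype.card κ =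
      Fintype.card w * Fintype.card F := by
  have hsymbol := H.homotopy D 1
  simp only [sub_self, zero_smul, one_smul, zero_add] at hsymbol
  have hcc (i j : κ) : (1 : Matrix w w ℝ) ⊗ₖ c i * 1 ⊗ₖ c j + 1 ⊗ₖ c j * 1 ⊗ₖ c i =
      if i = j then 2 else 0 := by
    rw [← mul_kronecker_mul, ← mul_kronecker_mul, ← kronecker_add, D.clifford, one_mul]
    split_ifs
    · exact one_kronecker_two
    · exact kronecker_zero _
  have hfermionic := (Fermionic.of_clifford hcc hsymbol.clifford hsymbol.anticomm).map
    (RingHomClass.toRingHom (toEuclideanCLM (𝕜 := ℝ) (n := w × F)))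
  have hstar : (toEuclideanCLM (𝕜 := ℝ) (n := w × F) ∘
      fun i => (1 : Matrix w w ℝ) ⊗ₖ c i - e i ⊗ₖ diagonal h) =
        star fun i => toEuclideanCLM (𝕜 := ℝ) ((1 : Matrix w w ℝ) ⊗ₖ c i + e i ⊗ₖ diagonal h) :=
    funext fun i => by rw [Pi.star_apply, ← map_star, hsymbol.star_coeff, Function.comp_apply]
  have hindex := (hstar ▸ hfermionic).gradedIndex_diracOp_mul_two_pow
  simpa [homotopyOp, Function.comp_def, finrank_euclideanSpace, Fintype.card_prod] using hindex

theorem CliffordSymbol.gradedIndex_mul_two_pow [Nonempty κ] (H : CliffordSymbol B e) :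
    gradedIndex (diracOp fun i => toEuclideanCLM (𝕜 := ℝ) (B i + e i)) (parity κ _) *
      2 ^ Fintype.card κ = Fintype.card w := by
  obtain ⟨F, _, _, _, h, c, D⟩ := exists_diagonalGraded κ
  have hconst : gradedIndex (homotopyOp B e h c 0) (parity κ _) =
      gradedIndex (homotopyOp B e h c 1) (parity κ _) :=
    gradedIndex_eq_of_continuous continuous_homotopyOp (fun t => isSelfAdjoint_diracOp _)
      isSelfAdjoint_parity (fun t => parity_mul_diracOp _)
      (fun t => (H.homotopy D t).essBoundedBelow_matrix) 0 1
  have hone := gradedIndex_homotopyOp_one H D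
  rw [← hconst, gradedIndex_homotopyOp_zero H D.mul_self, mul_comm (Fintype.card w : ℤ),
    mul_assoc] at hone
  exact mul_left_cancel₀ (Nat.cast_ne_zero.2 Fintype.card_ne_zero) hone

end MatrixIndex

/-! ### Quaternionic structures -/

section QuaternionPair

open scoped Quaternion

variable {R R' : Type*} [Ring R] [Ring R'] {I J : R}

/-- Images of the quaternion units `i` and `j` under a ring homomorphism to `R`. -/
structure QuaternionPair (I J : R) : Prop where
  mul_self_left : I * I = -1
  mul_self_right : J * J = -1
  anticomm : I * J = -(J * I)

theorem QuaternionPair.map (h : QuaternionPair I J) (φ : R →+* R') :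
    QuaternionPair (φ I) (φ J) where
  mul_self_left := by rw [← map_mul, h.mul_self_left, map_neg, map_one]
  mul_self_right := by rw [← map_mul, h.mul_self_right, map_neg, map_one]
  anticomm := by rw [← map_mul, h.anticomm, map_neg, map_mul]

theorem QuaternionPair.four_dvd_finrank {V : Type*} [AddCommGroup V] [Module ℝ V] {I J : End ℝ V}
    (h : QuaternionPair I J) : 4 ∣ finrank ℝ V := by
  let basis : QuaternionAlgebra.Basis (End ℝ V) (-1 : ℝ) 0 (-1) :=
    { i := I
      j := J
      k := I * J
      i_mul_i := by simp [h.mul_self_left]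
      j_mul_j := by simp [h.mul_self_right]
      i_mul_j := rfl
      j_mul_i := by simp [h.anticomm] }
  let φ : ℍ[ℝ] →ₐ[ℝ] End ℝ V := QuaternionAlgebra.lift basis
  let _ : Module ℍ[ℝ] V := Module.compHom V φ.toRingHom
  have : IsScalarTower ℝ ℍ[ℝ] V := ⟨fun r x v => congr($(map_smul φ r x) v)⟩
  rw [← finrank_mul_finrank ℝ ℍ[ℝ] V, Quaternion.finrank_eq_four]
  exact dvd_mul_right 4 _

end QuaternionPair

section GradedKer

variable {X : Type*} [NormedAddCommGroup X] [InnerProductSpace ℝ X] {S P I J : X →L[ℝ] X}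

theorem apply_mem_gradedKer {T : X →L[ℝ] X} {r : ℝ} (hr : r ≠ 0) (hTS : T * S = r • (S * T))
    (hTP : Commute T P) {ε : ℝ} {u : X} (hu : u ∈ gradedKer S P ε) : T u ∈ gradedKer S P ε := by
  obtain ⟨hSu, hPu⟩ := mem_gradedKer.1 hu
  have hSTu : r • S (T u) = T (S u) := congr($hTS.symm u)
  have hPTu : P (T u) = T (P u) := congr($hTP.eq.symm u)
  rw [hSu, map_zero, smul_eq_zero] at hSTu
  exact mem_gradedKer.2 ⟨hSTu.resolve_left hr, by rw [hPTu, hPu, map_smul]⟩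

theorem QuaternionPair.four_dvd_gradedIndex (h : QuaternionPair I J) {r s : ℝ} (hr : r ≠ 0)
    (hs : s ≠ 0) (hIS : I * S = r • (S * I)) (hJS : J * S = s • (S * J)) (hIP : Commute I P)
    (hJP : Commute J P) : 4 ∣ gradedIndex S P := by
  have hdvd (ε : ℝ) : 4 ∣ finrank ℝ (gradedKer S P ε) := by
    have hpair : QuaternionPair (I.toLinearMap.restrict fun u => apply_mem_gradedKer hr hIS hIP)
        (J.toLinearMap.restrict fun u => apply_mem_gradedKer hs hJS hJP :
          End ℝ (gradedKer S P ε)) :=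
      { mul_self_left := LinearMap.ext fun u => Subtype.ext congr($h.mul_self_left u)
        mul_self_right := LinearMap.ext fun u => Subtype.ext congr($h.mul_self_right u)
        anticomm := LinearMap.ext fun u => Subtype.ext congr($h.anticomm u) }
    exact hpair.four_dvd_finrank
  exact dvd_sub (Int.natCast_dvd_natCast.2 (hdvd 1)) (Int.natCast_dvd_natCast.2 (hdvd (-1)))

end GradedKer

section Divisibility

variable {κ W : Type*} [Fintype κ] [NormedAddCommGroup W] [InnerProductSpace ℝ W] [CompleteSpace W]

theorem commute_pointwise_parity (m : W →L[ℝ] W) : Commute (pointwise _ W m) (parity κ W) :=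
  (commute_weightedComp_pointwise _ _ m).symm

variable [DecidableEq κ]

theorem pointwise_mul_diracOp {T : W →L[ℝ] W} {M : κ → W →L[ℝ] W} {r : ℝ}
    (hM : ∀ i, T * M i = r • (M i * T)) (hM' : ∀ i, T * star (M i) = r • (star (M i) * T)) :
    pointwise _ W T * diracOp M = r • (diracOp M * pointwise _ W T) := by
  ext1 u
  refine ext_coord fun α => ?_
  have hM (i : κ) (y : W) : T (M i y) = r • M i (T y) := congr($(hM i) y)
  have hM' (i : κ) (y : W) : T (star (M i) y) = r • star (M i) (T y) := congr($(hM' i) y)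
  simp only [mul_apply_eq_comp, _root_.smul_apply, map_smul, coord_pointwise, coord_diracOp,
    map_sum, map_add, hM, hM', Finset.smul_sum, smul_add, smul_comm r]

variable {w : Type*} [Fintype w] [DecidableEq w] {B e : κ → Matrix w w ℝ}

theorem CliffordSymbol.pointwise_mul_diracOp (H : CliffordSymbol B e) {T : Matrix w w ℝ} {r : ℝ}
    (hB : ∀ i, T * B i = r • (B i * T)) (he : ∀ i, T * e i = r • (e i * T)) :
    pointwise _ (EuclideanSpace ℝ w) (toEuclideanCLM (𝕜 := ℝ) T) *
        (diracOp fun i => toEuclideanCLM (𝕜 := ℝ) (B i + e i)) =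
      r • ((diracOp fun i => toEuclideanCLM (𝕜 := ℝ) (B i + e i)) *
        pointwise _ (EuclideanSpace ℝ w) (toEuclideanCLM (𝕜 := ℝ) T)) := by
  refine HurwitzRadon.pointwise_mul_diracOp (fun i => ?_) fun i => ?_
  · rw [← map_mul, ← map_mul, ← map_smul, mul_add, hB, he, add_mul, smul_add]
  · rw [← map_star, ← map_mul, ← map_mul, ← map_smul, H.star_coeff, mul_sub, hB, he, sub_mul,
      smul_sub]

theorem CliffordSymbol.four_mul_two_pow_dvd_card [Nonempty κ] (H : CliffordSymbol B e)
    {I J : Matrix w w ℝ} (h : QuaternionPair I J) {r s : ℝ} (hr : r ≠ 0) (hs : s ≠ 0)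
    (hIB : ∀ i, I * B i = r • (B i * I)) (hIe : ∀ i, I * e i = r • (e i * I))
    (hJB : ∀ i, J * B i = s • (B i * J)) (hJe : ∀ i, J * e i = s • (e i * J)) :
    4 * 2 ^ Fintype.card κ ∣ Fintype.card w := by
  have hpair := (h.map (RingHomClass.toRingHom (toEuclideanCLM (𝕜 := ℝ) (n := w)))).map
    (RingHomClass.toRingHom (pointwise (κ → ℕ) (EuclideanSpace ℝ w)))
  have hdvd := hpair.four_dvd_gradedIndex hr hs (H.pointwise_mul_diracOp hIB hIe)
    (H.pointwise_mul_diracOp hJB hJe) (commute_pointwise_parity _) (commute_pointwise_parity _)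
  have hindex := mul_dvd_mul_right hdvd (2 ^ Fintype.card κ)
  rw [H.gradedIndex_mul_two_pow] at hindex
  exact_mod_cast hindex

end Divisibility

/-! ### Real Clifford modules -/

section PauliRelations

/-- The second Pauli matrix divided by `i`, as a real matrix. -/
def pauliE : Matrix (Fin 2) (Fin 2) ℝ := !![0, -1; 1, 0]

theorem isSelfAdjoint_pauliZ : IsSelfAdjoint pauliZ := by
  rw [← diagonal_one_neg_one]
  exact isSelfAdjoint_diagonal _

theorem star_pauliE : star pauliE = -pauliE := by
  ext i j
  fin_cases i <;> fin_cases j <;> simp [pauliE]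

theorem pauliZ_mul_self : pauliZ * pauliZ = 1 := by
  simp [pauliZ, one_fin_two]

theorem pauliE_mul_self : pauliE * pauliE = -1 := by
  simp [pauliE, one_fin_two]

theorem pauliE_mul_pauliX : pauliE * pauliX = -(pauliX * pauliE) := by
  simp [pauliE, pauliX]

theorem pauliE_mul_pauliZ : pauliE * pauliZ = -(pauliZ * pauliE) := by
  simp [pauliE, pauliZ]

end PauliRelations

section GradedClifford

variable {R R' κ κ' : Type*} [DecidableEq κ] [DecidableEq κ'] [Ring R] [StarRing R]
  {e : κ → R} {e' : κ' → R} {σ : ℝ} {ω : R}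

theorem SkewClifford.sumElim (he : SkewClifford e) (he' : SkewClifford e')
    (hanti : ∀ i j, e i * e' j = -(e' j * e i)) : SkewClifford (Sum.elim e e') where
  star_skew := Sum.rec he.star_skew he'.star_skew
  clifford := by
    rintro (i | i) (j | j) <;> simp [he.clifford, he'.clifford, hanti]

theorem SkewClifford.of_unit (hstar : star ω = -ω) (hsq : ω * ω = -1) :
    SkewClifford fun _ : Unit => ω where
  star_skew _ := hstar
  clifford _ _ := by rw [hsq, if_pos rfl, ← neg_add, one_add_one_eq_two]

variable [Algebra ℝ R] [Ring R'] [StarRing R'] [Algebra ℝ R']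

/-- A skew-adjoint Clifford family together with a grading operator `ω` of square `σ`, self-adjoint
for `σ = 1` and skew-adjoint for `σ = -1`. -/
structure GradedClifford (σ : ℝ) (e : κ → R) (ω : R) : Prop extends SkewClifford e where
  star_grading : star ω = σ • ω
  grading_mul_self : ω * ω = σ • 1
  grading_anticomm : ∀ i, ω * e i = -(e i * ω)

theorem GradedClifford.map (h : GradedClifford σ e ω) (φ : R →⋆ₐ[ℝ] R') :
    GradedClifford σ (φ ∘ e) (φ ω) where
  toSkewClifford := h.toSkewClifford.map φ
  star_grading := by rw [← map_star, h.star_grading, map_smul]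
  grading_mul_self := by rw [← map_mul, h.grading_mul_self, map_smul, map_one]
  grading_anticomm i := by
    rw [Function.comp_apply, ← map_mul, h.grading_anticomm, map_neg, map_mul]

theorem GradedClifford.comp (h : GradedClifford σ e ω) {f : κ' → κ} (hf : f.Injective) :
    GradedClifford σ (e ∘ f) ω where
  star_skew i := h.star_skew _
  clifford i j := by simp [h.clifford, hf.eq_iff]
  star_grading := h.star_grading
  grading_mul_self := h.grading_mul_self
  grading_anticomm i := h.grading_anticomm _

theorem GradedClifford.adjoin_grading (h : GradedClifford (-1) e ω) :
    SkewClifford (Sum.elim e fun _ : Unit => ω) :=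
  h.toSkewClifford.sumElim
    (.of_unit (by simpa using h.star_grading) (by simpa using h.grading_mul_self))
    fun i _ => by rw [h.grading_anticomm, neg_neg]

end GradedClifford

section Constructions

variable {κ κ' S S' : Type*} [DecidableEq κ] [DecidableEq κ'] [Fintype S] [DecidableEq S]
  [Fintype S'] [DecidableEq S'] {e : κ → Matrix S S ℝ} {e' : κ' → Matrix S' S' ℝ} {σ : ℝ}
  {ω : Matrix S S ℝ} {ω' : Matrix S' S' ℝ}

theorem SkewClifford.one_kronecker (h : SkewClifford e') :
    SkewClifford fun i => (1 : Matrix S S ℝ) ⊗ₖ e' i where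
  star_skew i := by rw [star_kronecker, star_one, h.star_skew, kronecker_neg]
  clifford i j := by
    rw [← mul_kronecker_mul, ← mul_kronecker_mul, ← kronecker_add, h.clifford, one_mul]
    split_ifs
    · rw [kronecker_neg, one_kronecker_two]
    · rw [kronecker_zero]

theorem skewClifford_pauliE : SkewClifford fun _ : Unit => pauliE :=
  .of_unit star_pauliE pauliE_mul_self

theorem SkewClifford.double (h : SkewClifford e) :
    GradedClifford 1 (Sum.elim (fun i => e i ⊗ₖ pauliX) fun _ : Unit => 1 ⊗ₖ pauliE)
      ((1 : Matrix S S ℝ) ⊗ₖ pauliZ) where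
  toSkewClifford := (h.kronecker isSelfAdjoint_pauliX pauliX_mul_self).sumElim
    skewClifford_pauliE.one_kronecker fun i _ => by
      simp only [← mul_kronecker_mul, pauliE_mul_pauliX, kronecker_neg, one_mul, mul_one, neg_neg]
  star_grading := by rw [star_kronecker, star_one, isSelfAdjoint_pauliZ.star_eq, one_smul]
  grading_mul_self := by
    rw [← mul_kronecker_mul, one_mul, pauliZ_mul_self, one_kronecker_one, one_smul]
  grading_anticomm := by
    rintro (i | _) <;>
      simp only [Sum.elim_inl, Sum.elim_inr, ← mul_kronecker_mul, one_mul, mul_one,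
        pauliZ_mul_pauliX, pauliE_mul_pauliZ, kronecker_neg, neg_neg]

theorem SkewClifford.cross {e' : κ' → Matrix S S ℝ} (h : SkewClifford e) (h' : SkewClifford e')
    (hcomm : ∀ i j, Commute (e i) (e' j)) :
    GradedClifford (-1) (Sum.elim (fun i => e i ⊗ₖ pauliX) fun i => e' i ⊗ₖ pauliZ)
      ((1 : Matrix S S ℝ) ⊗ₖ pauliE) where
  toSkewClifford := (h.kronecker isSelfAdjoint_pauliX pauliX_mul_self).sumElim
    (h'.kronecker isSelfAdjoint_pauliZ pauliZ_mul_self) fun i j => by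
      simp only [← mul_kronecker_mul, pauliZ_mul_pauliX, kronecker_neg, (hcomm i j).eq, neg_neg]
  star_grading := by rw [star_kronecker, star_one, star_pauliE, kronecker_neg, neg_one_smul]
  grading_mul_self := by
    rw [← mul_kronecker_mul, one_mul, pauliE_mul_self, kronecker_neg, one_kronecker_one,
      neg_one_smul]
  grading_anticomm := by
    rintro (i | i) <;>
      simp only [Sum.elim_inl, Sum.elim_inr, ← mul_kronecker_mul, one_mul, mul_one,
        pauliE_mul_pauliX, pauliE_mul_pauliZ, kronecker_neg]

theorem GradedClifford.kronecker (h : GradedClifford σ e ω) (h' : GradedClifford 1 e' ω') :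
    GradedClifford σ (Sum.elim (fun i => e i ⊗ₖ ω') fun i => (1 : Matrix S S ℝ) ⊗ₖ e' i)
      (ω ⊗ₖ ω') where
  toSkewClifford := (h.toSkewClifford.kronecker (by simpa [isSelfAdjoint_iff] using h'.star_grading)
    (by simpa using h'.grading_mul_self)).sumElim h'.toSkewClifford.one_kronecker fun i j => by
      simp only [← mul_kronecker_mul, h'.grading_anticomm, kronecker_neg, one_mul, mul_one]
  star_grading := by
    rw [star_kronecker, h.star_grading, h'.star_grading, one_smul, smul_kronecker]
  grading_mul_self := by
    rw [← mul_kronecker_mul, h.grading_mul_self, h'.grading_mul_self, one_smul, smul_kronecker,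
      one_kronecker_one]
  grading_anticomm := by
    rintro (i | i) <;>
      simp only [Sum.elim_inl, Sum.elim_inr, ← mul_kronecker_mul, h.grading_anticomm,
        h'.grading_anticomm, neg_kronecker, kronecker_neg, one_mul, mul_one]

/-- `Matrix.reindexAlgEquiv` as a homomorphism of star algebras. -/
noncomputable def reindexStarAlgHom (τ : S ≃ S') : Matrix S S ℝ →⋆ₐ[ℝ] Matrix S' S' ℝ where
  toAlgHom := (reindexAlgEquiv ℝ ℝ τ).toAlgHom
  map_star' _ := rfl

theorem reindexStarAlgHom_prodComm_kronecker (A : Matrix S S ℝ) (B : Matrix S' S' ℝ) :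
    reindexStarAlgHom (Equiv.prodComm S S') (A ⊗ₖ B) = B ⊗ₖ A := by
  ext i j
  exact mul_comm _ _

/-- Left multiplication by the quaternion units on `ℍ = ℝ² ⊗ ℝ²`. -/
def leftUnits : (Unit ⊕ Unit) ⊕ Unit → Matrix (Fin 2 × Fin 2) (Fin 2 × Fin 2) ℝ :=
  Sum.elim (Sum.elim (fun _ => pauliE ⊗ₖ pauliX) fun _ => pauliE ⊗ₖ pauliZ) fun _ => 1 ⊗ₖ pauliE

/-- Right multiplication by the quaternion units, which is left multiplication with the two tensor
factors exchanged. -/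
noncomputable def rightUnits : (Unit ⊕ Unit) ⊕ Unit → Matrix (Fin 2 × Fin 2) (Fin 2 × Fin 2) ℝ :=
  reindexStarAlgHom (Equiv.prodComm _ _) ∘ leftUnits

theorem skewClifford_leftUnits : SkewClifford leftUnits :=
  (skewClifford_pauliE.cross skewClifford_pauliE fun _ _ => .refl _).adjoin_grading

theorem skewClifford_rightUnits : SkewClifford rightUnits :=
  skewClifford_leftUnits.map _

theorem commute_leftUnits_rightUnits (i j : (Unit ⊕ Unit) ⊕ Unit) :
    Commute (leftUnits i) (rightUnits j) := by
  rcases i with (_ | _) | _ <;> rcases j with (_ | _) | _ <;>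
    simp only [commute_iff_eq, leftUnits, rightUnits, Function.comp_apply, Sum.elim_inl,
      Sum.elim_inr, reindexStarAlgHom_prodComm_kronecker, ← mul_kronecker_mul, pauliE_mul_pauliX,
      pauliE_mul_pauliZ, neg_kronecker, kronecker_neg, one_mul, mul_one]

end Constructions

section Existence

variable {κ S : Type*} [Fintype κ] [DecidableEq κ] [Fintype S] [DecidableEq S] {σ : ℝ}
  {k l s t : ℕ} {e : κ → Matrix S S ℝ} {ω : Matrix S S ℝ}

/-- There are `k` real matrices of size `s` forming a graded Clifford family of sign `σ`. -/
def HasGradedClifford (σ : ℝ) (k s : ℕ) : Prop :=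
  ∃ (e : Fin k → Matrix (Fin s) (Fin s) ℝ) (ω : Matrix (Fin s) (Fin s) ℝ), GradedClifford σ e ω

theorem GradedClifford.hasGradedClifford (h : GradedClifford σ e ω) :
    HasGradedClifford σ (Fintype.card κ) (Fintype.card S) :=
  ⟨_, _, (h.comp (Fintype.equivFin κ).symm.injective).map (reindexStarAlgHom (Fintype.equivFin S))⟩

theorem SkewClifford.hasGradedClifford (h : SkewClifford e) :
    HasGradedClifford 1 (Fintype.card κ + 1) (Fintype.card S * 2) := by
  simpa using h.double.hasGradedClifford

theorem HasGradedClifford.of_le (h : HasGradedClifford σ k s) (hlk : l ≤ k) :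
    HasGradedClifford σ l s := by
  obtain ⟨e, ω, h⟩ := h
  exact ⟨_, ω, h.comp (Fin.castLE_injective hlk)⟩

theorem HasGradedClifford.add_mul (h : HasGradedClifford σ k s) (h' : HasGradedClifford 1 l t) :
    HasGradedClifford σ (k + l) (s * t) := by
  obtain ⟨e, ω, h⟩ := h
  obtain ⟨e', ω', h'⟩ := h'
  simpa using (h.kronecker h').hasGradedClifford

theorem hasGradedClifford_zero (s : ℕ) : HasGradedClifford 1 0 s :=
  ⟨Fin.elim0, 1, ⟨Fin.rec0, Fin.rec0⟩, by simp, by simp, Fin.rec0⟩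

theorem hasGradedClifford_one_two : HasGradedClifford 1 1 2 := by
  have hempty : SkewClifford (Fin.elim0 : Fin 0 → Matrix Unit Unit ℝ) := ⟨Fin.rec0, Fin.rec0⟩
  simpa using hempty.hasGradedClifford

theorem hasGradedClifford_two_four : HasGradedClifford 1 2 4 := by
  simpa using skewClifford_pauliE.hasGradedClifford

theorem hasGradedClifford_four_eight : HasGradedClifford 1 4 8 := by
  simpa using skewClifford_leftUnits.hasGradedClifford

theorem gradedClifford_cross_units : GradedClifford (-1)
    (Sum.elim (fun i => leftUnits i ⊗ₖ pauliX) fun i => rightUnits i ⊗ₖ pauliZ) (1 ⊗ₖ pauliE) :=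
  skewClifford_leftUnits.cross skewClifford_rightUnits commute_leftUnits_rightUnits

theorem hasGradedClifford_six_eight : HasGradedClifford (-1) 6 8 := by
  simpa using gradedClifford_cross_units.hasGradedClifford

theorem hasGradedClifford_eight_sixteen : HasGradedClifford 1 8 16 := by
  simpa using gradedClifford_cross_units.adjoin_grading.hasGradedClifford

theorem HasGradedClifford.periodicity (h : HasGradedClifford σ k s) (a : ℕ) :
    HasGradedClifford σ (8 * a + k) (s * 16 ^ a) := by
  induction a with
  | zero => simpa using h
  | succ a ih =>
    convert ih.add_mul hasGradedClifford_eight_sixteen using 1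
    · ring
    · ring

end Existence

/-! ### The symplectic Lie algebra -/

section QuaternionicFamily

variable {R κ : Type*} [Ring R] [StarRing R] [Algebra ℝ R] [Fintype κ]

/-- A self-adjoint family of endomorphisms of a complex space with skew-adjoint complex structure
`I`, anticommuting with a quaternionic structure `J`, all of whose nontrivial real combinations are
invertible. -/
structure QuaternionicFamily (I J : R) (A : κ → R) : Prop extends QuaternionPair I J where
  star_left : star I = -I
  isSelfAdjoint : ∀ i, IsSelfAdjoint (A i)
  commute_left : ∀ i, Commute I (A i)
  anticomm_right : ∀ i, J * A i = -(A i * J)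
  isUnit : ∀ χ : κ → ℝ, χ ≠ 0 → IsUnit (∑ i, χ i • A i)

end QuaternionicFamily

section Divisibility

variable {κ S V : Type*} [DecidableEq κ] [Fintype κ] [Fintype S] [DecidableEq S] [Fintype V]
  [DecidableEq V] {e : κ → Matrix S S ℝ} {ω : Matrix S S ℝ} {σ : ℝ} {I J : Matrix V V ℝ}
  {A : κ → Matrix V V ℝ}

theorem GradedClifford.cliffordSymbol (h : GradedClifford σ e ω) (hσ : σ * σ = 1)
    (hA : ∀ i, star (A i) = σ • A i) (hunit : ∀ χ : κ → ℝ, χ ≠ 0 → IsUnit (∑ i, χ i • A i)) :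
    CliffordSymbol (fun i => ω ⊗ₖ A i) fun i => e i ⊗ₖ (1 : Matrix V V ℝ) where
  toSkewClifford := h.toSkewClifford.kronecker (.one _) (one_mul 1)
  isSelfAdjoint i := by
    rw [isSelfAdjoint_iff, star_kronecker, h.star_grading, hA, smul_kronecker, kronecker_smul,
      smul_smul, hσ, one_smul]
  anticomm i j := by
    rw [← mul_kronecker_mul, ← mul_kronecker_mul, h.grading_anticomm, neg_kronecker, neg_neg,
      one_mul, mul_one]
  isUnit χ hχ := by
    have hω : IsUnit ω := .of_mul_eq_one (σ • ω) <| by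
      rw [mul_smul_comm, h.grading_mul_self, smul_smul, hσ, one_smul]
    simp only [← kronecker_smul, ← kronecker_sum]
    exact hω.kronecker (hunit χ hχ)

variable [Nonempty κ]

theorem QuaternionicFamily.four_mul_two_pow_dvd_of_one (Q : QuaternionicFamily I J A)
    (h : GradedClifford 1 e ω) : 4 * 2 ^ Fintype.card κ ∣ Fintype.card S * Fintype.card V := by
  have hω : ω * ω = 1 := by simpa using h.grading_mul_self
  have hsymbol := h.cliffordSymbol (one_mul 1)
    (fun i => by rw [(Q.isSelfAdjoint i).star_eq, one_smul]) Q.isUnit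
  have hpair : QuaternionPair ((1 : Matrix S S ℝ) ⊗ₖ I) (ω ⊗ₖ J) :=
    { mul_self_left := by
        rw [← mul_kronecker_mul, Q.mul_self_left, one_mul, kronecker_neg, one_kronecker_one]
      mul_self_right := by
        rw [← mul_kronecker_mul, Q.mul_self_right, hω, kronecker_neg, one_kronecker_one]
      anticomm := by
        rw [← mul_kronecker_mul, ← mul_kronecker_mul, Q.anticomm, kronecker_neg, one_mul, mul_one] }
  rw [← Fintype.card_prod]
  refine hsymbol.four_mul_two_pow_dvd_card hpair one_ne_zero (neg_ne_zero.2 one_ne_zero)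
    (fun i => ?_) (fun i => ?_) (fun i => ?_) fun i => ?_
  · simp only [← mul_kronecker_mul, (Q.commute_left i).eq, one_mul, mul_one, one_smul]
  · simp only [← mul_kronecker_mul, one_mul, mul_one, one_smul]
  · simp only [← mul_kronecker_mul, Q.anticomm_right, kronecker_neg, neg_one_smul]
  · simp only [← mul_kronecker_mul, h.grading_anticomm, neg_kronecker, one_mul, mul_one,
      neg_one_smul]

-- The skew grading is compensated by replacing `A` with the skew-adjoint family `I * A`.
theorem QuaternionicFamily.four_mul_two_pow_dvd_of_neg_one (Q : QuaternionicFamily I J A)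
    (h : GradedClifford (-1) e ω) : 4 * 2 ^ Fintype.card κ ∣ Fintype.card S * Fintype.card V := by
  have hI : IsUnit I := .of_mul_eq_one (-I) (by rw [mul_neg, Q.mul_self_left, neg_neg])
  have hsymbol := h.cliffordSymbol (A := fun i => I * A i) (by norm_num)
    (fun i => by
      rw [star_mul, (Q.isSelfAdjoint i).star_eq, Q.star_left, mul_neg, (Q.commute_left i).eq,
        neg_one_smul])
    (fun χ hχ => by
      simp only [← mul_smul_comm, ← Finset.mul_sum]
      exact hI.mul (Q.isUnit χ hχ))
  have hpair : QuaternionPair ((1 : Matrix S S ℝ) ⊗ₖ I) (1 ⊗ₖ J) :=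
    { mul_self_left := by
        rw [← mul_kronecker_mul, Q.mul_self_left, one_mul, kronecker_neg, one_kronecker_one]
      mul_self_right := by
        rw [← mul_kronecker_mul, Q.mul_self_right, one_mul, kronecker_neg, one_kronecker_one]
      anticomm := by rw [← mul_kronecker_mul, ← mul_kronecker_mul, Q.anticomm, kronecker_neg] }
  have hIIA (i : κ) : I * (I * A i) = I * A i * I := by rw [mul_assoc, (Q.commute_left i).eq]
  have hJIA (i : κ) : J * (I * A i) = I * A i * J := by
    rw [← mul_assoc, ← neg_eq_iff_eq_neg.2 Q.anticomm, neg_mul, mul_assoc, Q.anticomm_right,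
      mul_neg, neg_neg, mul_assoc]
  rw [← Fintype.card_prod]
  refine hsymbol.four_mul_two_pow_dvd_card hpair one_ne_zero one_ne_zero
    (fun i => ?_) (fun i => ?_) (fun i => ?_) fun i => ?_
  · simp only [← mul_kronecker_mul, hIIA, one_mul, mul_one, one_smul]
  · simp only [← mul_kronecker_mul, one_mul, mul_one, one_smul]
  · simp only [← mul_kronecker_mul, hJIA, one_mul, mul_one, one_smul]
  · simp only [← mul_kronecker_mul, one_mul, mul_one, one_smul]

end Divisibility

section Realification

variable {m : Type*} [Fintype m] [DecidableEq m]

theorem leftMulMatrix_conj (z : ℂ) : Algebra.leftMulMatrix Complex.basisOneI (star z) =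
    star (Algebra.leftMulMatrix Complex.basisOneI z) := by
  ext i j
  fin_cases i <;> fin_cases j <;> simp [Algebra.leftMulMatrix_complex]

theorem pauliZ_mul_leftMulMatrix (z : ℂ) : pauliZ * Algebra.leftMulMatrix Complex.basisOneI z =
    Algebra.leftMulMatrix Complex.basisOneI (star z) * pauliZ := by
  simp [Algebra.leftMulMatrix_complex, pauliZ]

/-- Complex matrices as real matrices of twice the size. -/
noncomputable def realify : Matrix m m ℂ →⋆ₐ[ℝ] Matrix (m × Fin 2) (m × Fin 2) ℝ where
  toAlgHom := (compAlgEquiv m (Fin 2) ℝ ℝ).toAlgHom.comp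
    (Algebra.leftMulMatrix Complex.basisOneI).mapMatrix
  map_star' X := by
    ext i j
    exact congr($(leftMulMatrix_conj (X j.1 i.1)) i.2 j.2)

theorem realify_apply (X : Matrix m m ℂ) : realify X = compAlgEquiv m (Fin 2) ℝ ℝ
    ((Algebra.leftMulMatrix Complex.basisOneI).mapMatrix X) :=
  rfl

variable (m) in
/-- Complex conjugation as a real matrix. -/
noncomputable def conjugation : Matrix (m × Fin 2) (m × Fin 2) ℝ :=
  compAlgEquiv m (Fin 2) ℝ ℝ (diagonal fun _ => pauliZ)

theorem conjugation_mul_self : conjugation m * conjugation m = 1 := by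
  rw [conjugation, ← map_mul, diagonal_mul_diagonal]
  simp only [pauliZ_mul_self, diagonal_one, map_one]

theorem conjugation_mul_realify (X : Matrix m m ℂ) :
    conjugation m * realify X = realify (X.map star) * conjugation m := by
  rw [realify_apply, realify_apply, conjugation, ← map_mul, ← map_mul]
  congr 1
  ext1 i j
  simpa [diagonal_mul, mul_diagonal] using pauliZ_mul_leftMulMatrix (X i j)

end Realification

section HermitianSymplectic

variable {N : ℕ} {κ : Type*}

theorem Jcplx_mul_self : Jcplx N * Jcplx N = -1 := by
  simp [Jcplx, fromBlocks_multiply, ← fromBlocks_one, fromBlocks_neg]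

theorem Jcplx_map_star : (Jcplx N).map star = Jcplx N := by
  simp [Jcplx, fromBlocks_map, Matrix.map_neg]

variable (N) in
/-- The `𝔭`-part of `𝔰𝔭(N, ℂ)`, the real space of its Hermitian elements. -/
def hermitianSp : Submodule ℝ (Matrix (Fin N ⊕ Fin N) (Fin N ⊕ Fin N) ℂ) where
  carrier := {X | Xᴴ = X ∧ Xᵀ * Jcplx N + Jcplx N * X = 0}
  zero_mem' := by simp
  add_mem' := by
    rintro X Y ⟨hX, hXJ⟩ ⟨hY, hYJ⟩
    refine ⟨by rw [conjTranspose_add, hX, hY], ?_⟩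
    rw [transpose_add, add_mul, mul_add, add_add_add_comm, hXJ, hYJ, add_zero]
  smul_mem' := by
    rintro r X ⟨hX, hXJ⟩
    refine ⟨by rw [conjTranspose_smul, hX, star_trivial], ?_⟩
    rw [transpose_smul, smul_mul_assoc, mul_smul_comm, ← smul_add, hXJ, smul_zero]

theorem mem_hermitianSp {X : Matrix (Fin N ⊕ Fin N) (Fin N ⊕ Fin N) ℂ} :
    X ∈ hermitianSp N ↔ Xᴴ = X ∧ Xᵀ * Jcplx N + Jcplx N * X = 0 :=
  Iff.rfl

theorem Jcplx_mul_map_star {X : Matrix (Fin N ⊕ Fin N) (Fin N ⊕ Fin N) ℂ}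
    (hX : X ∈ hermitianSp N) : Jcplx N * X.map star = -(X * Jcplx N) := by
  obtain ⟨hherm, hsymp⟩ := mem_hermitianSp.1 hX
  have htranspose : X.map star = Xᵀ := by conv_rhs => rw [← hherm, conjTranspose_transpose]
  calc Jcplx N * X.map star = -(Jcplx N * (Xᵀ * Jcplx N) * Jcplx N) := by
        rw [htranspose, mul_assoc, mul_assoc, Jcplx_mul_self]
        simp
    _ = Jcplx N * Jcplx N * X * Jcplx N := by
        rw [eq_neg_of_add_eq_zero_left hsymp]
        simp [mul_assoc]
    _ = -(X * Jcplx N) := by rw [Jcplx_mul_self, neg_mul, one_mul, neg_mul]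

theorem quaternionPair_realify : QuaternionPair
    (realify (Complex.I • (1 : Matrix (Fin N ⊕ Fin N) (Fin N ⊕ Fin N) ℂ)))
    (realify (Jcplx N) * conjugation _) where
  mul_self_left := by
    simp [← map_mul, smul_smul]
  mul_self_right := by
    rw [mul_assoc, ← mul_assoc (conjugation _), conjugation_mul_realify, Jcplx_map_star, mul_assoc,
      conjugation_mul_self, mul_one, ← map_mul, Jcplx_mul_self, map_neg, map_one]
  anticomm := by
    have hconj : (Complex.I • (1 : Matrix (Fin N ⊕ Fin N) (Fin N ⊕ Fin N) ℂ)).map star =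
        -(Complex.I • 1) := by
      ext i j
      simp [one_apply, apply_ite]
    rw [mul_assoc, conjugation_mul_realify, hconj, ← mul_assoc, ← mul_assoc, ← map_mul, ← map_mul]
    simp

theorem quaternionicFamily_realify [Fintype κ]
    {A : κ → Matrix (Fin N ⊕ Fin N) (Fin N ⊕ Fin N) ℂ} (hA : ∀ i, A i ∈ hermitianSp N)
    (hunit : ∀ χ : κ → ℝ, χ ≠ 0 → IsUnit (∑ i, χ i • A i)) :
    QuaternionicFamily (realify (Complex.I • 1)) (realify (Jcplx N) * conjugation _)
      (realify ∘ A) where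
  toQuaternionPair := quaternionPair_realify
  star_left := by
    simp [← map_star, ← map_neg]
  isSelfAdjoint i := IsSelfAdjoint.map (mem_hermitianSp.1 (hA i)).1 realify
  commute_left i := by
    simp [commute_iff_eq, ← map_mul]
  anticomm_right i := by
    rw [Function.comp_apply, mul_assoc, conjugation_mul_realify, ← mul_assoc, ← map_mul,
      Jcplx_mul_map_star (hA i), map_neg, map_mul, neg_mul, mul_assoc]
  isUnit χ hχ := by simpa using (hunit χ hχ).map realify

end HermitianSymplectic

section Complexification

variable {m : Type*} [Fintype m] [DecidableEq m]

/-- Real matrices as complex matrices. -/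
noncomputable def complexify : Matrix m m ℝ →⋆ₐ[ℝ] Matrix m m ℂ where
  toAlgHom := (Algebra.ofId ℝ ℂ).mapMatrix
  map_star' X := by
    ext i j
    exact (Complex.conj_ofReal (X j i)).symm

theorem transpose_complexify (X : Matrix m m ℝ) : (complexify X)ᵀ = complexify (star X) := by
  rw [star_eq_conjTranspose, conjTranspose_eq_transpose_of_trivial]
  rfl

end Complexification

section Generators

variable {N : ℕ} {κ : Type*} [DecidableEq κ] {e : κ → Matrix (Fin N) (Fin N) ℝ}
  {ω : Matrix (Fin N) (Fin N) ℝ}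

/-- The generators `σ₁ ⊗ ω, σ₂ ⊗ ω, σ₃ ⊗ ω` and `1 ⊗ i e j` of a Clifford family in `𝔰𝔭(N, ℂ)`,
where `σ₁, σ₂, σ₃` are the Pauli matrices. -/
noncomputable def spGenerator (ω : Matrix (Fin N) (Fin N) ℝ) (e : κ → Matrix (Fin N) (Fin N) ℝ) :
    Fin 3 ⊕ κ → Matrix (Fin N ⊕ Fin N) (Fin N ⊕ Fin N) ℂ :=
  Sum.elim
    ![fromBlocks 0 (complexify ω) (complexify ω) 0,
      fromBlocks 0 (-(Complex.I • complexify ω)) (Complex.I • complexify ω) 0,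
      fromBlocks (complexify ω) 0 0 (-complexify ω)]
    fun j => fromBlocks (Complex.I • complexify (e j)) 0 0 (Complex.I • complexify (e j))

theorem GradedClifford.spGenerator_mem (h : GradedClifford 1 e ω) (i : Fin 3 ⊕ κ) :
    spGenerator ω e i ∈ hermitianSp N := by
  have hω : star ω = ω := by simpa using h.star_grading
  have hω' : star (complexify ω) = complexify ω := by rw [← map_star, hω]
  have he' (j : κ) : star (complexify (e j)) = -complexify (e j) := by
    rw [← map_star, h.star_skew, map_neg]
  rw [star_eq_conjTranspose] at hω'
  simp only [star_eq_conjTranspose] at he'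
  rw [mem_hermitianSp]
  rcases i with i | j
  · fin_cases i <;>
      simp [spGenerator, Jcplx, fromBlocks_conjTranspose, fromBlocks_transpose, fromBlocks_multiply,
        fromBlocks_add, transpose_complexify, hω, hω']
  · simp [spGenerator, Jcplx, fromBlocks_conjTranspose, fromBlocks_transpose, fromBlocks_multiply,
      fromBlocks_add, transpose_complexify, h.star_skew, he']

theorem GradedClifford.spGenerator_anticomm (h : GradedClifford 1 e ω) (i j : Fin 3 ⊕ κ) :
    spGenerator ω e i * spGenerator ω e j + spGenerator ω e j * spGenerator ω e i =
      if i = j then 2 else 0 := by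
  have hc := h.map complexify
  have hsq : complexify ω * complexify ω = 1 := by simpa using hc.grading_mul_self
  have hanti (j : κ) : complexify ω * complexify (e j) = -(complexify (e j) * complexify ω) :=
    hc.grading_anticomm j
  have hmixed (i : Fin 3) (j : κ) : spGenerator ω e (.inl i) * spGenerator ω e (.inr j) +
      spGenerator ω e (.inr j) * spGenerator ω e (.inl i) = 0 := by
    fin_cases i <;> simp [spGenerator, fromBlocks_multiply, fromBlocks_add, hanti]
  rcases i with i | i <;> rcases j with j | j
  · fin_cases i <;> fin_cases j <;>
      simp [spGenerator, fromBlocks_multiply, fromBlocks_add, hsq, smul_smul, one_add_one_eq_two]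
  · simpa using hmixed i j
  · simpa [add_comm] using hmixed j i
  · have hee : complexify (e i) * complexify (e j) + complexify (e j) * complexify (e i) =
        if i = j then -2 else 0 := hc.clifford i j
    simp only [spGenerator, Sum.elim_inr, fromBlocks_multiply, fromBlocks_add, zero_mul, mul_zero,
      add_zero, zero_add, smul_mul_smul_comm, Complex.I_mul_I, ← smul_add, hee, Sum.inr.injEq]
    split_ifs
    · rw [← one_add_one_eq_two, ← one_add_one_eq_two, ← fromBlocks_one, fromBlocks_add]
      simp
    · simp

end Generators

section Isometric

variable {N n k : ℕ} {κ : Type*}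

theorem exists_isometric_of_clifford [Fintype κ] [DecidableEq κ] {R : Type*} [Ring R] [Algebra ℝ R]
    (W : Submodule ℝ R) {c : κ → R} (hmem : ∀ i, c i ∈ W)
    (hc : ∀ i j, c i * c j + c j * c i = if i = j then 2 else 0) :
    ∃ f : EuclideanSpace ℝ κ →ₗ[ℝ] R, ∀ v, f v ∈ W ∧ f v ^ 2 = (‖v‖ ^ 2 : ℝ) • (1 : R) := by
  refine ⟨Fintype.linearCombination ℝ c ∘ₗ (WithLp.linearEquiv 2 ℝ (κ → ℝ)).toLinearMap,
    fun v => ⟨W.sum_mem fun i _ => W.smul_mem _ (hmem i), ?_⟩⟩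
  rw [EuclideanSpace.real_norm_sq_eq, ← sum_smul_mul_self_of_clifford hc, sq]
  rfl

theorem HasGradedClifford.exists_isometric (h : HasGradedClifford 1 k N) (hn : n ≤ k + 3) :
    ∃ f : EuclideanSpace ℝ (Fin n) →ₗ[ℝ] Matrix (Fin N ⊕ Fin N) (Fin N ⊕ Fin N) ℂ,
      ∀ v, f v ∈ hermitianSp N ∧
        f v ^ 2 = (‖v‖ ^ 2 : ℝ) • (1 : Matrix (Fin N ⊕ Fin N) (Fin N ⊕ Fin N) ℂ) := by
  obtain ⟨e, ω, h⟩ := h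
  obtain ⟨ι⟩ := Function.Embedding.nonempty_of_card_le (α := Fin n) (β := Fin 3 ⊕ Fin k)
    (by simpa [add_comm] using hn)
  refine exists_isometric_of_clifford _ (c := spGenerator ω e ∘ ι) (fun i => h.spGenerator_mem _)
    fun i j => ?_
  simp [h.spGenerator_anticomm]

end Isometric

section Obstruction

variable {κ E : Type*} [AddCommGroup E] [Module ℝ E] {N k s : ℕ} {σ : ℝ}
  {f : E →ₗ[ℝ] Matrix (Fin N ⊕ Fin N) (Fin N ⊕ Fin N) ℂ}

theorem quaternionicFamily_of_linearIndependent [Fintype κ] (hf : ∀ v, f v ∈ hermitianSp N)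
    (hunit : ∀ v, v ≠ 0 → IsUnit (f v)) {b : κ → E} (hb : LinearIndependent ℝ b) :
    QuaternionicFamily (realify (Complex.I • 1)) (realify (Jcplx N) * conjugation _)
      (realify ∘ f ∘ b) := by
  refine quaternionicFamily_realify (fun i => hf _) fun χ hχ => ?_
  have hsum : ∑ i, χ i • b i ≠ 0 := fun h =>
    hχ (funext (Fintype.linearIndependent_iff.1 hb χ h))
  simpa using hunit _ hsum

theorem HasGradedClifford.two_pow_dvd_mul (h : HasGradedClifford σ k s) (hσ : σ = 1 ∨ σ = -1)
    (hk : k ≠ 0) (hkE : k ≤ finrank ℝ E) (hf : ∀ v, f v ∈ hermitianSp N)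
    (hunit : ∀ v, v ≠ 0 → IsUnit (f v)) : 2 ^ k ∣ s * N := by
  obtain ⟨e, ω, h⟩ := h
  obtain ⟨b, hb⟩ := exists_linearIndependent_of_le_finrank hkE
  have Q := quaternionicFamily_of_linearIndependent hf hunit hb
  have : NeZero k := ⟨hk⟩
  have hdvd : 4 * 2 ^ k ∣ 4 * (s * N) := by
    convert (?_ : 4 * 2 ^ Fintype.card (Fin k) ∣
      Fintype.card (Fin s) * Fintype.card ((Fin N ⊕ Fin N) × Fin 2)) using 1
    · rw [Fintype.card_fin]
    · simp only [Fintype.card_fin, Fintype.card_prod, Fintype.card_sum]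
      ring
    · rcases hσ with rfl | rfl
      exacts [Q.four_mul_two_pow_dvd_of_one h, Q.four_mul_two_pow_dvd_of_neg_one h]
  exact Nat.dvd_of_mul_dvd_mul_left four_pos hdvd

end Obstruction

section Values

variable {N a : ℕ} {b : Fin 4}

/-- `ρ(N / 2) - 8a`, as a function of the remainder `b` in `ord₂ N = 4a + b`. -/
def radonOffset : Fin 4 → ℕ := ![0, 1, 2, 4]

theorem hrRho_half (hN : N ≠ 0) (hval : padicValNat 2 N = 4 * a + b) :
    hrRho (N / 2) = 8 * a + radonOffset b := by
  have hhalf : padicValRat 2 ((N : ℚ) / 2) = (4 * a + b : ℕ) - 1 := by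
    rw [padicValRat.div (by exact_mod_cast hN) two_ne_zero, padicValRat.of_nat, hval]
    exact congrArg _ (padicValRat.self one_lt_two)
  rw [hrRho, hhalf]
  have hdiv : ((4 * a + b : ℕ) - 1 : ℤ) / 4 = a + ((b : ℤ) - 1) / 4 := by omega
  have hmod : ((4 * a + b : ℕ) - 1 : ℤ) % 4 = ((b : ℤ) - 1) % 4 := by omega
  rw [hdiv, hmod, mul_add, add_assoc, add_right_inj]
  fin_cases b <;> decide

theorem hasGradedClifford_radonOffset (b : Fin 4) :
    HasGradedClifford 1 (radonOffset b) (2 ^ b.val) := by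
  fin_cases b
  exacts [hasGradedClifford_zero 1, hasGradedClifford_one_two, hasGradedClifford_two_four,
    hasGradedClifford_four_eight]

theorem hasGradedClifford_of_two_pow_dvd (h : 2 ^ (4 * a + b.val) ∣ N) :
    HasGradedClifford 1 (8 * a + radonOffset b) N := by
  obtain ⟨m, rfl⟩ := h
  have hsize : 2 ^ (4 * a + b.val) = 2 ^ b.val * 16 ^ a := by
    rw [pow_add, pow_mul, mul_comm]
    norm_num
  rw [hsize]
  exact ((hasGradedClifford_radonOffset b).periodicity a).add_mul (hasGradedClifford_zero m)

theorem exists_hasGradedClifford_radonOffset_add_four (b : Fin 4) :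
    ∃ (σ : ℝ) (s : ℕ), (σ = 1 ∨ σ = -1) ∧ HasGradedClifford σ (radonOffset b + 4) s ∧
      2 ^ (radonOffset b + 4) = 2 ^ (b.val + 1) * s := by
  fin_cases b
  exacts [⟨1, 8, .inl rfl, hasGradedClifford_four_eight, rfl⟩,
    ⟨-1, 8, .inr rfl, hasGradedClifford_six_eight.of_le (by decide), rfl⟩,
    ⟨-1, 8, .inr rfl, hasGradedClifford_six_eight, rfl⟩,
    ⟨1, 16, .inl rfl, hasGradedClifford_eight_sixteen, rfl⟩]

variable {E : Type*} [AddCommGroup E] [Module ℝ E]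
  {f : E →ₗ[ℝ] Matrix (Fin N ⊕ Fin N) (Fin N ⊕ Fin N) ℂ}

theorem two_pow_dvd_of_le_finrank (hf : ∀ v, f v ∈ hermitianSp N)
    (hunit : ∀ v, v ≠ 0 → IsUnit (f v)) (hE : 8 * a + radonOffset b + 4 ≤ finrank ℝ E) :
    2 ^ (4 * a + b.val + 1) ∣ N := by
  obtain ⟨σ, s, hσ, h, hs⟩ := exists_hasGradedClifford_radonOffset_add_four b
  have hspos : 0 < s := Nat.pos_of_ne_zero fun h0 => by simp [h0] at hs
  have hpow : 2 ^ (8 * a + (radonOffset b + 4)) = s * 16 ^ a * 2 ^ (4 * a + b.val + 1) := by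
    have hsixteen : 16 ^ a = 2 ^ (4 * a) := by rw [pow_mul]; norm_num
    rw [pow_add, hs, hsixteen]
    ring
  refine Nat.dvd_of_mul_dvd_mul_left (k := s * 16 ^ a) (by positivity) ?_
  rw [← hpow]
  exact (h.periodicity a).two_pow_dvd_mul hσ (by omega) (by omega) hf hunit

theorem exists_padicValNat_eq (N : ℕ) : ∃ (a : ℕ) (b : Fin 4), padicValNat 2 N = 4 * a + b :=
  ⟨padicValNat 2 N / 4, ⟨padicValNat 2 N % 4, Nat.mod_lt _ four_pos⟩, by dsimp only; omega⟩

theorem finrank_le_hrRho_half (hN : N ≠ 0) (hf : ∀ v, f v ∈ hermitianSp N)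
    (hunit : ∀ v, v ≠ 0 → IsUnit (f v)) : (finrank ℝ E : ℤ) ≤ hrRho (N / 2) + 3 := by
  obtain ⟨a, b, hval⟩ := exists_padicValNat_eq N
  rw [hrRho_half hN hval]
  by_contra! hlt
  have hdvd := two_pow_dvd_of_le_finrank (a := a) (b := b) hf hunit (by omega)
  have hle := (padicValNat_dvd_iff_le hN).1 hdvd
  omega

theorem exists_isometric_of_le_hrRho_half {n : ℕ} (hN : N ≠ 0) (hn : n ≤ hrRho (N / 2) + 3) :
    ∃ f : EuclideanSpace ℝ (Fin n) →ₗ[ℝ] Matrix (Fin N ⊕ Fin N) (Fin N ⊕ Fin N) ℂ,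
      ∀ v, f v ∈ hermitianSp N ∧
        f v ^ 2 = (‖v‖ ^ 2 : ℝ) • (1 : Matrix (Fin N ⊕ Fin N) (Fin N ⊕ Fin N) ℂ) := by
  obtain ⟨a, b, hval⟩ := exists_padicValNat_eq N
  rw [hrRho_half hN hval] at hn
  have hdvd : 2 ^ (4 * a + b.val) ∣ N := hval ▸ pow_padicValNat_dvd
  exact (hasGradedClifford_of_two_pow_dvd hdvd).exists_isometric (by exact_mod_cast hn)

end Values

end HurwitzRadon

/-- Entry `𝔤 = 𝔰𝔭(N,ℂ)` of the Hurwitz–Radon value theorem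
(the `𝔭`-part being the Hermitian elements of `𝔰𝔭(N,ℂ)`):
`ρ⁽¹⁾ = ρ⁽²⁾ = ρ(N/2) + 3`. -/
theorem hurwitzRadon_sp_N_C (N : ℕ) (hN : 1 ≤ N) (n : ℕ) :
    ((∃ f : EuclideanSpace ℝ (Fin n) →ₗ[ℝ]
          Matrix (Fin N ⊕ Fin N) (Fin N ⊕ Fin N) ℂ,
        ∀ v, (f v)ᴴ = f v ∧ (f v)ᵀ * Jcplx N + Jcplx N * f v = 0 ∧
          (f v) ^ 2 = (‖v‖ ^ 2 : ℝ) • (1 : Matrix (Fin N ⊕ Fin N) (Fin N ⊕ Fin N) ℂ)) ↔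
      (∃ f : EuclideanSpace ℝ (Fin n) →ₗ[ℝ]
          Matrix (Fin N ⊕ Fin N) (Fin N ⊕ Fin N) ℂ,
        (∀ v, (f v)ᴴ = f v ∧ (f v)ᵀ * Jcplx N + Jcplx N * f v = 0) ∧
          ∀ v, v ≠ 0 → IsUnit (f v))) ∧
    ((∃ f : EuclideanSpace ℝ (Fin n) →ₗ[ℝ]
          Matrix (Fin N ⊕ Fin N) (Fin N ⊕ Fin N) ℂ,
        (∀ v, (f v)ᴴ = f v ∧ (f v)ᵀ * Jcplx N + Jcplx N * f v = 0) ∧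
          ∀ v, v ≠ 0 → IsUnit (f v)) ↔
      (n : ℤ) ≤ hrRho ((N : ℚ) / 2) + 3) := by
  have hN : N ≠ 0 := Nat.one_le_iff_ne_zero.1 hN
  have cycle {p q r : Prop} (hpq : p → q) (hqr : q → r) (hrp : r → p) : (p ↔ q) ∧ (q ↔ r) :=
    ⟨⟨hpq, hrp ∘ hqr⟩, hqr, hpq ∘ hrp⟩
  refine cycle ?_ ?_ ?_
  · rintro ⟨f, hf⟩
    refine ⟨f, fun v => ⟨(hf v).1, (hf v).2.1⟩, fun v hv => (isUnit_pow_iff two_ne_zero).1 ?_⟩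
    rw [(hf v).2.2, ← Algebra.algebraMap_eq_smul_one]
    exact (IsUnit.mk0 _ (pow_ne_zero 2 (norm_ne_zero_iff.2 hv))).map (algebraMap ℝ _)
  · rintro ⟨f, hf, hunit⟩
    simpa using HurwitzRadon.finrank_le_hrRho_half hN hf hunit
  · intro hn
    obtain ⟨f, hf⟩ := HurwitzRadon.exists_isometric_of_le_hrRho_half hN hn
    exact ⟨f, fun v => and_assoc.1 (hf v)⟩
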